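/- arXiv:2307.06595 — 3 statements merged into one kernel-verified Lean document; each statement's English description precedes it below -/
import Mathlib

section
/- Let 𝒟 ⊆ 𝕄 be an MSRD code of minimum distance d and assume there exists a chain of MSRD codes 𝒟 = 𝒟_d ⊇ 𝒟_{d+1} ⊇ ... ⊇ 𝒟_n with d(𝒟_h) = h for all d ≤ h ≤ n. Then a sequence of positive integers d_1 ≤ ... ≤ d_k is the sequence of generalized sum-rank weights of some subcode 𝒞 ⊆ 𝒟 if and only if k ≤ dim(𝒟) and (d_1, ..., d_k) is a subsequence of the sequence (d_1(𝒟), ..., d_{dim 𝒟}(𝒟)); moreover, in this case 𝒞 may be chosen so that it satisfies the chain condition, and hence so that g_r(𝒞) = d_r for all r ∈ [k]. -/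
open Module

variable {F : Type*} [Field F] [Fintype F] {t : ℕ} {m n : Fin t → ℕ}

/-- The sum-rank weight of an element of `𝕄 = F^{m 0 × n 0} × ⋯ × F^{m (t-1) × n (t-1)}`. -/
noncomputable def srk (C : ∀ i : Fin t, Matrix (Fin (m i)) (Fin (n i)) F) : ℕ :=
  ∑ i, (C i).rank

/-- The maximum sum-rank of a code. -/
noncomputable def maxsrk (𝒞 : Submodule F (∀ i : Fin t, Matrix (Fin (m i)) (Fin (n i)) F)) : ℕ :=
  sSup {w | ∃ C ∈ 𝒞, srk C = w}

/-- The minimum distance of a code. -/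
noncomputable def minDist (𝒞 : Submodule F (∀ i : Fin t, Matrix (Fin (m i)) (Fin (n i)) F)) : ℕ :=
  sInf {w | ∃ C ∈ 𝒞, C ≠ 0 ∧ srk C = w}

/-- The maximum rank of a subspace of a matrix space. -/
noncomputable def maxrank {a b : ℕ} (𝒜 : Submodule F (Matrix (Fin a) (Fin b) F)) : ℕ :=
  sSup {w | ∃ A ∈ 𝒜, A.rank = w}

/-- Optimal anticodes in a single matrix space. -/
def IsOptAnticode {a b : ℕ} (𝒜 : Submodule F (Matrix (Fin a) (Fin b) F)) : Prop :=
  Module.finrank F 𝒜 = a * maxrank 𝒜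

/-- The weight of a sum-rank metric code: the minimum of `maxsrk` over products of
optimal anticodes containing it. -/
noncomputable def codeWt (𝒞 : Submodule F (∀ i : Fin t, Matrix (Fin (m i)) (Fin (n i)) F)) : ℕ :=
  sInf {w | ∃ 𝒜 : ∀ i : Fin t, Submodule F (Matrix (Fin (m i)) (Fin (n i)) F),
    (∀ i, IsOptAnticode (𝒜 i)) ∧ 𝒞 ≤ Submodule.pi Set.univ 𝒜 ∧
      maxsrk (Submodule.pi Set.univ 𝒜) = w}

/-- The `r`-th generalized sum-rank weight of a code. -/
noncomputable def gw (𝒞 : Submodule F (∀ i : Fin t, Matrix (Fin (m i)) (Fin (n i)) F))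
    (r : ℕ) : ℕ :=
  sInf {w | ∃ 𝒟 : Submodule F (∀ i : Fin t, Matrix (Fin (m i)) (Fin (n i)) F),
    𝒟 ≤ 𝒞 ∧ r ≤ Module.finrank F 𝒟 ∧ codeWt 𝒟 = w}

/-- Greedy `r`-subcodes of a code. -/
def IsGreedy (𝒞 : Submodule F (∀ i : Fin t, Matrix (Fin (m i)) (Fin (n i)) F)) :
    ℕ → Submodule F (∀ i : Fin t, Matrix (Fin (m i)) (Fin (n i)) F) → Prop
  | 0, 𝒟 => 𝒟 = ⊥
  | 1, 𝒟 => 𝒟 ≤ 𝒞 ∧ Module.finrank F 𝒟 = 1 ∧ codeWt 𝒟 = gw 𝒞 1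
  | (r + 2), 𝒟 => 𝒟 ≤ 𝒞 ∧ Module.finrank F 𝒟 = r + 2 ∧
      (∃ 𝒟', IsGreedy 𝒞 (r + 1) 𝒟' ∧ 𝒟' ≤ 𝒟) ∧
      (∀ ℰ : Submodule F (∀ i : Fin t, Matrix (Fin (m i)) (Fin (n i)) F),
        ℰ ≤ 𝒞 → Module.finrank F ℰ = r + 2 →
        (∃ 𝒟', IsGreedy 𝒞 (r + 1) 𝒟' ∧ 𝒟' ≤ ℰ) → codeWt 𝒟 ≤ codeWt ℰ)

/-- The `r`-th greedy weight of a code (the weight of any greedy `r`-subcode). -/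
noncomputable def greedyWt (𝒞 : Submodule F (∀ i : Fin t, Matrix (Fin (m i)) (Fin (n i)) F))
    (r : ℕ) : ℕ :=
  sInf {w | ∃ 𝒟, IsGreedy 𝒞 r 𝒟 ∧ codeWt 𝒟 = w}

/-- The chain condition: there is a complete flag `0 ⊊ 𝒟_1 ⊊ ⋯ ⊊ 𝒟_k = 𝒞` with
`wt 𝒟_r = d_r(𝒞)` for all `r ∈ [k]`. -/
def ChainCondition (𝒞 : Submodule F (∀ i : Fin t, Matrix (Fin (m i)) (Fin (n i)) F)) : Prop :=
  ∃ 𝒟 : ℕ → Submodule F (∀ i : Fin t, Matrix (Fin (m i)) (Fin (n i)) F),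
    𝒟 0 = ⊥ ∧ 𝒟 (Module.finrank F 𝒞) = 𝒞 ∧
    (∀ r, r < Module.finrank F 𝒞 → 𝒟 r < 𝒟 (r + 1)) ∧
    (∀ r, 1 ≤ r → r ≤ Module.finrank F 𝒞 → codeWt (𝒟 r) = gw 𝒞 r)

/-- Maximum sum-rank distance (MSRD) codes. -/
def IsMSRD (𝒞 : Submodule F (∀ i : Fin t, Matrix (Fin (m i)) (Fin (n i)) F)) : Prop :=
  ∃ j : Fin t, ∃ δ : ℕ, δ + 1 ≤ n j ∧
    minDist 𝒞 = ∑ i ∈ Finset.Iio j, n i + δ + 1 ∧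
    Module.finrank F 𝒞 + δ * m j = ∑ i ∈ Finset.Ici j, m i * n i

/-- `d` is a subsequence of `e`. -/
def IsSubseq {k K : ℕ} (d : Fin k → ℕ) (e : Fin K → ℕ) : Prop :=
  ∃ φ : Fin k → Fin K, StrictMono φ ∧ ∀ r, d r = e (φ r)


set_option linter.unusedSectionVars false

lemma sr_finrank_sup_span_le {V : Type*} [AddCommGroup V] [Module F V] [FiniteDimensional F V]
    (S : Submodule F V) (w : V) : finrank F ↥(S ⊔ Submodule.span F {w}) ≤ finrank F S + 1 := by
  refine (Submodule.finrank_add_le_finrank_add_finrank _ _).trans ?_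
  have := finrank_span_le_card (R := F) ({w} : Set V)
  simp at this
  omega

lemma sr_finrank_sup_span_lt {V : Type*} [AddCommGroup V] [Module F V] [FiniteDimensional F V]
    (S : Submodule F V) (w : V) (hw : w ∉ S) :
    finrank F S + 1 ≤ finrank F ↥(S ⊔ Submodule.span F {w}) := by
  apply Submodule.finrank_lt_finrank_of_lt
  refine lt_of_le_of_ne le_sup_left ?_
  intro h
  apply hw
  rw [h]
  exact Submodule.mem_sup_right (Submodule.mem_span_singleton_self w)

/-- Greedy construction of matrices of large rank. -/
lemma sr_greedy {p q : ℕ} (A : Submodule F (Matrix (Fin p) (Fin q) F))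
    (N : Fin q → Matrix (Fin p) (Fin q) F) (hN : ∀ j, N j ∈ A)
    (hN0 : ∀ j l, l < j → (N j).col l = 0) (J : Finset (Fin q)) :
    ∀ (T : Submodule F (Fin p → F)) (B : Matrix (Fin p) (Fin q) F),
      finrank F T + J.card ≤
        finrank F ↥(T ⊔ Submodule.span F ((fun j => (N j).col j) '' (J : Set (Fin q)))) →
      ∃ X ∈ A, (∀ l, (∀ j ∈ J, l < j) → X.col l = 0) ∧
        finrank F T + J.card ≤
          finrank F ↥(T ⊔ Submodule.span F ((fun j => (B + X).col j) '' (J : Set (Fin q)))) := by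
  classical
  induction J using Finset.induction_on_min with
  | empty =>
    intro T B h
    exact ⟨0, A.zero_mem, fun l _ => rfl, by
      rw [Finset.card_empty, add_zero]; exact Submodule.finrank_mono le_sup_left⟩
  | insert j0 J' hlt ih =>
    intro T B h
    have hj0 : j0 ∉ J' := fun hh => lt_irrefl _ (hlt _ hh)
    rw [Finset.card_insert_of_notMem hj0] at h ⊢
    rw [Finset.coe_insert, Set.image_insert_eq, Submodule.span_insert, sup_comm (Submodule.span F _),
      ← sup_assoc] at h
    set S := T ⊔ Submodule.span F ((fun j => (N j).col j) '' (J' : Set (Fin q))) with hS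
    have h1 := sr_finrank_sup_span_le S ((N j0).col j0)
    -- choice
    have hv : J'.card + finrank F T ≤ finrank F S := by omega
    have key : ∃ X0 ∈ A, (∀ l, l < j0 → X0.col l = 0) ∧ (B + X0).col j0 ∉ S := by
      by_cases hb : B.col j0 ∈ S
      · by_cases hv0 : (N j0).col j0 ∈ S
        · exfalso
          have hsub : S ⊔ Submodule.span F {(N j0).col j0} = S := by
            rw [sup_eq_left, Submodule.span_le]
            simpa using hv0
          rw [hsub] at h
          have e1 := Submodule.finrank_add_le_finrank_add_finrank T
            (Submodule.span F ((fun j => (N j).col j) '' (J' : Set (Fin q))))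
          have e2 := finrank_span_finset_le_card (R := F) (J'.image (fun j => (N j).col j))
          have e3 := Finset.card_image_le (s := J') (f := fun j => (N j).col j)
          rw [Finset.coe_image] at e2
          have e4 : Set.finrank F ((fun j => (N j).col j) '' (J' : Set (Fin q))) = finrank F
            (Submodule.span F ((fun j => (N j).col j) '' (J' : Set (Fin q)))) := rfl
          rw [← hS] at e1
          omega
        · refine ⟨N j0, hN j0, fun l hl => hN0 _ _ hl, fun hh => hv0 ?_⟩
          have := S.sub_mem hh hb
          convert this using 1
          ext i; simp
      · exact ⟨0, A.zero_mem, fun l _ => rfl, by simpa using hb⟩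
    obtain ⟨X0, hX0, hX00, hw⟩ := key
    set w := (B + X0).col j0 with hwdef
    have hwT : w ∉ T := fun hh => hw (Submodule.mem_sup_left hh)
    have h2 := sr_finrank_sup_span_le T w
    have h3 := sr_finrank_sup_span_lt T w hwT
    have h4 := sr_finrank_sup_span_lt S w hw
    obtain ⟨X, hX, hX0', hr⟩ := ih (T ⊔ Submodule.span F {w}) (B + X0) (by
      have : T ⊔ Submodule.span F {w} ⊔
          Submodule.span F ((fun j => (N j).col j) '' (J' : Set (Fin q))) =
          S ⊔ Submodule.span F {w} := by
        rw [hS, sup_assoc, sup_assoc, sup_comm (Submodule.span F {w})]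
      rw [this]
      omega)
    refine ⟨X0 + X, A.add_mem hX0 hX, ?_, ?_⟩
    · intro l hl
      have e1 := hX00 l (hl j0 (by simp))
      have e2 := hX0' l (fun j hj => hl j (by simp [hj]))
      ext i
      have e1 := congrFun e1 i
      have e2 := congrFun e2 i
      simp at e1 e2 ⊢
      rw [e1, e2, add_zero]
    · have e2 := hX0' j0 hlt
      have : (B + (X0 + X)).col j0 = w := by
        rw [hwdef]
        ext i
        have e2 := congrFun e2 i
        simp at e2 ⊢
        exact e2
      rw [Finset.coe_insert, Set.image_insert_eq, Submodule.span_insert, this, ← sup_assoc,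
        ← add_assoc B]
      omega

/-- `(i, j)` is a pivot position of `A` (column-first lexicographic order). -/
def srPiv {p q : ℕ} (A : Submodule F (Matrix (Fin p) (Fin q) F)) (i : Fin p) (j : Fin q) : Prop :=
  ∃ M ∈ A, M i j ≠ 0 ∧ (∀ l, l < j → M.col l = 0) ∧ ∀ k, k < i → M k j = 0

lemma sr_exists_piv {p q : ℕ} (A : Submodule F (Matrix (Fin p) (Fin q) F))
    (M : Matrix (Fin p) (Fin q) F) (hM : M ∈ A) (h0 : M ≠ 0) :
    ∃ i j, srPiv A i j ∧ M i j ≠ 0 := by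
  classical
  have h1 : (Finset.univ.filter fun j => M.col j ≠ 0).Nonempty := by
    by_contra hh
    rw [Finset.not_nonempty_iff_eq_empty, Finset.filter_eq_empty_iff] at hh
    apply h0
    ext i j
    have := hh (Finset.mem_univ j)
    simp only [ne_eq, not_not] at this
    exact congrFun this i
  set j := Finset.min' _ h1 with hj
  have hj1 : M.col j ≠ 0 := by
    have := Finset.min'_mem _ h1
    simpa using this
  have hj2 : ∀ l, l < j → M.col l = 0 := by
    intro l hl
    by_contra hh
    exact absurd (Finset.min'_le _ l (by simpa using hh)) (not_le.mpr hl)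
  have h2 : (Finset.univ.filter fun i => M i j ≠ 0).Nonempty := by
    obtain ⟨i, hi⟩ := Function.ne_iff.mp hj1
    exact ⟨i, by simpa using hi⟩
  refine ⟨Finset.min' _ h2, j, ⟨M, hM, ?_, hj2, ?_⟩, ?_⟩
  · have := Finset.min'_mem _ h2
    simpa using this
  · intro k hk
    by_contra hh
    exact absurd (Finset.min'_le _ k (by simpa using hh)) (not_le.mpr hk)
  · have := Finset.min'_mem _ h2
    simpa using this

open Classical in
lemma sr_finrank_le_piv {p q : ℕ} (A : Submodule F (Matrix (Fin p) (Fin q) F)) :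
    finrank F A ≤ (Finset.univ.filter fun x : Fin p × Fin q => srPiv A x.1 x.2).card := by
  set S := Finset.univ.filter fun x : Fin p × Fin q => srPiv A x.1 x.2 with hS
  let f : A →ₗ[F] (S → F) :=
    { toFun := fun M x => M.1 x.1.1 x.1.2
      map_add' := fun M N => rfl
      map_smul' := fun c M => rfl }
  have hf : Function.Injective f := by
    rw [← LinearMap.ker_eq_bot, LinearMap.ker_eq_bot']
    intro M hM
    by_contra h0
    obtain ⟨i, j, hp, hne⟩ := sr_exists_piv A M.1 M.2 (fun h => h0 (Subtype.ext h))
    exact hne (congrFun hM ⟨(i, j), by simpa [hS] using hp⟩)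
  have := LinearMap.finrank_le_finrank_of_injective hf
  simpa using this

/-- A partial transversal of pivots gives a matrix of large rank. -/
lemma sr_rank_of_transversal {p q : ℕ} (A : Submodule F (Matrix (Fin p) (Fin q) F))
    (J : Finset (Fin q)) (f : Fin q → Fin p) (hf : Set.InjOn f J)
    (hp : ∀ j ∈ J, srPiv A (f j) j) : ∃ M ∈ A, J.card ≤ M.rank := by
  classical
  have hex : ∀ j : Fin q, ∃ N ∈ A, (∀ l, l < j → N.col l = 0) ∧
      (j ∈ J → N (f j) j ≠ 0 ∧ ∀ k, k < f j → N k j = 0) := by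
    intro j
    by_cases hj : j ∈ J
    · obtain ⟨M, h1, h2, h3, h4⟩ := hp j hj
      exact ⟨M, h1, h3, fun _ => ⟨h2, h4⟩⟩
    · exact ⟨0, A.zero_mem, fun l _ => rfl, fun h => absurd h hj⟩
  choose N hN hN0 hNp using hex
  have hli : LinearIndependent F (fun j : J => (N j.1).col j.1) := by
    rw [Fintype.linearIndependent_iff]
    intro g hg
    by_contra hh
    push Not at hh
    have hne : (Finset.univ.filter fun j : J => g j ≠ 0).Nonempty := by
      obtain ⟨i, hi⟩ := hh
      exact ⟨i, by simpa using hi⟩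
    obtain ⟨j, hj, hmin⟩ := Finset.exists_min_image _ (fun j : J => f j.1) hne
    have hj' : g j ≠ 0 := by simpa using hj
    have := congrFun hg (f j.1)
    rw [Finset.sum_apply, Finset.sum_eq_single j] at this
    · simp at this
      rcases this with h | h
      · exact hj' h
      · exact (hNp j.1 j.2).1 h
    · intro b _ hb
      by_cases hgb : g b = 0
      · simp [hgb]
      · have h1 := hmin b (by simpa using hgb)
        have h2 : f j.1 ≠ f b.1 := fun h => hb (Subtype.ext (hf b.2 j.2 h.symm))
        have h3 := (hNp b.1 b.2).2 (f j.1) (lt_of_le_of_ne h1 h2)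
        simp [h3]
    · simp
  have hfr : finrank F (Submodule.span F ((fun j => (N j).col j) '' (J : Set (Fin q)))) = J.card := by
    have := finrank_span_eq_card hli
    rw [Fintype.card_coe] at this
    rw [← this]
    have hset : ((fun j => (N j).col j) '' (J : Set (Fin q))) =
        Set.range (fun j : J => (N j.1).col j.1) := by
      ext x
      constructor
      · rintro ⟨j, hj, rfl⟩
        exact ⟨⟨j, hj⟩, rfl⟩
      · rintro ⟨j, rfl⟩
        exact ⟨j.1, j.2, rfl⟩
    rw [hset]
  obtain ⟨X, hX, -, hr⟩ := sr_greedy A N hN hN0 J ⊥ 0 (by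
    rw [bot_sup_eq, hfr]; simp)
  refine ⟨X, hX, ?_⟩
  rw [bot_sup_eq] at hr
  simp only [finrank_bot, zero_add] at hr
  refine hr.trans ?_
  rw [Matrix.rank_eq_finrank_span_cols]
  apply Submodule.finrank_mono
  apply Submodule.span_mono
  rintro _ ⟨j, _, rfl⟩
  exact ⟨j, by simp⟩

/-- Deletable row or column. -/
lemma sr_hall {p q a : ℕ} (A : Submodule F (Matrix (Fin p) (Fin q) F)) (hpq : q ≤ p) (haq : a < q)
    (hr : ∀ M ∈ A, M.rank ≤ a) (hd : p * a ≤ finrank F A) :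
    (∃ j, ∀ i, ¬ srPiv A i j) ∨ (p = q ∧ ∃ i, ∀ j, ¬ srPiv A i j) := by
  classical
  let P : Fin q → Finset (Fin p) := fun j => Finset.univ.filter fun i => srPiv A i j
  let tt : Fin q → Finset (Fin p ⊕ Fin (q - a - 1)) := fun j => (P j).disjSum Finset.univ
  have hnot : ¬ ∃ f : Fin q → Fin p ⊕ Fin (q - a - 1), Function.Injective f ∧ ∀ x, f x ∈ tt x := by
    rintro ⟨f, hf, hft⟩
    have hp0 : 0 < p := by omega
    let J : Finset (Fin q) := Finset.univ.filter fun j => (f j).isLeft = true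
    let g : Fin q → Fin p := fun j => (f j).elim id (fun _ => ⟨0, hp0⟩)
    have hJ : ∀ j ∈ J, f j = Sum.inl (g j) := by
      intro j hj
      have : (f j).isLeft = true := by simpa [J] using hj
      obtain ⟨y, hy⟩ := Sum.isLeft_iff.mp this
      simp [g, hy]
    obtain ⟨M, hM, hMr⟩ := sr_rank_of_transversal A J g
      (fun x hx y hy hxy => hf (by rw [hJ x hx, hJ y hy, hxy]))
      (fun j hj => by
        have := hft j
        rw [hJ j hj] at this
        simpa [tt, P] using this)
    have h1 := hr M hM
    have h2 : (Jᶜ).card ≤ q - a - 1 := by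
      have hx : ∀ j ∈ Jᶜ, f j ∈ (Finset.univ : Finset (Fin (q - a - 1))).map Function.Embedding.inr := by
        intro j hj
        have : ¬ (f j).isLeft = true := by simpa [J] using hj
        rcases hfj : f j with y | y
        · simp [hfj] at this
        · simp
      have := Finset.card_le_card_of_injOn f hx hf.injOn
      simpa using this
    have h3 := Finset.card_add_card_compl J
    rw [Fintype.card_fin] at h3
    omega
  rw [← Finset.all_card_le_biUnion_card_iff_exists_injective] at hnot
  push Not at hnot
  obtain ⟨J, hJ⟩ := hnot
  have hJne : J.Nonempty := by
    rw [Finset.nonempty_iff_ne_empty]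
    rintro rfl
    simp at hJ
  set Q := J.biUnion P with hQ
  have hcard : Q.card + (q - a - 1) ≤ (J.biUnion tt).card := by
    have : Q.disjSum (Finset.univ : Finset (Fin (q - a - 1))) ⊆ J.biUnion tt := by
      intro x hx
      obtain ⟨j0, hj0⟩ := hJne
      rcases x with x | x
      · simp [hQ, tt] at hx ⊢
        exact hx
      · simp [tt]
        exact ⟨j0, hj0⟩
    have := Finset.card_le_card this
    simpa [Finset.card_disjSum] using this
  have hs : Q.card + (Jᶜ).card ≤ a := by
    have h3 := Finset.card_add_card_compl J
    rw [Fintype.card_fin] at h3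
    omega
  have hcount : p * a ≤ Q.card * J.card + p * (Jᶜ).card := by
    refine hd.trans ((sr_finrank_le_piv A).trans ?_)
    have : (Finset.univ.filter fun x : Fin p × Fin q => srPiv A x.1 x.2) ⊆
        Q ×ˢ J ∪ Finset.univ ×ˢ Jᶜ := by
      intro x hx
      simp at hx ⊢
      by_cases hj : x.2 ∈ J
      · left
        refine ⟨?_, hj⟩
        simp [hQ, P]
        exact ⟨_, hj, hx⟩
      · exact Or.inr hj
    refine (Finset.card_le_card this).trans ((Finset.card_union_le _ _).trans ?_)
    simp [Finset.card_product]
  have h3 := Finset.card_add_card_compl J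
  rw [Fintype.card_fin] at h3
  have hpivQ : ∀ i j, j ∈ J → srPiv A i j → i ∈ Q := by
    intro i j hj h
    simp [hQ, P]
    exact ⟨j, hj, h⟩
  by_cases hs0 : Q.card = 0
  · left
    obtain ⟨j0, hj0⟩ := hJne
    refine ⟨j0, fun i hi => ?_⟩
    have := hpivQ i j0 hj0 hi
    rw [Finset.card_eq_zero] at hs0
    simp [hs0] at this
  · right
    have hle : p * Q.card ≤ Q.card * J.card := by
      have := Nat.mul_le_mul_left p hs
      rw [mul_add] at this
      omega
    have hpj : p ≤ J.card := by
      rw [mul_comm] at hle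
      exact Nat.le_of_mul_le_mul_left hle (by omega)
    refine ⟨by omega, ?_⟩
    have hJu : ∀ j, j ∈ J := by
      have : Jᶜ.card = 0 := by omega
      intro j
      rw [Finset.card_eq_zero, Finset.compl_eq_empty_iff] at this
      simp [this]
    have : ∃ i, i ∉ Q := by
      by_contra hh
      push Not at hh
      have : Q = Finset.univ := Finset.eq_univ_iff_forall.mpr hh
      rw [this] at hs
      simp at hs
      omega
    obtain ⟨i, hi⟩ := this
    exact ⟨i, fun j hj => hi (hpivQ i j (hJu j) hj)⟩

lemma sr_family {p : ℕ} (s y : Fin p → F) (h : LinearIndependent F ![s, y]) :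
    ∀ k : ℕ, k + 1 < p → ∃ x : Fin (k + 1) → (Fin p → F), x 0 = s ∧
      LinearIndependent F (Fin.cons y x : Fin (k + 2) → (Fin p → F)) := by
  intro k
  induction k with
  | zero =>
    intro _
    refine ⟨fun _ => s, rfl, ?_⟩
    have hs : s ≠ 0 := h.ne_zero 0
    rw [linearIndependent_finCons]
    rw [LinearIndependent.pair_iff' hs] at h
    constructor
    · haveI : Subsingleton (Fin (0 + 1)) := inferInstanceAs (Subsingleton (Fin 1))
      exact LinearIndependent.of_subsingleton 0 hs
    · rw [Set.range_const, Submodule.mem_span_singleton]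
      rintro ⟨c, hc⟩
      exact h c hc
  | succ k ih =>
    intro hk
    obtain ⟨x, hx0, hx⟩ := ih (by omega)
    obtain ⟨z, hz⟩ := exists_linearIndependent_snoc_of_lt_finrank hx (by simpa using hk)
    refine ⟨Fin.snoc x z, ?_, ?_⟩
    · have : (0 : Fin (k + 1 + 1)) = Fin.castSucc (0 : Fin (k + 1)) := rfl
      rw [this, Fin.snoc_castSucc, hx0]
    · rw [Fin.cons_snoc_eq_snoc_cons]
      exact hz

lemma sr_family' {p a : ℕ} (hap : a < p) (s y : Fin p → F) (h : LinearIndependent F ![s, y])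
    (l0 : Fin a) : ∃ x : Fin a → (Fin p → F), x l0 = s ∧ LinearIndependent F x ∧
      y ∉ Submodule.span F (Set.range x) := by
  obtain _ | k := a
  · exact l0.elim0
  obtain ⟨x, hx0, hx⟩ := sr_family s y h k hap
  rw [linearIndependent_finCons] at hx
  refine ⟨x ∘ Equiv.swap l0 0, by simp [hx0], ?_, ?_⟩
  · exact hx.1.comp _ (Equiv.injective _)
  · rw [Set.range_comp, (Equiv.surjective _).range_eq, Set.image_univ]
    exact hx.2

lemma sr_mulR_exists {p a q : ℕ} (Φ : Matrix (Fin a) (Fin q) F) :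
    ∃ f : Matrix (Fin p) (Fin a) F →ₗ[F] Matrix (Fin p) (Fin q) F, ∀ X, f X = X * Φ :=
  ⟨{ toFun := fun X => X * Φ
     map_add' := fun X Y => Matrix.add_mul X Y Φ
     map_smul' := fun c X => by simp }, fun _ => rfl⟩

lemma sr_rightInv {p a q : ℕ} (hp : 0 < p) (Φ : Matrix (Fin a) (Fin q) F)
    (h : ∀ X : Matrix (Fin p) (Fin a) F, X * Φ = 0 → X = 0) : ∃ Ω : Matrix (Fin q) (Fin a) F,
      Φ * Ω = 1 := by
  rw [← Matrix.mulVec_surjective_iff_exists_right_inverse]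
  have hli : LinearIndependent F Φ.row := by
    rw [← Matrix.vecMul_injective_iff]
    intro y z hyz
    have hyz' : Matrix.vecMul (y - z) Φ = 0 := by
      rw [Matrix.sub_vecMul]; exact sub_eq_zero.mpr hyz
    have := h (Matrix.of fun _ => y - z) (by
      ext i j
      have := congrFun hyz' j
      simpa [Matrix.mul_apply, Matrix.vecMul, dotProduct] using this)
    ext l
    have := congrFun (congrFun this ⟨0, hp⟩) l
    simp at this
    exact sub_eq_zero.mp this
  have hrk := hli.rank_matrix
  have htop : LinearMap.range Φ.mulVecLin = ⊤ := by
    apply Submodule.eq_top_of_finrank_eq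
    rw [← Matrix.rank, hrk]
    simp
  intro v
  have : v ∈ LinearMap.range Φ.mulVecLin := by rw [htop]; trivial
  obtain ⟨w, hw⟩ := this
  exact ⟨w, hw⟩

/-- If the matrices with one column deleted factor through `Φ`, then so do the matrices. -/
lemma sr_extend {p q a : ℕ} (A : Submodule F (Matrix (Fin p) (Fin (q + 1)) F)) (j : Fin (q + 1))
    (hap : a < p) (hr : ∀ M ∈ A, M.rank ≤ a) (hd : finrank F A = p * a)
    (hdel : ∀ M ∈ A, (∀ i l, l ≠ j → M i l = 0) → M = 0) (Φ : Matrix (Fin a) (Fin q) F)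
    (hΦ : ∀ M ∈ A, ∃ X : Matrix (Fin p) (Fin a) F, M.submatrix id j.succAbove = X * Φ) :
    ∃ Φ' : Matrix (Fin a) (Fin (q + 1)) F, ∀ M ∈ A,
      ∃ X : Matrix (Fin p) (Fin a) F, M = X * Φ' := by
  classical
  obtain ⟨mu, hmu⟩ := sr_mulR_exists (p := p) Φ
  let dA : A →ₗ[F] Matrix (Fin p) (Fin q) F :=
    { toFun := fun M => M.1.submatrix id j.succAbove
      map_add' := fun M N => rfl
      map_smul' := fun c M => rfl }
  have hdA : Function.Injective dA := by
    rw [← LinearMap.ker_eq_bot, LinearMap.ker_eq_bot']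
    intro M hM
    apply Subtype.ext
    apply hdel M.1 M.2
    intro i l hl
    obtain ⟨l', rfl⟩ := Fin.exists_succAbove_eq hl
    exact congrFun (congrFun hM i) l'
  have hle : LinearMap.range dA ≤ LinearMap.range mu := by
    rintro _ ⟨M, rfl⟩
    obtain ⟨X, hX⟩ := hΦ M.1 M.2
    exact ⟨X, by rw [hmu]; exact hX.symm⟩
  have h1 : finrank F (LinearMap.range dA) = p * a := by
    rw [LinearMap.finrank_range_of_inj hdA, hd]
  have h2 := LinearMap.finrank_range_add_finrank_ker mu
  rw [Module.finrank_matrix] at h2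
  simp only [Fintype.card_fin, finrank_self, mul_one] at h2
  have heq : LinearMap.range dA = LinearMap.range mu :=
    Submodule.eq_of_le_of_finrank_le hle (by omega)
  have hker : LinearMap.ker mu = ⊥ := by
    apply Submodule.finrank_eq_zero.mp
    rw [heq] at h1
    omega
  have hinj : ∀ X : Matrix (Fin p) (Fin a) F, X * Φ = 0 → X = 0 := by
    intro X hX
    exact (LinearMap.ker_eq_bot'.mp hker) X (by rw [hmu, hX])
  obtain ⟨Ω, hΩ⟩ := sr_rightInv (by omega) Φ hinj
  -- the inverse map
  let e : Matrix (Fin p) (Fin a) F →ₗ[F] A :=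
    (LinearEquiv.ofInjective dA hdA).symm.toLinearMap ∘ₗ
      (mu.codRestrict (LinearMap.range dA) (fun X => by rw [heq]; exact ⟨X, rfl⟩))
  have he : ∀ X, dA (e X) = X * Φ := by
    intro X
    have := LinearEquiv.ofInjective_symm_apply (f := dA) (h := hdA)
      (mu.codRestrict (LinearMap.range dA) (fun X => by rw [heq]; exact ⟨X, rfl⟩) X)
    rw [← hmu]
    exact this
  have hsurj : ∀ M : A, ∃ X, e X = M := by
    intro M
    obtain ⟨X, hX⟩ := hΦ M.1 M.2
    exact ⟨X, hdA (by rw [he, ← hX]; rfl)⟩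
  let g : Matrix (Fin p) (Fin a) F →ₗ[F] (Fin p → F) :=
    { toFun := fun X i => (e X).1 i j
      map_add' := fun X Y => by ext i; simp
      map_smul' := fun c X => by ext i; simp }
  have hg : ∀ X, LinearIndependent F X.col → g X ∈ Submodule.span F (Set.range X.col) := by
    intro X hX
    by_contra hn
    have h3 := sr_finrank_sup_span_lt _ _ hn
    rw [finrank_span_eq_card hX, Fintype.card_fin] at h3
    have h4 : Submodule.span F (Set.range X.col) ⊔ Submodule.span F {g X} ≤
        Submodule.span F (Set.range (e X).1.col) := by
      apply sup_le
      · rw [Submodule.span_le]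
        rintro _ ⟨l, rfl⟩
        have hXe : X = dA (e X) * Ω := by rw [he, Matrix.mul_assoc, hΩ, Matrix.mul_one]
        have : X.col l = ∑ k, Ω k l • (e X).1.col (j.succAbove k) := by
          conv_lhs => rw [hXe]
          ext i
          simp only [Matrix.col_apply, Matrix.mul_apply, Finset.sum_apply, Pi.smul_apply, smul_eq_mul]
          exact Finset.sum_congr rfl fun x _ => mul_comm _ _
        rw [this]
        apply Submodule.sum_mem
        intro k _
        exact Submodule.smul_mem _ _ (Submodule.subset_span ⟨_, rfl⟩)
      · rw [Submodule.span_le, Set.singleton_subset_iff]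
        exact Submodule.subset_span ⟨j, rfl⟩
    have h5 := Submodule.finrank_mono h4
    rw [← Matrix.rank_eq_finrank_span_cols] at h5
    have := hr _ (e X).2
    omega
  let sI : Fin a → (Fin p → F) →ₗ[F] Matrix (Fin p) (Fin a) F := fun i =>
    { toFun := fun s => Matrix.of fun r l => if l = i then s r else 0
      map_add' := fun s s' => by ext r l; by_cases h : l = i <;> simp [h]
      map_smul' := fun c s => by ext r l; by_cases h : l = i <;> simp [h] }
  have hscal : ∀ i, ∃ c : F, g ∘ₗ sI i = c • (1 : (Fin p → F) →ₗ[F] (Fin p → F)) := by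
    intro i
    apply LinearMap.exists_eq_smul_id_of_forall_notLinearIndependent
    intro s hsy
    by_cases hl : ∃ l0, l0 ≠ i
    · obtain ⟨l0, hl0⟩ := hl
      obtain ⟨x, hx0, hx, hy⟩ := sr_family' hap s _ hsy l0
      let X : Matrix (Fin p) (Fin a) F := Matrix.of fun r l => x l r
      have hXc : X.col = x := rfl
      let X' := X + sI i s
      have hc1 : ∀ l, l ≠ i → X'.col l = x l := by
        intro l hl
        ext r
        simp [X', X, sI, hl]
      have hc2 : X'.col i = x i + s := by
        ext r
        simp [X', X, sI]
      have hle1 : Submodule.span F (Set.range X'.col) ≤ Submodule.span F (Set.range x) := by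
        rw [Submodule.span_le]
        rintro _ ⟨l, rfl⟩
        by_cases hli : l = i
        · subst hli
          rw [hc2, ← hx0]
          exact Submodule.add_mem _ (Submodule.subset_span ⟨_, rfl⟩) (Submodule.subset_span ⟨_, rfl⟩)
        · rw [hc1 l hli]
          exact Submodule.subset_span ⟨_, rfl⟩
      have hle2 : Submodule.span F (Set.range x) ≤ Submodule.span F (Set.range X'.col) := by
        rw [Submodule.span_le]
        rintro _ ⟨l, rfl⟩
        by_cases hli : l = i
        · subst hli
          have : x l = X'.col l - X'.col l0 := by
            rw [hc2, hc1 l0 hl0, hx0, add_sub_cancel_right]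
          rw [this]
          exact Submodule.sub_mem _ (Submodule.subset_span ⟨_, rfl⟩) (Submodule.subset_span ⟨_, rfl⟩)
        · rw [← hc1 l hli]
          exact Submodule.subset_span ⟨_, rfl⟩
      have hX' : LinearIndependent F X'.col := by
        rw [linearIndependent_iff_card_eq_finrank_span, Set.finrank, le_antisymm hle1 hle2,
          finrank_span_eq_card hx]
      have g1 := hg X (by rw [hXc]; exact hx)
      have g2 := hle1 (hg X' hX')
      rw [hXc] at g1
      apply hy
      have : (g ∘ₗ sI i) s = g X' - g X := by
        simp [X']
      rw [this]
      exact Submodule.sub_mem _ g2 g1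
    · push Not at hl
      obtain ⟨x, hx0, hx, hy⟩ := sr_family' hap s _ hsy i
      have hX : (sI i s).col = x := by
        ext l r
        have := hl l
        subst this
        simp [sI, hx0]
      apply hy
      have := hg (sI i s) (by rw [hX]; exact hx)
      rw [hX] at this
      exact this
  choose c hc using hscal
  refine ⟨Matrix.of fun l k => (Fin.insertNth j (c l) (Φ l) : Fin (q + 1) → F) k, ?_⟩
  intro M hM
  obtain ⟨X, hX⟩ := hsurj ⟨M, hM⟩
  refine ⟨X, ?_⟩
  have hXs : X = ∑ i, sI i (X.col i) := by
    ext r l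
    rw [Matrix.sum_apply]
    simp [sI]
  ext r k
  rw [Matrix.mul_apply]
  rcases Fin.eq_self_or_eq_succAbove j k with rfl | ⟨k', rfl⟩
  · have e1 : g X = ∑ i, c i • X.col i := by
      conv_lhs => rw [hXs]
      rw [map_sum]
      apply Finset.sum_congr rfl
      intro i _
      have := LinearMap.congr_fun (hc i) (X.col i)
      simpa using this
    have e2 := congrFun e1 r
    have e3 : g X r = M r k := by
      change (e X).1 r k = _
      rw [hX]
    rw [← e3, e2]
    simp [mul_comm]
  · have e1 := congrFun (congrFun (he X) r) k'
    have e3 : dA (e X) r k' = M r (j.succAbove k') := by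
      rw [hX]; rfl
    rw [← e3, e1, Matrix.mul_apply]
    simp

lemma sr_step {p q a : ℕ} (A : Submodule F (Matrix (Fin p) (Fin (q + 1)) F)) (j : Fin (q + 1))
    (hqp : q + 1 ≤ p) (haq : a ≤ q) (hr : ∀ M ∈ A, M.rank ≤ a) (hd : finrank F A = p * a)
    (hdel : ∀ M ∈ A, (∀ i l, l ≠ j → M i l = 0) → M = 0)
    (ih : ∀ A' : Submodule F (Matrix (Fin p) (Fin q) F), (∀ M ∈ A', M.rank ≤ a) →
      finrank F A' = p * a → ∃ Φ : Matrix (Fin a) (Fin q) F, ∀ M ∈ A',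
      ∃ X : Matrix (Fin p) (Fin a) F, M = X * Φ) :
    ∃ Φ' : Matrix (Fin a) (Fin (q + 1)) F, ∀ M ∈ A,
      ∃ X : Matrix (Fin p) (Fin a) F, M = X * Φ' := by
  let del : Matrix (Fin p) (Fin (q + 1)) F →ₗ[F] Matrix (Fin p) (Fin q) F :=
    { toFun := fun M => M.submatrix id j.succAbove
      map_add' := fun M N => rfl
      map_smul' := fun c M => rfl }
  have hinj : Function.Injective (del.domRestrict A) := by
    rw [← LinearMap.ker_eq_bot, LinearMap.ker_eq_bot']
    intro M hM
    apply Subtype.ext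
    apply hdel M.1 M.2
    intro i l hl
    obtain ⟨l', rfl⟩ := Fin.exists_succAbove_eq hl
    exact congrFun (congrFun hM i) l'
  obtain ⟨Φ, hΦ⟩ := ih (A.map del) (by
      rintro _ ⟨M, hM, rfl⟩
      exact (Matrix.rank_submatrix_le M id j.succAbove).trans (hr M hM)) (by
      rw [← hd, ← LinearMap.finrank_range_of_inj hinj, LinearMap.range_domRestrict])
  exact sr_extend A j (by omega) hr hd hdel Φ (fun M hM => hΦ _ ⟨M, hM, rfl⟩)

lemma sr_finrank_transpose {p q : ℕ} (A : Submodule F (Matrix (Fin p) (Fin q) F)) :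
    finrank F (A.map (Matrix.transposeLinearEquiv (Fin p) (Fin q) F F).toLinearMap) = finrank F A :=
  LinearEquiv.finrank_map_eq (Matrix.transposeLinearEquiv (Fin p) (Fin q) F F) A

/-- Classification of optimal anticodes. -/
theorem sr_class : ∀ (q p a : ℕ) (A : Submodule F (Matrix (Fin p) (Fin q) F)), q ≤ p → a ≤ q →
    (∀ M ∈ A, M.rank ≤ a) → finrank F A = p * a →
    (∃ Φ : Matrix (Fin a) (Fin q) F, ∀ M ∈ A, ∃ X : Matrix (Fin p) (Fin a) F, M = X * Φ) ∨
    (p = q ∧ ∃ Ψ : Matrix (Fin p) (Fin a) F, ∀ M ∈ A, ∃ X : Matrix (Fin a) (Fin q) F, M = Ψ * X) := by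
  intro q
  induction q with
  | zero =>
    intro p a A _ ha _ _
    left
    refine ⟨0, fun M _ => ⟨0, ?_⟩⟩
    ext i j
    exact j.elim0
  | succ q ih =>
    intro p a A hqp ha hr hd
    rcases Nat.lt_or_eq_of_le ha with hlt | heq
    · have ih' : ∀ A' : Submodule F (Matrix (Fin p) (Fin q) F), (∀ M ∈ A', M.rank ≤ a) →
          finrank F A' = p * a → ∃ Φ : Matrix (Fin a) (Fin q) F, ∀ M ∈ A',
          ∃ X : Matrix (Fin p) (Fin a) F, M = X * Φ := by
        intro A' hr' hd'
        rcases ih p a A' (by omega) (by omega) hr' hd' with h | ⟨h, _⟩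
        · exact h
        · omega
      rcases sr_hall A hqp hlt hr hd.ge with ⟨j, hj⟩ | ⟨hpq, i, hi⟩
      · left
        refine sr_step A j hqp (by omega) hr hd ?_ ih'
        intro M hM h0
        by_contra hne
        obtain ⟨i', j', hpiv, hne'⟩ := sr_exists_piv A M hM hne
        by_cases hjj : j' = j
        · exact hj i' (hjj ▸ hpiv)
        · exact hne' (h0 _ _ hjj)
      · right
        subst hpq
        refine ⟨rfl, ?_⟩
        obtain ⟨Φ, hΦ⟩ := sr_step (A.map (Matrix.transposeLinearEquiv _ _ F F).toLinearMap) i hqp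
          (by omega) (by
            rintro _ ⟨M, hM, rfl⟩
            change M.transpose.rank ≤ a
            rw [Matrix.rank_transpose]
            exact hr M hM) (by rw [sr_finrank_transpose, hd]) (by
            rintro _ ⟨M, hM, rfl⟩ h0
            by_contra hne
            have hM0 : M ≠ 0 := by rintro rfl; exact hne (map_zero _)
            obtain ⟨i', j', hpiv, hne'⟩ := sr_exists_piv A M hM hM0
            by_cases hjj : i' = i
            · exact hi j' (hjj ▸ hpiv)
            · exact hne' (h0 j' i' hjj)) ih'
        refine ⟨Φ.transpose, fun M hM => ?_⟩
        obtain ⟨X, hX⟩ := hΦ _ ⟨M, hM, rfl⟩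
        refine ⟨X.transpose, ?_⟩
        rw [← Matrix.transpose_mul, ← hX]
        rfl
    · subst heq
      exact Or.inl ⟨1, fun M _ => ⟨M, (Matrix.mul_one M).symm⟩⟩

lemma sr_rank_add_le {p q : ℕ} (M N : Matrix (Fin p) (Fin q) F) :
    (M + N).rank ≤ M.rank + N.rank := by
  simp only [Matrix.rank_eq_finrank_span_cols]
  refine le_trans (Submodule.finrank_mono ?_) (Submodule.finrank_add_le_finrank_add_finrank _ _)
  rw [Submodule.span_le]
  rintro _ ⟨l, rfl⟩
  exact Submodule.add_mem_sup (Submodule.subset_span ⟨l, rfl⟩) (Submodule.subset_span ⟨l, rfl⟩)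

lemma sr_col_reduce {p q a : ℕ} (A : Submodule F (Matrix (Fin p) (Fin q) F))
    (hd : finrank F A = p * (a + 1)) (hM : ∃ M ∈ A, a + 1 ≤ M.rank)
    (Φ : Matrix (Fin (a + 1)) (Fin q) F)
    (hΦ : ∀ M ∈ A, ∃ X : Matrix (Fin p) (Fin (a + 1)) F, M = X * Φ) :
    ∃ A' ≤ A, finrank F A' = p * a ∧ (∀ M ∈ A', M.rank ≤ a) ∧ ∃ M ∈ A', a ≤ M.rank := by
  obtain ⟨mu, hmu⟩ := sr_mulR_exists (p := p) Φ
  obtain ⟨mu', hmu'⟩ := sr_mulR_exists (p := p) (Φ.submatrix Fin.castSucc id)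
  have hle : A ≤ LinearMap.range mu := by
    intro M hM
    obtain ⟨X, hX⟩ := hΦ M hM
    exact ⟨X, by rw [hmu, hX]⟩
  have h2 := LinearMap.finrank_range_add_finrank_ker mu
  rw [Module.finrank_matrix] at h2
  simp only [Fintype.card_fin, finrank_self, mul_one] at h2
  have heq : A = LinearMap.range mu := Submodule.eq_of_le_of_finrank_le hle (by omega)
  have hker : LinearMap.ker mu = ⊥ := by
    apply Submodule.finrank_eq_zero.mp
    rw [← heq] at h2
    omega
  let ext0 : Matrix (Fin p) (Fin a) F → Matrix (Fin p) (Fin (a + 1)) F :=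
    fun X => Matrix.of fun i => (Fin.snoc (X i) 0 : Fin (a + 1) → F)
  have hext : ∀ X, mu (ext0 X) = mu' X := by
    intro X
    rw [hmu, hmu']
    ext i j
    simp [Matrix.mul_apply, Fin.sum_univ_castSucc, ext0]
  have hinj : Function.Injective mu' := by
    rw [← LinearMap.ker_eq_bot, LinearMap.ker_eq_bot']
    intro X hX
    have := (LinearMap.ker_eq_bot'.mp hker) (ext0 X) (by rw [hext, hX])
    ext i j
    have := congrFun (congrFun this i) j.castSucc
    simpa [ext0] using this
  refine ⟨LinearMap.range mu', ?_, ?_, ?_, ?_⟩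
  · rw [heq]
    rintro _ ⟨X, rfl⟩
    exact ⟨ext0 X, hext X⟩
  · rw [LinearMap.finrank_range_of_inj hinj, Module.finrank_matrix]
    simp
  · rintro _ ⟨X, rfl⟩
    rw [hmu']
    refine (Matrix.rank_mul_le_left _ _).trans ?_
    simpa using Matrix.rank_le_card_width X
  · obtain ⟨M, hM, hrk⟩ := hM
    obtain ⟨X, rfl⟩ := hΦ M hM
    refine ⟨mu' (X.submatrix id Fin.castSucc), ⟨_, rfl⟩, ?_⟩
    have hsum : X * Φ = mu' (X.submatrix id Fin.castSucc) +
        Matrix.vecMulVec (fun i => X i (Fin.last a)) (Φ (Fin.last a)) := by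
      rw [hmu']
      ext i j
      simp [Matrix.mul_apply, Fin.sum_univ_castSucc, Matrix.vecMulVec_apply]
    rw [hsum] at hrk
    have h3 := sr_rank_add_le (mu' (X.submatrix id Fin.castSucc))
        (Matrix.vecMulVec (fun i => X i (Fin.last a)) (Φ (Fin.last a)))
    have h4 := Matrix.rank_vecMulVec_le (fun i => X i (Fin.last a)) (Φ (Fin.last a))
    omega

lemma sr_bdd {p q : ℕ} (A : Submodule F (Matrix (Fin p) (Fin q) F)) :
    BddAbove {w | ∃ M ∈ A, M.rank = w} := by
  refine ⟨q, ?_⟩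
  rintro _ ⟨M, _, rfl⟩
  simpa using Matrix.rank_le_card_width M

lemma sr_rank_le_maxrank {p q : ℕ} (A : Submodule F (Matrix (Fin p) (Fin q) F))
    (M : Matrix (Fin p) (Fin q) F) (hM : M ∈ A) : M.rank ≤ maxrank A :=
  le_csSup (sr_bdd A) ⟨M, hM, rfl⟩

lemma sr_exists_maxrank {p q : ℕ} (A : Submodule F (Matrix (Fin p) (Fin q) F)) :
    ∃ M ∈ A, M.rank = maxrank A :=
  Nat.sSup_mem (s := {w | ∃ M ∈ A, M.rank = w}) ⟨_, 0, A.zero_mem, rfl⟩ (sr_bdd A)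

lemma sr_maxrank_eq {p q a : ℕ} (A : Submodule F (Matrix (Fin p) (Fin q) F))
    (h1 : ∀ M ∈ A, M.rank ≤ a) (h2 : ∃ M ∈ A, a ≤ M.rank) : maxrank A = a := by
  obtain ⟨M, hM, hr⟩ := sr_exists_maxrank A
  obtain ⟨N, hN, hr2⟩ := h2
  have := sr_rank_le_maxrank A N hN
  have := h1 M hM
  omega

lemma sr_maxrank_le {p q : ℕ} (A : Submodule F (Matrix (Fin p) (Fin q) F)) : maxrank A ≤ q := by
  obtain ⟨M, hM, hr⟩ := sr_exists_maxrank A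
  rw [← hr]
  simpa using Matrix.rank_le_card_width M

/-- Optimal anticodes can be shrunk. -/
lemma sr_shrink {p q a : ℕ} (hqp : q ≤ p) (A : Submodule F (Matrix (Fin p) (Fin q) F))
    (hA : IsOptAnticode A) (ha : maxrank A = a + 1) :
    ∃ A' ≤ A, IsOptAnticode A' ∧ maxrank A' = a ∧ finrank F A = finrank F A' + p := by
  have hd : finrank F A = p * (a + 1) := by rw [← ha]; exact hA
  have hr : ∀ M ∈ A, M.rank ≤ a + 1 := fun M hM => by
    rw [← ha]; exact sr_rank_le_maxrank A M hM
  have hM : ∃ M ∈ A, a + 1 ≤ M.rank := by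
    obtain ⟨M, hM, h⟩ := sr_exists_maxrank A
    exact ⟨M, hM, by omega⟩
  have key : ∃ A' ≤ A, finrank F A' = p * a ∧ (∀ M ∈ A', M.rank ≤ a) ∧ ∃ M ∈ A', a ≤ M.rank := by
    rcases sr_class q p (a + 1) A hqp (by have := sr_maxrank_le A; omega) hr hd with
      ⟨Φ, hΦ⟩ | ⟨hpq, Ψ, hΨ⟩
    · exact sr_col_reduce A hd hM Φ hΦ
    · subst hpq
      obtain ⟨A', hA', h1, h2, M, hM', h3⟩ := sr_col_reduce
        (A.map (Matrix.transposeLinearEquiv _ _ F F).toLinearMap) (a := a)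
        (by rw [sr_finrank_transpose, hd]) (by
          obtain ⟨M, hM, h⟩ := hM
          refine ⟨M.transpose, ⟨M, hM, rfl⟩, ?_⟩
          rw [Matrix.rank_transpose]; exact h) Ψ.transpose (by
          rintro _ ⟨M, hM, rfl⟩
          obtain ⟨X, hX⟩ := hΨ M hM
          refine ⟨X.transpose, ?_⟩
          rw [← Matrix.transpose_mul, ← hX]
          rfl)
      refine ⟨A'.map (Matrix.transposeLinearEquiv _ _ F F).toLinearMap, ?_, ?_, ?_, ?_⟩
      · rintro _ ⟨N, hN, rfl⟩
        obtain ⟨N', hN', rfl⟩ := hA' hN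
        exact hN'
      · rw [sr_finrank_transpose, h1]
      · rintro _ ⟨N, hN, rfl⟩
        change N.transpose.rank ≤ a
        rw [Matrix.rank_transpose]
        exact h2 N hN
      · refine ⟨M.transpose, ⟨M, hM', rfl⟩, ?_⟩
        rw [Matrix.rank_transpose]
        exact h3
  obtain ⟨A', hle, h1, h2, h3⟩ := key
  have h4 := sr_maxrank_eq A' h2 h3
  refine ⟨A', hle, ?_, h4, ?_⟩
  · unfold IsOptAnticode
    rw [h4, h1]
  · rw [hd, h1]; ring

abbrev SrSp (F : Type*) [Field F] {t : ℕ} (m n : Fin t → ℕ) :=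
  ∀ i : Fin t, Matrix (Fin (m i)) (Fin (n i)) F

lemma sr_srk_le (C : SrSp F m n) : srk C ≤ ∑ i, n i :=
  Finset.sum_le_sum fun i _ => by simpa using Matrix.rank_le_card_width (C i)

lemma sr_srk_le_maxsrk (E : Submodule F (SrSp F m n)) (C : SrSp F m n) (hC : C ∈ E) :
    srk C ≤ maxsrk E := by
  refine le_csSup ⟨∑ i, n i, ?_⟩ ⟨C, hC, rfl⟩
  rintro _ ⟨C, _, rfl⟩
  exact sr_srk_le C

lemma sr_maxsrk_pi (A : ∀ i : Fin t, Submodule F (Matrix (Fin (m i)) (Fin (n i)) F)) :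
    maxsrk (Submodule.pi Set.univ A) = ∑ i, maxrank (A i) := by
  apply le_antisymm
  · refine csSup_le (s := {w | ∃ C ∈ (Submodule.pi Set.univ A : Submodule F (SrSp F m n)), srk C = w})
      ⟨_, 0, Submodule.zero_mem _, rfl⟩ ?_
    rintro _ ⟨C, hC, rfl⟩
    exact Finset.sum_le_sum fun i _ => sr_rank_le_maxrank _ _ (hC i trivial)
  · choose M hM hr using fun i => sr_exists_maxrank (A i)
    have := sr_srk_le_maxsrk (Submodule.pi Set.univ A) M (fun i _ => hM i)
    simpa [srk, hr] using this

lemma sr_finrank_pi (A : ∀ i : Fin t, Submodule F (Matrix (Fin (m i)) (Fin (n i)) F)) :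
    finrank F (Submodule.pi Set.univ A : Submodule F (SrSp F m n)) = ∑ i, finrank F (A i) := by
  let e : (Submodule.pi Set.univ A : Submodule F (SrSp F m n)) ≃ₗ[F] (∀ i, A i) :=
    { toFun := fun x i => ⟨x.1 i, x.2 i trivial⟩
      map_add' := fun x y => rfl
      map_smul' := fun c x => rfl
      invFun := fun y => ⟨fun i => (y i).1, fun i _ => (y i).2⟩
      left_inv := fun x => rfl
      right_inv := fun x => rfl }
  rw [e.finrank_eq, Module.finrank_pi_fintype]

lemma sr_finrank_sp : finrank F (SrSp F m n) = ∑ i, m i * n i := by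
  rw [Module.finrank_pi_fintype]
  simp [Module.finrank_matrix]

lemma sr_top {p q : ℕ} (h : q ≤ p) : maxrank (⊤ : Submodule F (Matrix (Fin p) (Fin q) F)) = q := by
  apply sr_maxrank_eq
  · intro M _
    simpa using Matrix.rank_le_card_width M
  · refine ⟨((1 : Matrix (Fin p) (Fin p) F).submatrix (Fin.castLE h) id).transpose, trivial, ?_⟩
    rw [Matrix.rank_transpose]
    have : LinearIndependent F ((1 : Matrix (Fin p) (Fin p) F).submatrix (Fin.castLE h) id).row := by
      have h1 : LinearIndependent F (1 : Matrix (Fin p) (Fin p) F).row := by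
        rw [Matrix.linearIndependent_rows_iff_isUnit]; exact isUnit_one
      exact h1.comp _ (Fin.castLE_injective h)
    rw [this.rank_matrix]
    simp

lemma sr_chain {p q : ℕ} (h : q ≤ p) : ∃ A : ℕ → Submodule F (Matrix (Fin p) (Fin q) F),
    Monotone A ∧ (∀ b, IsOptAnticode (A b)) ∧ ∀ b ≤ q, maxrank (A b) = b := by
  have step : ∀ A : {A : Submodule F (Matrix (Fin p) (Fin q) F) // IsOptAnticode A},
      ∃ A' : {A : Submodule F (Matrix (Fin p) (Fin q) F) // IsOptAnticode A},
        A'.1 ≤ A.1 ∧ maxrank A'.1 = maxrank A.1 - 1 := by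
    intro A
    rcases hA : maxrank A.1 with _ | a
    · exact ⟨A, le_rfl, by omega⟩
    · obtain ⟨A', h1, h2, h3, _⟩ := sr_shrink h A.1 A.2 hA
      exact ⟨⟨A', h2⟩, h1, by simpa using h3⟩
  choose g hg1 hg2 using step
  have htop : IsOptAnticode (⊤ : Submodule F (Matrix (Fin p) (Fin q) F)) := by
    unfold IsOptAnticode
    rw [sr_top h, finrank_top, Module.finrank_matrix]
    simp
  let f : ℕ → {A : Submodule F (Matrix (Fin p) (Fin q) F) // IsOptAnticode A} :=
    fun k => g^[k] ⟨⊤, htop⟩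
  have hf : ∀ k, f (k + 1) = g (f k) := fun k => Function.iterate_succ_apply' _ _ _
  have hanti : Antitone fun k => (f k).1 := antitone_nat_of_succ_le fun k => by
    rw [hf]; exact hg1 _
  have hr : ∀ k, maxrank (f k).1 = q - k := by
    intro k
    induction k with
    | zero => simpa [f] using sr_top h
    | succ k ih => rw [hf, hg2, ih]; omega
  refine ⟨fun b => (f (q - b)).1, fun b c hbc => hanti (by omega), fun b => (f (q - b)).2, ?_⟩
  intro b hb
  simp only [hr]
  omega

/-- Partial sums. -/
def srP {t : ℕ} (n : Fin t → ℕ) (k : ℕ) : ℕ := ∑ i ∈ Finset.univ.filter (fun i : Fin t => i.1 < k), n i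

lemma srP_zero : srP n 0 = 0 := by simp [srP]

lemma srP_succ (i : Fin t) : srP n (i.1 + 1) = srP n i.1 + n i := by
  unfold srP
  have : Finset.univ.filter (fun j : Fin t => j.1 < i.1 + 1) =
      insert i (Finset.univ.filter (fun j : Fin t => j.1 < i.1)) := by
    ext j
    simp only [Finset.mem_filter, Finset.mem_univ, true_and, Finset.mem_insert, Fin.ext_iff]
    omega
  rw [this, Finset.sum_insert (by simp), add_comm]

lemma srP_mono : Monotone (srP n) := by
  intro a b hab
  apply Finset.sum_le_sum_of_subset
  intro i
  simp only [Finset.mem_filter, Finset.mem_univ, true_and]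
  omega

lemma srP_t : srP n t = ∑ i, n i := by
  unfold srP
  congr 1
  ext i
  simp

lemma srP_Iio (j : Fin t) : ∑ i ∈ Finset.Iio j, n i = srP n j.1 := by
  unfold srP
  congr 1
  ext i
  simp

/-- Greedy distribution of `h` over blocks. -/
def srB {t : ℕ} (n : Fin t → ℕ) (h : ℕ) (i : Fin t) : ℕ := min (srP n (i.1 + 1)) h - min (srP n i.1) h

lemma srB_le (h : ℕ) (i : Fin t) : srB n h i ≤ n i := by
  have := srP_succ (n := n) i
  unfold srB
  omega

lemma srB_mono {h h' : ℕ} (hh : h ≤ h') (i : Fin t) : srB n h i ≤ srB n h' i := by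
  have := srP_succ (n := n) i
  unfold srB
  omega

lemma srB_sum (h : ℕ) (hh : h ≤ ∑ i, n i) : ∑ i, srB n h i = h := by
  have h1 : ∑ i, srB n h i = ∑ i ∈ Finset.range t, (min (srP n (i + 1)) h - min (srP n i) h) := by
    rw [← Fin.sum_univ_eq_sum_range (fun i => min (srP n (i + 1)) h - min (srP n i) h)]
    rfl
  rw [h1, Finset.sum_range_tsub (f := fun i => min (srP n i) h)]
  · simp only [srP_t, srP_zero]
    omega
  · intro a b hab
    have := srP_mono (n := n) hab
    simp only
    omega

lemma sr_idx (h : ℕ) (h0 : 1 ≤ h) (hh : h ≤ ∑ i, n i) :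
    ∃ j : Fin t, srP n j.1 < h ∧ h ≤ srP n (j.1 + 1) := by
  have hex : ∃ k, h ≤ srP n k := ⟨t, by rw [srP_t]; exact hh⟩
  classical
  have h1 := Nat.find_spec hex
  have h2 := Nat.find_min' hex (m := t) (by rw [srP_t]; exact hh)
  rcases hk : Nat.find hex with _ | k
  · rw [hk, srP_zero] at h1; omega
  · rw [hk] at h1 h2
    have h3 := Nat.find_min hex (m := k) (by omega)
    exact ⟨⟨k, by omega⟩, by simpa using h3, h1⟩

lemma srB_succ_sum (h : ℕ) (h0 : 1 ≤ h) (j : Fin t) (hj : srP n j.1 < h) (hj' : h ≤ srP n (j.1 + 1)) :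
    ∑ i, m i * srB n h i = ∑ i, m i * srB n (h - 1) i + m j := by
  have : ∀ i, m i * srB n h i = m i * srB n (h - 1) i + if i = j then m j else 0 := by
    intro i
    rcases lt_trichotomy i.1 j.1 with hij | hij | hij
    · have h1 := srP_mono (n := n) (show i.1 + 1 ≤ j.1 by omega)
      have : srB n h i = srB n (h - 1) i := by
        have := srP_succ (n := n) i
        unfold srB; omega
      rw [this, if_neg (by rintro rfl; omega), add_zero]
    · have : i = j := Fin.ext hij
      subst this
      have : srB n h i = srB n (h - 1) i + 1 := by
        have := srP_succ (n := n) i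
        unfold srB; omega
      rw [this, if_pos rfl]; ring
    · have h1 := srP_mono (n := n) (show j.1 + 1 ≤ i.1 by omega)
      have : srB n h i = srB n (h - 1) i := by
        have := srP_succ (n := n) i
        unfold srB; omega
      rw [this, if_neg (by rintro rfl; omega), add_zero]
  rw [Finset.sum_congr rfl fun i _ => this i, Finset.sum_add_distrib]
  simp

lemma sr_msrd_dim (E : Submodule F (SrSp F m n)) (hE : IsMSRD E) (h : ℕ) (hh : minDist E = h) :
    finrank F E + ∑ i, m i * srB n (h - 1) i = ∑ i, m i * n i := by
  obtain ⟨j, δ, h1, h2, h3⟩ := hE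
  rw [hh, srP_Iio] at h2
  have h4 : ∀ f : Fin t → ℕ, ∑ i, f i = ∑ i ∈ Finset.Iio j, f i + ∑ i ∈ Finset.Ici j, f i := by
    intro f
    rw [← Finset.sum_union]
    · congr 1
      ext i
      simp [lt_or_ge]
    · rw [Finset.disjoint_left]
      intro i
      simp
  rw [h4 (fun i => m i * n i), h4 (fun i => m i * srB n (h - 1) i), ← h3]
  have h5 : ∑ i ∈ Finset.Iio j, m i * srB n (h - 1) i = ∑ i ∈ Finset.Iio j, m i * n i := by
    apply Finset.sum_congr rfl
    intro i hi
    rw [Finset.mem_Iio, Fin.lt_def] at hi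
    have h1 := srP_mono (n := n) (show i.1 + 1 ≤ j.1 by omega)
    have : srB n (h - 1) i = n i := by
      have := srP_succ (n := n) i
      unfold srB; omega
    rw [this]
  have h6 : ∑ i ∈ Finset.Ici j, m i * srB n (h - 1) i = δ * m j := by
    rw [Finset.sum_eq_single j]
    · have : srB n (h - 1) j = δ := by
        have := srP_succ (n := n) j
        unfold srB; omega
      rw [this, mul_comm]
    · intro i hi hne
      rw [Finset.mem_Ici, Fin.le_def] at hi
      have hne' : i.1 ≠ j.1 := fun h => hne (Fin.ext h)
      have h1 := srP_mono (n := n) (show j.1 + 1 ≤ i.1 by omega)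
      have : srB n (h - 1) i = 0 := by
        have := srP_succ (n := n) i
        have := srP_succ (n := n) j
        unfold srB; omega
      rw [this, mul_zero]
    · intro hj; simp at hj
  rw [h5, h6]
  ring

/-- Standard anticodes. -/
lemma sr_St (hmn : ∀ i, n i ≤ m i) : ∃ St : ℕ → ∀ i : Fin t, Submodule F (Matrix (Fin (m i)) (Fin (n i)) F),
    (∀ h h', h ≤ h' → (Submodule.pi Set.univ (St h) : Submodule F (SrSp F m n)) ≤
      Submodule.pi Set.univ (St h')) ∧ (∀ h i, IsOptAnticode (St h i)) ∧
    (∀ h ≤ ∑ i, n i, maxsrk (Submodule.pi Set.univ (St h)) = h) ∧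
    (∀ h, finrank F (Submodule.pi Set.univ (St h) : Submodule F (SrSp F m n)) =
      ∑ i, m i * srB n h i) := by
  choose A h1 h2 h3 using fun i => sr_chain (F := F) (hmn i)
  refine ⟨fun h i => A i (srB n h i), ?_, fun h i => h2 i _, ?_, ?_⟩
  · intro h h' hh
    exact Submodule.pi_mono fun i _ => h1 i (srB_mono hh i)
  · intro h hh
    rw [sr_maxsrk_pi, Finset.sum_congr rfl fun i _ => h3 i _ (srB_le h i), srB_sum h hh]
  · intro h
    rw [sr_finrank_pi]
    apply Finset.sum_congr rfl
    intro i _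
    have := h2 i (srB n h i)
    unfold IsOptAnticode at this
    rw [this, h3 i _ (srB_le h i)]

lemma sr_wt_le (E : Submodule F (SrSp F m n))
    (A : ∀ i : Fin t, Submodule F (Matrix (Fin (m i)) (Fin (n i)) F))
    (hA : ∀ i, IsOptAnticode (A i)) (hE : E ≤ Submodule.pi Set.univ A) :
    codeWt E ≤ maxsrk (Submodule.pi Set.univ A) :=
  Nat.sInf_le ⟨A, hA, hE, rfl⟩

lemma sr_wt_mem (hmn : ∀ i, n i ≤ m i) (E : Submodule F (SrSp F m n)) :
    ∃ A : ∀ i : Fin t, Submodule F (Matrix (Fin (m i)) (Fin (n i)) F),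
    (∀ i, IsOptAnticode (A i)) ∧ E ≤ Submodule.pi Set.univ A ∧
      maxsrk (Submodule.pi Set.univ A) = codeWt E := by
  refine Nat.sInf_mem (s := {w | ∃ A : ∀ i : Fin t, Submodule F (Matrix (Fin (m i)) (Fin (n i)) F),
    (∀ i, IsOptAnticode (A i)) ∧ E ≤ Submodule.pi Set.univ A ∧
      maxsrk (Submodule.pi Set.univ A) = w}) ⟨_, fun i => ⊤, ?_, ?_, rfl⟩
  · intro i
    unfold IsOptAnticode
    rw [sr_top (hmn i), finrank_top, Module.finrank_matrix]
    simp
  · intro x _ i _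
    trivial

lemma sr_srk_le_wt (hmn : ∀ i, n i ≤ m i) (E : Submodule F (SrSp F m n)) (x : SrSp F m n)
    (hx : x ∈ E) : srk x ≤ codeWt E := by
  obtain ⟨A, _, h2, h3⟩ := sr_wt_mem hmn E
  rw [← h3]
  exact sr_srk_le_maxsrk _ _ (h2 hx)

lemma sr_wt_le_total (hmn : ∀ i, n i ≤ m i) (E : Submodule F (SrSp F m n)) :
    codeWt E ≤ ∑ i, n i := by
  obtain ⟨A, _, h2, h3⟩ := sr_wt_mem hmn E
  rw [← h3, sr_maxsrk_pi]
  exact Finset.sum_le_sum fun i _ => sr_maxrank_le _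

lemma sr_gw_le (C E : Submodule F (SrSp F m n)) (r : ℕ) (h : E ≤ C) (hr : r ≤ finrank F E) :
    gw C r ≤ codeWt E := Nat.sInf_le ⟨E, h, hr, rfl⟩

lemma sr_gw_mem (C : Submodule F (SrSp F m n)) (r : ℕ) (hr : r ≤ finrank F C) :
    ∃ E : Submodule F (SrSp F m n), E ≤ C ∧ r ≤ finrank F E ∧ codeWt E = gw C r :=
  Nat.sInf_mem (s := {w | ∃ E : Submodule F (SrSp F m n), E ≤ C ∧ r ≤ finrank F E ∧ codeWt E = w})
    ⟨_, C, le_rfl, hr, rfl⟩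

lemma sr_minDist_le (E : Submodule F (SrSp F m n)) (x : SrSp F m n) (hx : x ∈ E) (h0 : x ≠ 0) :
    minDist E ≤ srk x := Nat.sInf_le ⟨x, hx, h0, rfl⟩

lemma sr_lemX (hmn : ∀ i, n i ≤ m i)
    (S : ℕ → ∀ i : Fin t, Submodule F (Matrix (Fin (m i)) (Fin (n i)) F))
    (hS1 : ∀ h h', h ≤ h' → (Submodule.pi Set.univ (S h) : Submodule F (SrSp F m n)) ≤
      Submodule.pi Set.univ (S h')) (hS2 : ∀ h i, IsOptAnticode (S h i))
    (hS3 : ∀ h ≤ ∑ i, n i, maxsrk (Submodule.pi Set.univ (S h)) = h)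
    (D : ℕ → Submodule F (SrSp F m n)) {k : ℕ} (v : Fin k → SrSp F m n)
    (hv : LinearIndependent F v) (d : Fin k → ℕ) (hd : Monotone d) (hdT : ∀ r, d r ≤ ∑ i, n i)
    (hv1 : ∀ r, v r ∈ (Submodule.pi Set.univ (S (d r)) : Submodule F (SrSp F m n)))
    (hv2 : ∀ r s, r ≤ s → v s ∈ D (d r))
    (hD : ∀ r, ∀ x ∈ D (d r), x ≠ 0 → d r ≤ srk x) :
    finrank F (Submodule.span F (Set.range v)) = k ∧
    (∀ r : Fin k, gw (Submodule.span F (Set.range v)) (r.1 + 1) = d r) ∧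
    ChainCondition (Submodule.span F (Set.range v)) ∧
    (∀ r : Fin k, greedyWt (Submodule.span F (Set.range v)) (r.1 + 1) = d r) := by
  classical
  set C := Submodule.span F (Set.range v) with hC
  have hCk : finrank F C = k := by rw [hC, finrank_span_eq_card hv, Fintype.card_fin]
  let Dr : ℕ → Submodule F (SrSp F m n) := fun r => Submodule.span F (v '' {s | s.1 < r})
  let Tl : ℕ → Submodule F (SrSp F m n) := fun r => Submodule.span F (v '' {s | r ≤ s.1})
  have hDrC : ∀ r, Dr r ≤ C := fun r => Submodule.span_mono (Set.image_subset_range _ _)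
  have hTlC : ∀ r, Tl r ≤ C := fun r => Submodule.span_mono (Set.image_subset_range _ _)
  have hDrk : Dr k = C := by
    simp only [Dr, hC]
    congr 1
    ext x
    simp
  have hDr0 : Dr 0 = ⊥ := by simp [Dr]
  have hDrmono : Monotone Dr := fun a b hab => Submodule.span_mono
    (Set.image_mono (fun s (hs : s.1 < a) => lt_of_lt_of_le hs hab))
  have hDrf : ∀ r ≤ k, finrank F (Dr r) = r := by
    intro r hr
    have h1 : v '' {s | s.1 < r} = Set.range (v ∘ Fin.castLE hr) := by
      ext x
      constructor
      · rintro ⟨s, hs, rfl⟩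
        exact ⟨⟨s.1, hs⟩, rfl⟩
      · rintro ⟨s, rfl⟩
        exact ⟨Fin.castLE hr s, s.2, rfl⟩
    have h2 : Dr r = Submodule.span F (Set.range (v ∘ Fin.castLE hr)) := congrArg (Submodule.span F) h1
    rw [h2, finrank_span_eq_card (hv.comp _ (Fin.castLE_injective hr)), Fintype.card_fin]
  have hTlf : ∀ r ≤ k, k ≤ finrank F (Tl r) + r := by
    intro r hr
    have h1 : C ≤ Dr r ⊔ Tl r := by
      rw [hC, Submodule.span_le]
      rintro _ ⟨s, rfl⟩
      rcases lt_or_ge s.1 r with h | h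
      · exact Submodule.mem_sup_left (Submodule.subset_span ⟨s, h, rfl⟩)
      · exact Submodule.mem_sup_right (Submodule.subset_span ⟨s, h, rfl⟩)
    have h2 := Submodule.finrank_mono h1
    have h3 := Submodule.finrank_add_le_finrank_add_finrank (Dr r) (Tl r)
    rw [hDrf r hr] at h3
    omega
  have hlow : ∀ (r : Fin k) (E : Submodule F (SrSp F m n)), E ≤ C → r.1 + 1 ≤ finrank F E →
      d r ≤ codeWt E := by
    intro r E hE hr
    have h1 := Submodule.finrank_sup_add_finrank_inf_eq E (Tl r.1)
    have h2 := Submodule.finrank_mono (sup_le hE (hTlC r.1))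
    have h3 := hTlf r.1 r.2.le
    have h4 : E ⊓ Tl r.1 ≠ ⊥ := by
      intro h0
      rw [h0, finrank_bot] at h1
      omega
    obtain ⟨x, hx, hx0⟩ := Submodule.exists_mem_ne_zero_of_ne_bot h4
    have h5 : Tl r.1 ≤ D (d r) := by
      simp only [Tl]
      rw [Submodule.span_le]
      rintro _ ⟨s, hs, rfl⟩
      exact hv2 r s hs
    exact (hD r x (h5 hx.2) hx0).trans (sr_srk_le_wt hmn E x hx.1)
  have hup : ∀ r : Fin k, codeWt (Dr (r.1 + 1)) ≤ d r := by
    intro r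
    rw [← hS3 (d r) (hdT r)]
    apply sr_wt_le _ _ (hS2 _)
    simp only [Dr]
    rw [Submodule.span_le]
    rintro _ ⟨s, hs, rfl⟩
    exact hS1 _ _ (hd (show s ≤ r from Nat.lt_succ_iff.mp hs)) (hv1 s)
  have hgw : ∀ r : Fin k, gw C (r.1 + 1) = d r := by
    intro r
    apply le_antisymm
    · exact (sr_gw_le C _ _ (hDrC (r.1 + 1)) (hDrf _ r.2).ge).trans (hup r)
    · obtain ⟨E, h1, h2, h3⟩ := sr_gw_mem C (r.1 + 1) (by rw [hCk]; exact r.2)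
      rw [← h3]
      exact hlow r E h1 h2
  have hwt : ∀ r : Fin k, codeWt (Dr (r.1 + 1)) = gw C (r.1 + 1) := fun r =>
    le_antisymm ((hup r).trans (hgw r).ge) (sr_gw_le C _ _ (hDrC (r.1 + 1)) (hDrf _ r.2).ge)
  refine ⟨hCk, hgw, ⟨Dr, hDr0, by rw [hCk, hDrk], ?_, ?_⟩, ?_⟩
  · intro r hr
    rw [hCk] at hr
    refine lt_of_le_of_ne (hDrmono (Nat.le_succ r)) ?_
    intro h
    have h1 := hDrf r hr.le
    have h2 := hDrf (r + 1) hr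
    rw [h] at h1
    omega
  · intro r h1 h2
    rw [hCk] at h2
    obtain ⟨r, rfl⟩ : ∃ r', r = r' + 1 := ⟨r - 1, by omega⟩
    exact hwt ⟨r, h2⟩
  · have hgr : ∀ r, r < k → IsGreedy C (r + 1) (Dr (r + 1)) ∧
        ∀ G, IsGreedy C (r + 1) G → codeWt G = gw C (r + 1) := by
      intro r
      induction r with
      | zero =>
        intro hr
        refine ⟨⟨hDrC _, hDrf _ hr, hwt ⟨0, hr⟩⟩, ?_⟩
        rintro G ⟨_, _, h⟩
        exact h
      | succ r ih =>
        intro hr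
        obtain ⟨ih1, ih2⟩ := ih (by omega)
        have e1 := hwt ⟨r + 1, hr⟩
        simp only at e1
        refine ⟨⟨hDrC _, hDrf _ hr, ⟨_, ih1, hDrmono (Nat.le_succ _)⟩, ?_⟩, ?_⟩
        · intro E h1 h2 _
          rw [e1]
          exact sr_gw_le C E _ h1 h2.ge
        · rintro G ⟨h1, h2, _, h3⟩
          apply le_antisymm
          · rw [← e1]
            exact h3 _ (hDrC _) (hDrf _ hr) ⟨_, ih1, hDrmono (Nat.le_succ _)⟩
          · exact sr_gw_le C G _ h1 h2.ge
    intro r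
    obtain ⟨h1, h2⟩ := hgr r.1 r.2
    have h3 : {w | ∃ G, IsGreedy C (r.1 + 1) G ∧ codeWt G = w} = {d r} := by
      ext w
      simp only [Set.mem_ofPred_eq, Set.mem_singleton_iff]
      constructor
      · rintro ⟨G, hG, rfl⟩
        rw [h2 G hG, hgw]
      · rintro rfl
        exact ⟨_, h1, by rw [hwt, hgw]⟩
    unfold greedyWt
    rw [h3, csInf_singleton]

lemma sr_build {V : Type*} [AddCommGroup V] [Module F V] [FiniteDimensional F V]
    (D P : ℕ → Submodule F V) (μ : ℕ → ℕ) (dd T : ℕ)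
    (h1 : ∀ h, dd ≤ h → h ≤ T → D (h + 1) ≤ D h)
    (h2 : ∀ h, dd ≤ h → h ≤ T → D (h + 1) ⊓ P h = ⊥)
    (h3 : ∀ h, dd ≤ h → h ≤ T → finrank F (D h) = finrank F (D (h + 1)) + μ h)
    (h4 : ∀ h, dd ≤ h → h ≤ T → μ h ≤ finrank F (D h ⊓ P h : Submodule F V))
    (h5 : D (T + 1) = ⊥) :
    ∀ j h, dd ≤ h → h + j = T + 1 → ∃ (K : ℕ) (v : Fin K → V) (e : Fin K → ℕ),
      K = finrank F (D h) ∧ LinearIndependent F v ∧ Monotone e ∧ (∀ r, h ≤ e r ∧ e r ≤ T) ∧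
      (∀ r, v r ∈ D (e r)) ∧ (∀ r, v r ∈ P (e r)) ∧
      (∀ h', h ≤ h' → h' ≤ T → μ h' ≤ (List.ofFn e).count h') := by
  intro j
  induction j with
  | zero =>
    intro h _ hT
    refine ⟨0, Fin.elim0, Fin.elim0, ?_, linearIndependent_empty_type, fun a => a.elim0,
      fun a => a.elim0, fun a => a.elim0, fun a => a.elim0, fun h' _ _ => by omega⟩
    rw [show h = T + 1 by omega, h5, finrank_bot]
  | succ j ih =>
    intro h hdd hT
    have hanti : ∀ i, ∀ g, h + 1 ≤ g → g + i = T + 1 → ∀ g', h + 1 ≤ g' → g' ≤ g → D g ≤ D g' := by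
      intro i g hg hgi g' hg' hle
      induction g, hle using Nat.le_induction generalizing i with
      | base => exact le_rfl
      | succ g hle ih' =>
        exact (h1 g (by omega) (by omega)).trans (ih' (i + 1) (by omega) (by omega))
    obtain ⟨K, v, e, hK, hv, he, her, hvD, hvP, hcnt⟩ := ih (h + 1) (by omega) (by omega)
    set W : Submodule F V := D h ⊓ P h with hW
    have hvD' : ∀ r, v r ∈ D (h + 1) := fun r => by
      have := her r
      exact hanti (T + 1 - e r) (e r) this.1 (by omega) (h + 1) le_rfl this.1 (hvD r)
    have hdisj : Disjoint W (D (h + 1)) := by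
      rw [disjoint_iff, eq_bot_iff, ← h2 h hdd (by omega)]
      intro x hx
      exact ⟨hx.2, hx.1.2⟩
    have hμ : finrank F W = μ h := by
      have e1 := Submodule.finrank_sup_add_finrank_inf_eq W (D (h + 1))
      rw [hdisj.eq_bot, finrank_bot] at e1
      have hsup : W ⊔ D (h + 1) ≤ D h := sup_le inf_le_left (h1 h hdd (by omega))
      have e2 := Submodule.finrank_mono hsup
      have e3 := h3 h hdd (by omega)
      have e4 := h4 h hdd (by omega)
      rw [← hW] at e4
      omega
    let b := finBasis F W
    let w : Fin (finrank F W) → V := fun i => (b i).1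
    have hw : LinearIndependent F w := b.linearIndependent.map' W.subtype (Submodule.ker_subtype W)
    have hwW : ∀ i, w i ∈ W := fun i => (b i).2
    refine ⟨finrank F W + K, Fin.append w v, Fin.append (fun _ => h) e, ?_, ?_, ?_, ?_, ?_, ?_, ?_⟩
    · rw [hμ, hK, h3 h hdd (by omega), add_comm]
    · have := (hw.sum_type hv (hdisj.mono (Submodule.span_le.mpr (by rintro _ ⟨i, rfl⟩; exact hwW i))
        (Submodule.span_le.mpr (by rintro _ ⟨i, rfl⟩; exact hvD' i))))
      have heq : Fin.append w v ∘ finSumFinEquiv = Sum.elim w v := by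
        funext x
        rcases x with x | x <;> simp
      rw [← linearIndependent_equiv finSumFinEquiv, heq]
      exact this
    · intro r s
      refine Fin.addCases (fun r => ?_) (fun r => ?_) r <;>
        refine Fin.addCases (fun s => ?_) (fun s => ?_) s
      · simp
      · intro _
        have := her s
        simp; omega
      · intro hrs
        have hrs' := Fin.le_def.mp hrs
        simp only [Fin.val_natAdd, Fin.val_castAdd] at hrs'
        omega
      · intro hrs
        have hrs' := Fin.le_def.mp hrs
        simp only [Fin.val_natAdd] at hrs'
        simp only [Fin.append_right]
        exact he (Fin.le_def.mpr (by omega))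
    · intro r
      refine Fin.addCases (fun r => ?_) (fun r => ?_) r
      · simp; omega
      · have := her r
        simp; omega
    · intro r
      refine Fin.addCases (fun r => ?_) (fun r => ?_) r
      · simp only [Fin.append_left]; exact (hwW r).1
      · simp only [Fin.append_right]; exact hvD r
    · intro r
      refine Fin.addCases (fun r => ?_) (fun r => ?_) r
      · simp only [Fin.append_left]; exact (hwW r).2
      · simp only [Fin.append_right]; exact hvP r
    · intro h' hh hh'
      rw [List.ofFn_fin_append, List.count_append]
      rcases Nat.eq_or_lt_of_le hh with rfl | hlt
      · rw [List.ofFn_const, List.count_replicate_self, hμ]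
        omega
      · exact (hcnt h' hlt hh').trans (Nat.le_add_left _ _)

lemma sr_count_le {k c h : ℕ} (d : Fin k → ℕ)
    (hc : ∀ r r' : Fin k, d r = h → d r' = h → r.1 + c ≤ r'.1 → False) :
    (List.ofFn d).count h ≤ c := by
  classical
  have h1 : (List.ofFn d).count h = (Finset.univ.filter (fun r => d r = h)).card := by
    clear hc
    induction k with
    | zero => simp
    | succ k ih =>
      rw [List.ofFn_succ, List.count_cons, ih (fun i => d i.succ), Fin.card_filter_univ_succ']
      simp [add_comm]
  rw [h1]
  by_cases hne : (Finset.univ.filter (fun r => d r = h)).Nonempty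
  · obtain ⟨r, hr, hmin⟩ := Finset.exists_min_image _ (fun r : Fin k => r.1) hne
    have hsub : (Finset.univ.filter (fun r => d r = h)).image (fun r : Fin k => r.1) ⊆
        Finset.Ico r.1 (r.1 + c) := by
      intro x hx
      obtain ⟨r', hr', rfl⟩ := Finset.mem_image.mp hx
      have := hmin r' hr'
      rw [Finset.mem_filter] at hr hr'
      rw [Finset.mem_Ico]
      refine ⟨this, ?_⟩
      by_contra hlt
      exact hc r r' hr.2 hr'.2 (by omega)
    have := Finset.card_le_card hsub
    rw [Finset.card_image_of_injective _ Fin.val_injective, Nat.card_Ico] at this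
    omega
  · rw [Finset.not_nonempty_iff_eq_empty] at hne
    rw [hne]; simp

lemma sr_subseq {k K : ℕ} (d : Fin k → ℕ) (e : Fin K → ℕ) (hd : Monotone d) (he : Monotone e)
    (h : ∀ x ∈ List.ofFn d, (List.ofFn d).count x ≤ (List.ofFn e).count x) : IsSubseq d e := by
  have h1 : (List.ofFn d).Subperm (List.ofFn e) := List.subperm_ext_iff.mpr h
  have h2 := List.sublist_of_subperm_of_pairwise h1 hd.sortedLE_ofFn.pairwise
    he.sortedLE_ofFn.pairwise
  obtain ⟨f, hf⟩ := List.sublist_iff_exists_fin_orderEmbedding_get_eq.mp h2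
  refine ⟨fun r => Fin.cast List.length_ofFn (f (Fin.cast List.length_ofFn.symm r)), ?_, ?_⟩
  · intro a b hab
    have := f.strictMono (show Fin.cast (List.length_ofFn (f := d)).symm a < Fin.cast List.length_ofFn.symm b from hab)
    exact this
  · intro r
    have := hf (Fin.cast List.length_ofFn.symm r)
    simp only [List.get_ofFn] at this
    exact this

lemma sr_down (hm_mono : ∀ i j : Fin t, i ≤ j → m j ≤ m i) (hmn : ∀ i, n i ≤ m i)
    (E : Submodule F (SrSp F m n)) (h : ℕ) (h0 : 1 ≤ h) (hE : codeWt E = h) (j : Fin t)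
    (hj : srP n j.1 < h) :
    ∃ E' ≤ E, finrank F E ≤ finrank F E' + m j ∧ codeWt E' < h := by
  classical
  obtain ⟨A, hA1, hA2, hA3⟩ := sr_wt_mem hmn E
  rw [hE, sr_maxsrk_pi] at hA3
  have hne : (Finset.univ.filter fun i => 0 < maxrank (A i)).Nonempty := by
    by_contra hne
    rw [Finset.not_nonempty_iff_eq_empty, Finset.filter_eq_empty_iff] at hne
    have : ∑ i, maxrank (A i) = 0 := Finset.sum_eq_zero fun i hi => by
      have := hne hi
      omega
    omega
  obtain ⟨i, hi, hmax⟩ := Finset.exists_max_image _ (fun i => i) hne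
  rw [Finset.mem_filter] at hi
  have hle : h ≤ srP n (i.1 + 1) := by
    rw [← hA3]
    unfold srP
    rw [Finset.sum_filter]
    apply Finset.sum_le_sum
    intro l _
    split_ifs with hl
    · exact sr_maxrank_le _
    · by_contra hpos
      have := hmax l (by rw [Finset.mem_filter]; exact ⟨Finset.mem_univ _, by omega⟩)
      rw [Fin.le_def] at this
      omega
  have hji : j ≤ i := by
    by_contra hlt
    rw [not_le, Fin.lt_def] at hlt
    have := srP_mono (n := n) (show i.1 + 1 ≤ j.1 by omega)
    omega
  obtain ⟨a, ha⟩ : ∃ a, maxrank (A i) = a + 1 := ⟨maxrank (A i) - 1, by omega⟩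
  obtain ⟨B, hB1, hB2, hB3, hB4⟩ := sr_shrink (hmn i) (A i) (hA1 i) ha
  let A' := Function.update A i B
  have hAi : A' i = B := Function.update_self _ _ _
  have hAl : ∀ l, l ≠ i → A' l = A l := fun l hl => Function.update_of_ne hl _ _
  have hA' : ∀ l, IsOptAnticode (A' l) := by
    intro l
    by_cases hl : l = i
    · subst hl; rw [hAi]; exact hB2
    · rw [hAl l hl]; exact hA1 l
  have hAle : ∀ l, A' l ≤ A l := by
    intro l
    by_cases hl : l = i
    · subst hl; rw [hAi]; exact hB1
    · rw [hAl l hl]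
  have hple : (Submodule.pi Set.univ A' : Submodule F (SrSp F m n)) ≤ Submodule.pi Set.univ A :=
    Submodule.pi_mono fun l _ => hAle l
  have hs1 : ∑ l, maxrank (A l) = ∑ l, maxrank (A' l) + 1 := by
    rw [← Finset.add_sum_erase _ _ (Finset.mem_univ i), ← Finset.add_sum_erase _ (fun l => maxrank (A' l)) (Finset.mem_univ i),
      hAi, hB3, ha, Finset.sum_congr rfl fun l hl => by rw [← hAl l (Finset.ne_of_mem_erase hl)]]
    ring
  have hs2 : ∑ l, finrank F (A l) = ∑ l, finrank F (A' l) + m i := by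
    rw [← Finset.add_sum_erase _ _ (Finset.mem_univ i), ← Finset.add_sum_erase _ (fun l => finrank F (A' l)) (Finset.mem_univ i),
      hAi, hB4, Finset.sum_congr rfl fun l hl => by rw [← hAl l (Finset.ne_of_mem_erase hl)]]
    ring
  refine ⟨E ⊓ Submodule.pi Set.univ A', inf_le_left, ?_, ?_⟩
  · have e1 := Submodule.finrank_sup_add_finrank_inf_eq E (Submodule.pi Set.univ A')
    have e2 := Submodule.finrank_mono (sup_le hA2 hple)
    rw [sr_finrank_pi] at e1 e2
    have := hm_mono j i hji
    omega
  · have e1 := sr_wt_le (E ⊓ Submodule.pi Set.univ A') A' hA' inf_le_right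
    rw [sr_maxsrk_pi] at e1
    omega

/-- Main construction data. -/
lemma sr_main (hm_mono : ∀ i j : Fin t, i ≤ j → m j ≤ m i)
    (hmn : ∀ i, n i ≤ m i)
    (𝒟 : Submodule F (SrSp F m n))
    (hMSRD : IsMSRD 𝒟) (dd : ℕ) (hdd : minDist 𝒟 = dd)
    (Dc : ℕ → Submodule F (SrSp F m n))
    (hDc0 : Dc dd = 𝒟)
    (hDc_chain : ∀ h, dd ≤ h → h < ∑ i, n i → Dc (h + 1) ≤ Dc h)
    (hDc_MSRD : ∀ h, dd ≤ h → h ≤ ∑ i, n i → IsMSRD (Dc h) ∧ minDist (Dc h) = h) :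
    (∀ (k : ℕ) (d : Fin k → ℕ),
      IsSubseq d (fun r : Fin (Module.finrank F 𝒟) => gw 𝒟 (r.1 + 1)) →
      ∃ 𝒞 : Submodule F (SrSp F m n),
        𝒞 ≤ 𝒟 ∧ Module.finrank F 𝒞 = k ∧ (∀ r : Fin k, gw 𝒞 (r.1 + 1) = d r) ∧
        ChainCondition 𝒞 ∧ ∀ r : Fin k, greedyWt 𝒞 (r.1 + 1) = d r) ∧
    (∀ (k : ℕ) (d : Fin k → ℕ), Monotone d → ∀ 𝒞 : Submodule F (SrSp F m n), 𝒞 ≤ 𝒟 →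
      finrank F 𝒞 = k → (∀ r : Fin k, gw 𝒞 (r.1 + 1) = d r) →
      IsSubseq d (fun r : Fin (Module.finrank F 𝒟) => gw 𝒟 (r.1 + 1))) := by
  classical
  obtain ⟨S, hS1, hS2, hS3, hS4⟩ := sr_St (F := F) hmn
  set T := ∑ i, n i with hT
  have hdd1 : 1 ≤ dd ∧ dd ≤ T := by
    obtain ⟨j, δ, h1, h2, _⟩ := hMSRD
    rw [hdd, srP_Iio] at h2
    have h3 := srP_succ (n := n) j
    have h4 := srP_mono (n := n) (show j.1 + 1 ≤ t from j.2)
    rw [srP_t] at h4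
    omega
  set M := ∑ i, m i * n i with hM
  set f : ℕ → ℕ := fun h => ∑ i, m i * srB n h i with hf
  let D : ℕ → Submodule F (SrSp F m n) := fun h => if h ≤ T then Dc h else ⊥
  have hDle : ∀ h, h ≤ T → D h = Dc h := fun h hh => if_pos hh
  have hDgt : ∀ h, ¬ h ≤ T → D h = ⊥ := fun h hh => if_neg hh
  let P : ℕ → Submodule F (SrSp F m n) := fun h => Submodule.pi Set.univ (S h)
  have hfmono : ∀ h, f (h - 1) ≤ f h := fun h => Finset.sum_le_sum fun i _ =>
    Nat.mul_le_mul_left _ (srB_mono (Nat.sub_le h 1) i)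
  have hfT : f T = M := by
    apply Finset.sum_congr rfl
    intro i _
    have h1 := srP_succ (n := n) i
    have h4 := srP_mono (n := n) (show i.1 + 1 ≤ t from i.2)
    rw [srP_t] at h4
    have : srB n T i = n i := by unfold srB; omega
    rw [this]
  have hdim : ∀ h, dd ≤ h → h ≤ T + 1 → finrank F (D h) + f (h - 1) = M := by
    intro h h1 h2
    by_cases hh : h ≤ T
    · rw [hDle h hh]
      exact sr_msrd_dim (Dc h) (hDc_MSRD h h1 hh).1 h (hDc_MSRD h h1 hh).2
    · rw [hDgt h hh, finrank_bot, show h - 1 = T by omega, hfT, zero_add]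
  have hdist : ∀ h, dd ≤ h → ∀ x ∈ D h, x ≠ 0 → h ≤ srk x := by
    intro h h1 x hx hx0
    by_cases hh : h ≤ T
    · rw [hDle h hh] at hx
      have := sr_minDist_le (Dc h) x hx hx0
      rwa [(hDc_MSRD h h1 hh).2] at this
    · rw [hDgt h hh] at hx
      exact absurd ((Submodule.mem_bot F).mp hx) hx0
  have hchain : ∀ h, dd ≤ h → h ≤ T → D (h + 1) ≤ D h := by
    intro h h1 h2
    by_cases hh : h + 1 ≤ T
    · rw [hDle _ hh, hDle _ h2]
      exact hDc_chain h h1 hh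
    · rw [hDgt _ hh]; exact bot_le
  have hanti : ∀ a b, dd ≤ a → a ≤ b → D b ≤ D a := by
    intro a b ha hab
    induction b, hab using Nat.le_induction with
    | base => exact le_rfl
    | succ b hab ih =>
      by_cases hb : b ≤ T
      · exact (hchain b (by omega) hb).trans ih
      · rw [hDgt (b + 1) (by omega)]; exact bot_le
  obtain ⟨K, v, e, hK, hv, he, her, hvD, hvP, hcnt⟩ := sr_build D P (fun h => f h - f (h - 1)) dd T
    hchain (by
      intro h h1 h2
      rw [eq_bot_iff]
      intro x hx
      rw [Submodule.mem_bot]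
      by_contra hx0
      have e1 := hdist (h + 1) (by omega) x hx.1 hx0
      have e2 := sr_srk_le_maxsrk _ x hx.2
      rw [hS3 h h2] at e2
      omega) (by
      intro h h1 h2
      have e1 := hdim h h1 (by omega)
      have e2 := hdim (h + 1) (by omega) (by omega)
      have e3 := hfmono h
      simp only [Nat.add_sub_cancel] at e2 ⊢
      omega) (by
      intro h h1 h2
      have e1 := hdim h h1 (by omega)
      have e2 := Submodule.finrank_sup_add_finrank_inf_eq (D h) (P h)
      have e3 : finrank F (P h) = f h := hS4 h
      have e4 := Submodule.finrank_le (D h ⊔ P h)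
      rw [sr_finrank_sp] at e4
      omega) (hDgt _ (by omega)) (T + 1 - dd) dd le_rfl (by omega)
  have hD0 : D dd = 𝒟 := by rw [hDle _ hdd1.2, hDc0]
  rw [hD0] at hK
  subst hK
  have hX : ∀ (k : ℕ) (φ : Fin k → Fin (finrank F 𝒟)), StrictMono φ →
      finrank F (Submodule.span F (Set.range (v ∘ φ))) = k ∧
      (∀ r : Fin k, gw (Submodule.span F (Set.range (v ∘ φ))) (r.1 + 1) = e (φ r)) ∧
      ChainCondition (Submodule.span F (Set.range (v ∘ φ))) ∧
      (∀ r : Fin k, greedyWt (Submodule.span F (Set.range (v ∘ φ))) (r.1 + 1) = e (φ r)) := by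
    intro k φ hφ
    exact sr_lemX hmn S hS1 hS2 hS3 D (v ∘ φ) (hv.comp _ hφ.injective) (e ∘ φ) (he.comp hφ.monotone)
      (fun r => (her _).2) (fun r => hvP _)
      (fun r s hrs => hanti _ _ (her _).1 (he (hφ.monotone hrs)) (hvD _))
      (fun r x hx hx0 => hdist _ (her _).1 x hx hx0)
  have hspan : ∀ (k : ℕ) (φ : Fin k → Fin (finrank F 𝒟)),
      Submodule.span F (Set.range (v ∘ φ)) ≤ 𝒟 := by
    intro k φ
    rw [Submodule.span_le]
    rintro _ ⟨r, rfl⟩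
    exact hD0.le (hanti _ _ le_rfl (her _).1 (hvD _))
  have hge : (fun r : Fin (Module.finrank F 𝒟) => gw 𝒟 (r.1 + 1)) = e := by
    obtain ⟨h1, h2, _⟩ := hX _ id strictMono_id
    have h3 := Submodule.eq_of_le_of_finrank_eq (hspan _ id) h1
    rw [h3] at h2
    funext r
    exact h2 r
  rw [hge]
  constructor
  · rintro k d ⟨φ, hφ, hd⟩
    obtain ⟨h1, h2, h3, h4⟩ := hX k φ hφ
    exact ⟨_, hspan k φ, h1, fun r => by rw [h2, hd], h3, fun r => by rw [h4, hd]⟩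
  · intro k d hd C hC hCk hgw
    apply sr_subseq d e hd he
    have hrange : ∀ r, dd ≤ d r ∧ d r ≤ T := by
      intro r
      obtain ⟨E, h1, h2, h3⟩ := sr_gw_mem C (r.1 + 1) (by rw [hCk]; exact r.2)
      rw [← hgw r, ← h3]
      refine ⟨?_, sr_wt_le_total hmn E⟩
      have hne : E ≠ ⊥ := by
        rintro rfl
        rw [finrank_bot] at h2
        omega
      obtain ⟨x, hx, hx0⟩ := Submodule.exists_mem_ne_zero_of_ne_bot hne
      exact (hdist dd le_rfl x (by rw [hD0]; exact hC (h1 hx)) hx0).trans (sr_srk_le_wt hmn E x hx)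
    intro h hh
    obtain ⟨r0, rfl⟩ := (List.mem_ofFn' _ _).mp hh
    obtain ⟨g1, g2⟩ := hrange r0
    set h := d r0 with hh0
    refine le_trans ?_ (hcnt h g1 g2)
    apply sr_count_le
    intro r r' hr hr' hrr
    obtain ⟨j, hj1, hj2⟩ := sr_idx (n := n) h (by omega) g2
    have e1 : f h = f (h - 1) + m j := srB_succ_sum h (by omega) j hj1 hj2
    obtain ⟨E, h1, h2, h3⟩ := sr_gw_mem C (r'.1 + 1) (by rw [hCk]; exact r'.2)
    rw [hgw r', hr'] at h3
    obtain ⟨E', q1, q2, q3⟩ := sr_down hm_mono hmn E h (by omega) h3 j hj1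
    have e2 := sr_gw_le C E' (r.1 + 1) (q1.trans h1) (by omega)
    rw [hgw r, hr] at e2
    omega

/-- Let `𝒟 ⊆ 𝕄` be an MSRD code of minimum distance `dd`, contained in a chain of MSRD codes
`𝒟 = 𝒟_dd ⊇ 𝒟_{dd+1} ⊇ ⋯ ⊇ 𝒟_n` with `d(𝒟_h) = h`. A sequence of positive integers
`d_1 ≤ ⋯ ≤ d_k` is the sequence of generalized sum-rank weights of a subcode `𝒞 ⊆ 𝒟` iff
`k ≤ dim 𝒟` and it is a subsequence of the sequence of generalized weights of `𝒟`; moreover,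
in that case `𝒞` may be chosen satisfying the chain condition, hence with `g_r(𝒞) = d_r`. -/
theorem gw_subcode_of_MSRD_characterization (ht : 0 < t)
    (hm_mono : ∀ i j : Fin t, i ≤ j → m j ≤ m i)
    (hn_pos : ∀ i, 0 < n i) (hmn : ∀ i, n i ≤ m i)
    (𝒟 : Submodule F (∀ i : Fin t, Matrix (Fin (m i)) (Fin (n i)) F))
    (hMSRD : IsMSRD 𝒟) (dd : ℕ) (hdd : minDist 𝒟 = dd)
    (Dc : ℕ → Submodule F (∀ i : Fin t, Matrix (Fin (m i)) (Fin (n i)) F))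
    (hDc0 : Dc dd = 𝒟)
    (hDc_chain : ∀ h, dd ≤ h → h < ∑ i, n i → Dc (h + 1) ≤ Dc h)
    (hDc_MSRD : ∀ h, dd ≤ h → h ≤ ∑ i, n i → IsMSRD (Dc h) ∧ minDist (Dc h) = h)
    (k : ℕ) (d : Fin k → ℕ) (hmono : Monotone d) (hpos : ∀ r, 1 ≤ d r) :
    ((∃ 𝒞 : Submodule F (∀ i : Fin t, Matrix (Fin (m i)) (Fin (n i)) F),
        𝒞 ≤ 𝒟 ∧ Module.finrank F 𝒞 = k ∧ ∀ r : Fin k, gw 𝒞 (r.1 + 1) = d r) ↔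
      (k ≤ Module.finrank F 𝒟 ∧
        IsSubseq d (fun r : Fin (Module.finrank F 𝒟) => gw 𝒟 (r.1 + 1)))) ∧
    (k ≤ Module.finrank F 𝒟 →
      IsSubseq d (fun r : Fin (Module.finrank F 𝒟) => gw 𝒟 (r.1 + 1)) →
      ∃ 𝒞 : Submodule F (∀ i : Fin t, Matrix (Fin (m i)) (Fin (n i)) F),
        𝒞 ≤ 𝒟 ∧ Module.finrank F 𝒞 = k ∧ (∀ r : Fin k, gw 𝒞 (r.1 + 1) = d r) ∧
        ChainCondition 𝒞 ∧ ∀ r : Fin k, greedyWt 𝒞 (r.1 + 1) = d r) := by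
  obtain ⟨h1, h2⟩ := sr_main hm_mono hmn 𝒟 hMSRD dd hdd Dc hDc0 hDc_chain hDc_MSRD
  refine ⟨⟨?_, ?_⟩, fun _ h => h1 k d h⟩
  · rintro ⟨C, hC, hCk, hgw⟩
    exact ⟨hCk ▸ Submodule.finrank_mono hC, h2 k d hmono C hC hCk hgw⟩
  · rintro ⟨_, h⟩
    obtain ⟨C, q1, q2, q3, _⟩ := h1 k d h
    exact ⟨C, q1, q2, q3⟩
end

section
/- Assume there exists a chain of MSRD codes 𝕄 = 𝒟_1 ⊇ 𝒟_2 ⊇ ... ⊇ 𝒟_n with d(𝒟_h) = h for all h ∈ [n]. Then a sequence of positive integers d_1, ..., d_k is the sequence of generalized sum-rank weights of some code 𝒞 ⊆ 𝕄 if and only if it is a non-decreasing sequence of elements of [n] in which, for every i ∈ [t] and j ∈ [n_i], the integer n_1 + ... + n_{i−1} + j appears at most m_i times; moreover, in this case 𝒞 may be chosen so that it satisfies the chain condition, and hence so that g_r(𝒞) = d_r for all r ∈ [k]. -/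
open Module

variable {F : Type*} [Field F] [Fintype F] {t : ℕ} {m n : Fin t → ℕ}

set_option linter.unusedSectionVars false

section Abstract

universe u
variable {K : Type u} [Field K]

noncomputable def frk {ι : Type} {Y : Type u} [AddCommGroup Y] [Module K Y]
    (A : ι → Y) : ℕ := finrank K (Submodule.span K (Set.range A))

theorem finrank_pi_submodule {ι : Type} [Fintype ι] {Y : ι → Type u} [∀ i, AddCommGroup (Y i)]
    [∀ i, Module K (Y i)] [∀ i, FiniteDimensional K (Y i)] (V : ∀ i, Submodule K (Y i)) :
    finrank K (Submodule.pi Set.univ V) = ∑ i, finrank K (V i) := by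
  let e : (Submodule.pi Set.univ V) ≃ₗ[K] (∀ i, V i) :=
    { toFun := fun x i => ⟨x.1 i, x.2 i (Set.mem_univ i)⟩
      invFun := fun y => ⟨fun i => (y i).1, fun i _ => (y i).2⟩
      map_add' := fun _ _ => rfl
      map_smul' := fun _ _ => rfl
      left_inv := fun _ => rfl
      right_inv := fun _ => rfl }
  rw [e.finrank_eq, Module.finrank_pi_fintype]

theorem finrank_map_add_ker {X Y : Type u} [AddCommGroup X] [Module K X] [AddCommGroup Y]
    [Module K Y] [FiniteDimensional K X] (f : X →ₗ[K] Y) (S : Submodule K X) :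
    finrank K (S.map f) + finrank K (S ⊓ LinearMap.ker f : Submodule K X) = finrank K S := by
  have h := LinearMap.finrank_range_add_finrank_ker (f.domRestrict S)
  rw [LinearMap.range_domRestrict] at h
  rw [← h]
  congr 1
  rw [LinearMap.ker_domRestrict, ← LinearMap.ker_domRestrict]
  have : (S ⊓ LinearMap.ker f) = (LinearMap.ker (f.domRestrict S)).map S.subtype := by
    ext x
    simp [Submodule.mem_map]
    tauto
  rw [this]
  symm
  exact (LinearMap.finrank_range_of_inj (f := S.subtype ∘ₗ (LinearMap.ker (f.domRestrict S)).subtype)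
    ((Submodule.subtype_injective S).comp (Submodule.subtype_injective _))).symm.trans
    (by rw [LinearMap.range_comp, Submodule.range_subtype])

/-- the space of row vectors `v` such that the matrix with `i`-th row `v` and zeros
elsewhere is in `𝒜`. -/
def rowSp {ι : Type} [DecidableEq ι] {Y : Type u} [AddCommGroup Y] [Module K Y]
    (𝒜 : Submodule K (ι → Y)) (i : ι) : Submodule K Y :=
  𝒜.comap (LinearMap.single K (fun _ => Y) i)

variable {ι : Type} [Fintype ι] [DecidableEq ι] {Y : Type u} [AddCommGroup Y] [Module K Y]
  [FiniteDimensional K Y]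

theorem mem_rowSp (𝒜 : Submodule K (ι → Y)) (i : ι) (v : Y) :
    v ∈ rowSp 𝒜 i ↔ Pi.single i v ∈ 𝒜 := by
  simp [rowSp]

theorem pi_rowSp_le (𝒜 : Submodule K (ι → Y)) :
    Submodule.pi Set.univ (rowSp 𝒜) ≤ 𝒜 := by
  intro x hx
  rw [← Finset.univ_sum_single x]
  refine Submodule.sum_mem _ fun i _ => ?_
  exact (mem_rowSp _ _ _).1 (hx i (Set.mem_univ i))

theorem greedy (V : ι → Submodule K Y) (u : ℕ) (hV : ∀ i, u ≤ finrank K (V i))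
    (S₀ : Submodule K Y) (s : Finset ι) (hs : finrank K S₀ + s.card ≤ u) :
    ∃ A : ι → Y, (∀ i, A i ∈ V i) ∧
      finrank K S₀ + s.card ≤ finrank K (S₀ ⊔ Submodule.span K (A '' s) : Submodule K Y) := by
  induction s using Finset.induction_on with
  | empty => exact ⟨0, fun i => zero_mem _, by
      simpa using Submodule.finrank_mono (le_sup_left (a := S₀))⟩
  | insert i s hi ih =>
    rw [Finset.card_insert_of_notMem hi] at hs ⊢
    obtain ⟨A, hA, hr⟩ := ih (by omega)
    by_cases hle : V i ≤ (S₀ ⊔ Submodule.span K (A '' s) : Submodule K Y)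
    · refine ⟨A, hA, ?_⟩
      have h1 := Submodule.finrank_mono hle
      have h2 := hV i
      have h3 : (S₀ ⊔ Submodule.span K (A '' s) : Submodule K Y) ≤
          S₀ ⊔ Submodule.span K (A '' (insert i s : Finset ι)) := by
        refine sup_le_sup_left (Submodule.span_mono (Set.image_mono ?_)) _
        simp
      have := Submodule.finrank_mono h3
      omega
    · obtain ⟨v, hv, hvn⟩ := SetLike.not_le_iff_exists.1 hle
      refine ⟨Function.update A i v, ?_, ?_⟩
      · intro j
        by_cases hj : j = i
        · subst hj; simpa using hv
        · simpa [hj] using hA j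
      · have h3 : (S₀ ⊔ Submodule.span K (A '' s)) ⊔ Submodule.span K {v} ≤
          S₀ ⊔ Submodule.span K (Function.update A i v '' (insert i s : Finset ι)) := by
          rw [sup_assoc, ← Submodule.span_union]
          refine sup_le_sup_left (Submodule.span_mono ?_) _
          rintro y (⟨j, hj, rfl⟩ | rfl)
          · refine ⟨j, by simp at hj; simp [hj], ?_⟩
            have : j ≠ i := by rintro rfl; exact hi hj
            simp [this]
          · exact ⟨i, by simp, by simp⟩
        have := Submodule.finrank_mono h3
        rw [Submodule.finrank_sup_span_singleton hvn] at this
        omega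

/-- restriction of rows -/
def resRow (i : ι) : (ι → Y) →ₗ[K] ({j : ι // j ≠ i} → Y) :=
  LinearMap.funLeft K Y (fun j : {j : ι // j ≠ i} => (j : ι))

theorem resRow_apply (i : ι) (A : ι → Y) (j : {j : ι // j ≠ i}) :
    resRow (K := K) i A j = A j := rfl

theorem card_ne (i : ι) : Fintype.card {j : ι // j ≠ i} = Fintype.card ι - 1 := by
  simp [Fintype.card_subtype_compl]

theorem eq_single_of_res (i : ι) (A : ι → Y) (h : resRow (K := K) i A = 0) :
    A = Pi.single i (A i) := by
  funext j
  by_cases hj : j = i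
  · subst hj; simp
  · have := congrFun h ⟨j, hj⟩
    rw [resRow_apply] at this
    simpa [hj] using this

theorem frk_res_le (i : ι) (A : ι → Y) : frk (K := K) (resRow (K := K) i A) ≤ frk (K := K) A := by
  refine Submodule.finrank_mono (Submodule.span_mono ?_)
  rintro _ ⟨j, rfl⟩
  exact ⟨j, rfl⟩

theorem inf_ker_res (𝒜 : Submodule K (ι → Y)) (i : ι) :
    finrank K (𝒜 ⊓ LinearMap.ker (resRow (K := K) (Y := Y) i) : Submodule K (ι → Y)) ≤
      finrank K (rowSp 𝒜 i) := by
  have : 𝒜 ⊓ LinearMap.ker (resRow (K := K) (Y := Y) i) ≤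
      (rowSp 𝒜 i).map (LinearMap.single K (fun _ => Y) i) := by
    rintro A ⟨hA, hk⟩
    have h := eq_single_of_res i A hk
    refine ⟨A i, ?_, ?_⟩
    · rw [SetLike.mem_coe, mem_rowSp, ← h]; exact hA
    · simpa using h.symm
  exact (Submodule.finrank_mono this).trans (Submodule.finrank_map_le _ _)

theorem finrank_res_of_bot (𝒜 : Submodule K (ι → Y)) (i : ι) (h : rowSp 𝒜 i = ⊥) :
    finrank K (𝒜.map (resRow (K := K) i)) = finrank K 𝒜 := by
  have h1 := finrank_map_add_ker (resRow (K := K) (Y := Y) i) 𝒜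
  have h2 := inf_ker_res 𝒜 i
  rw [h, finrank_bot] at h2
  omega

/-- corner map -/
def corner (i : ι) (f : Y) : (ι → Y) →ₗ[K] ({j : ι // j ≠ i} → (Y ⧸ Submodule.span K {f})) :=
  (LinearMap.compLeft (Submodule.mkQ (Submodule.span K {f})) _) ∘ₗ resRow i

theorem frk_corner {u : ℕ} (𝒜 : Submodule K (ι → Y)) (hu : ∀ A ∈ 𝒜, frk (K := K) A ≤ u)
    (i : ι) (f : Y) (hf : f ∈ rowSp 𝒜 i) (hf0 : f ≠ 0) (A : ι → Y) (hA : A ∈ 𝒜) :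
    frk (K := K) (corner (K := K) i f A) + 1 ≤ u := by
  set S : Submodule K Y := Submodule.span K (Set.range (resRow (K := K) i A)) with hS
  have hcor : Submodule.span K (Set.range (corner (K := K) i f A)) =
      S.map (Submodule.mkQ (Submodule.span K {f})) := by
    rw [hS, Submodule.map_span, ← Set.range_comp]
    rfl
  have hdim := finrank_map_add_ker (Submodule.mkQ (Submodule.span K {f})) S
  rw [Submodule.ker_mkQ] at hdim
  unfold frk
  rw [hcor]
  have hSle : ∀ c : K, S ≤ Submodule.span K (Set.range (A + c • (Pi.single i f : ι → Y))) := by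
    intro c
    refine Submodule.span_le.2 ?_
    rintro _ ⟨⟨j, hj⟩, rfl⟩
    refine Submodule.subset_span ⟨j, ?_⟩
    simp [hj, resRow_apply]
  have hmem : ∀ c : K, A + c • (Pi.single i f : ι → Y) ∈ 𝒜 := fun c =>
    add_mem hA (Submodule.smul_mem _ _ ((mem_rowSp _ _ _).1 hf))
  by_cases hfS : f ∈ S
  · have : Submodule.span K {f} ≤ S ⊓ Submodule.span K {f} :=
      le_inf ((Submodule.span_singleton_le_iff_mem _ _).2 hfS) le_rfl
    have h1 := Submodule.finrank_mono this
    rw [finrank_span_singleton hf0] at h1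
    have h2 := Submodule.finrank_mono (hSle 0)
    have h3 := hu _ (hmem 0)
    unfold frk at h3
    omega
  · have hex : ∃ c : K, (A + c • (Pi.single i f : ι → Y)) i ∉ S := by
      by_contra hcon
      push Not at hcon
      have h0 := hcon 0
      have h1 := hcon 1
      apply hfS
      have := sub_mem h1 h0
      simpa using this
    obtain ⟨c, hc⟩ := hex
    have hle : S ⊔ Submodule.span K {(A + c • (Pi.single i f : ι → Y)) i} ≤
        Submodule.span K (Set.range (A + c • (Pi.single i f : ι → Y))) := by
      refine sup_le (hSle c) ?_
      rw [Submodule.span_singleton_le_iff_mem]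
      exact Submodule.subset_span ⟨i, rfl⟩
    have h1 := Submodule.finrank_mono hle
    rw [Submodule.finrank_sup_span_singleton hc] at h1
    have h3 := hu _ (hmem c)
    unfold frk at h3
    omega

variable (K) in
def BoundBelow (N : ℕ) : Prop :=
  ∀ (ι : Type) [Fintype ι] [DecidableEq ι] (Y : Type u) [AddCommGroup Y] [Module K Y]
    [FiniteDimensional K Y], Fintype.card ι + finrank K Y < N →
    ∀ (u : ℕ) (𝒜 : Submodule K (ι → Y)), (∀ A ∈ 𝒜, frk (K := K) A ≤ u) →
      finrank K 𝒜 ≤ max (Fintype.card ι) (finrank K Y) * u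

theorem bound_of_ne_bot (hB : BoundBelow K (Fintype.card ι + finrank K Y))
    (hmn : finrank K Y ≤ Fintype.card ι) {u : ℕ} (𝒜 : Submodule K (ι → Y))
    (hu : ∀ A ∈ 𝒜, frk (K := K) A ≤ u) (i : ι) (hi : rowSp 𝒜 i ≠ ⊥) :
    finrank K 𝒜 ≤ (Fintype.card ι - 1) * u + finrank K (rowSp 𝒜 i) := by
  obtain ⟨f, hf, hf0⟩ := Submodule.exists_mem_ne_zero_of_ne_bot hi
  have hcard := card_ne i
  have hpos : 0 < Fintype.card ι := Fintype.card_pos_iff.2 ⟨i⟩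
  have hq : finrank K (Y ⧸ Submodule.span K {f}) + 1 = finrank K Y := by
    rw [← finrank_span_singleton (K := K) hf0]
    exact Submodule.finrank_quotient_add_finrank _
  have hu1 : 1 ≤ u := by
    have := frk_corner 𝒜 hu i f hf hf0 0 (zero_mem _)
    omega
  have h1 := hB {j : ι // j ≠ i} (Y ⧸ Submodule.span K {f}) (by omega) (u - 1)
    (𝒜.map (corner (K := K) i f)) (by
      rintro _ ⟨A, hA, rfl⟩
      have := frk_corner 𝒜 hu i f hf hf0 A hA
      omega)
  rw [hcard, max_eq_left (by omega)] at h1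
  have h2 := finrank_map_add_ker (corner (K := K) i f) 𝒜
  set L := 𝒜 ⊓ LinearMap.ker (corner (K := K) i f) with hL
  have h3 := finrank_map_add_ker (resRow (K := K) (Y := Y) i) L
  have h4 : finrank K (L ⊓ LinearMap.ker (resRow (K := K) (Y := Y) i) : Submodule K (ι → Y)) ≤
      finrank K (rowSp 𝒜 i) := by
    refine le_trans (Submodule.finrank_mono ?_) (inf_ker_res 𝒜 i)
    exact inf_le_inf_right _ inf_le_left
  have h5 : finrank K (L.map (resRow (K := K) (Y := Y) i)) ≤ Fintype.card ι - 1 := by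
    have hle : L.map (resRow (K := K) (Y := Y) i) ≤
        Submodule.pi Set.univ (fun _ => Submodule.span K {f}) := by
      rintro _ ⟨A, ⟨_, hA⟩, rfl⟩ j _
      have := congrFun (LinearMap.mem_ker.1 hA) j
      have h' : Submodule.mkQ (Submodule.span K {f}) (resRow (K := K) i A j) = 0 := this
      rwa [← LinearMap.mem_ker, Submodule.ker_mkQ] at h'
    have := Submodule.finrank_mono hle
    rw [finrank_pi_submodule] at this
    simp only [finrank_span_singleton hf0, Finset.sum_const, Finset.card_univ, hcard,
      smul_eq_mul, mul_one] at this
    exact this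
  have h6 : (Fintype.card ι - 1) * (u - 1) + (Fintype.card ι - 1) = (Fintype.card ι - 1) * u := by
    obtain ⟨v, rfl⟩ := Nat.exists_eq_add_of_le' hu1
    simp; ring
  omega

theorem exists_small_row {u : ℕ} (𝒜 : Submodule K (ι → Y))
    (hu : ∀ A ∈ 𝒜, frk (K := K) A ≤ u) (hm : u < Fintype.card ι) :
    ∃ i, finrank K (rowSp 𝒜 i) ≤ u := by
  by_contra hcon
  push Not at hcon
  obtain ⟨s, -, hs⟩ := Finset.exists_subset_card_eq (s := (Finset.univ : Finset ι)) (n := u + 1)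
    (by simpa using hm)
  obtain ⟨A, hA, hr⟩ := greedy (rowSp 𝒜) (u + 1) hcon ⊥ s (by simp [hs])
  have h1 := hu A (pi_rowSp_le 𝒜 (fun i _ => hA i))
  have h2 : finrank K (⊥ ⊔ Submodule.span K (A '' s) : Submodule K Y) ≤ frk (K := K) A := by
    rw [bot_sup_eq]
    exact Submodule.finrank_mono (Submodule.span_mono (Set.image_subset_range _ _))
  simp [hs] at hr h2
  omega

theorem bound_step (hB : BoundBelow K (Fintype.card ι + finrank K Y))
    (hmn : finrank K Y ≤ Fintype.card ι) {u : ℕ} (𝒜 : Submodule K (ι → Y))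
    (hu : ∀ A ∈ 𝒜, frk (K := K) A ≤ u) :
    finrank K 𝒜 ≤ Fintype.card ι * u := by
  by_cases hun : finrank K Y ≤ u
  · have := Submodule.finrank_le 𝒜
    rw [Module.finrank_pi_fintype] at this
    simp at this
    exact this.trans (Nat.mul_le_mul_left _ hun)
  push Not at hun
  obtain ⟨i, hi⟩ := exists_small_row 𝒜 hu (by omega)
  have hcard := card_ne i
  have hpos : 0 < Fintype.card ι := Fintype.card_pos_iff.2 ⟨i⟩
  by_cases hb : rowSp 𝒜 i = ⊥
  · have h1 := hB {j : ι // j ≠ i} Y (by omega) u (𝒜.map (resRow (K := K) i)) (by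
      rintro _ ⟨A, hA, rfl⟩
      exact (frk_res_le i A).trans (hu A hA))
    rw [finrank_res_of_bot _ _ hb] at h1
    exact h1.trans (Nat.mul_le_mul_right _ (by omega))
  · have h1 := bound_of_ne_bot hB hmn 𝒜 hu i hb
    obtain ⟨c, hc⟩ := Nat.exists_eq_add_of_le' hpos
    rw [hc] at h1 ⊢
    simp at h1
    rw [add_mul]; omega

/-- transposition -/
def trs (ι κ : Type) : (ι → κ → K) ≃ₗ[K] (κ → ι → K) where
  toFun A := fun k i => A i k
  invFun A := fun i k => A k i
  map_add' _ _ := rfl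
  map_smul' _ _ := rfl
  left_inv _ := rfl
  right_inv _ := rfl

theorem frk_eq_rank {κ ι : Type} [Fintype κ] [Fintype ι] (A : Matrix ι κ K) :
    frk (K := K) (fun i => A i) = A.rank := by
  rw [Matrix.rank_eq_finrank_span_row]; rfl

theorem frk_trs {κ ι : Type} [Fintype κ] [Fintype ι] (A : ι → κ → K) :
    frk (K := K) (trs (K := K) ι κ A) = frk (K := K) A := by
  have h1 := frk_eq_rank (K := K) (Matrix.of A)
  have h2 := frk_eq_rank (K := K) (Matrix.of A).transpose
  rw [Matrix.rank_transpose] at h2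
  exact h2.trans h1.symm

theorem bound_all (N : ℕ) : BoundBelow K N := by
  induction N with
  | zero => intro ι _ _ Y _ _ _ h; omega
  | succ N ih =>
    intro ι _ _ Y _ _ _ hN u 𝒜 hu
    by_cases hlt : Fintype.card ι + finrank K Y < N
    · exact ih ι Y hlt u 𝒜 hu
    have hEq : Fintype.card ι + finrank K Y = N := by omega
    by_cases hmn : finrank K Y ≤ Fintype.card ι
    · rw [max_eq_left hmn]
      exact bound_step (by rw [hEq]; exact ih) hmn 𝒜 hu
    · push Not at hmn
      let b := Module.finBasis K Y
      let e : (ι → Y) ≃ₗ[K] (Fin (finrank K Y) → ι → K) :=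
        (LinearEquiv.piCongrRight (fun _ : ι => b.equivFun)).trans (trs ι (Fin (finrank K Y)))
      have he : ∀ A : ι → Y, frk (K := K) (e A) = frk (K := K) A := by
        intro A
        have h1 : frk (K := K) (e A) = frk (K := K) (fun i => b.equivFun (A i)) :=
          frk_trs (fun i => b.equivFun (A i))
        rw [h1]
        unfold frk
        have : Set.range (fun i => b.equivFun (A i)) = b.equivFun.toLinearMap '' Set.range A := by
          rw [← Set.range_comp]; rfl
        rw [this, Submodule.span_image]
        exact LinearEquiv.finrank_map_eq b.equivFun _
      have h1 := bound_step (K := K) (ι := Fin (finrank K Y)) (Y := ι → K) (u := u)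
        (by
          have : Fintype.card (Fin (finrank K Y)) + finrank K (ι → K) = N := by
            simp; omega
          rw [this]; exact ih) (by simp; omega) (𝒜.map e.toLinearMap) (by
          rintro _ ⟨A, hA, rfl⟩
          exact (he A).le.trans (hu A hA))
      rw [max_eq_right hmn.le]
      rw [show finrank K (𝒜.map e.toLinearMap) = finrank K 𝒜 from
        LinearEquiv.finrank_map_eq e _] at h1
      simpa using h1

end Abstract
section Equality

universe u
variable {K : Type u} [Field K]
variable {ι : Type} [Fintype ι] [DecidableEq ι] {Y : Type u} [AddCommGroup Y] [Module K Y]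
  [FiniteDimensional K Y]

theorem anticode_bound (hmn : finrank K Y ≤ Fintype.card ι) {u : ℕ} (𝒜 : Submodule K (ι → Y))
    (hu : ∀ A ∈ 𝒜, frk (K := K) A ≤ u) : finrank K 𝒜 ≤ Fintype.card ι * u :=
  bound_step (bound_all _) hmn 𝒜 hu

theorem row_dich (hmn : finrank K Y ≤ Fintype.card ι) {u : ℕ} (𝒜 : Submodule K (ι → Y))
    (hu : ∀ A ∈ 𝒜, frk (K := K) A ≤ u) (hdim : finrank K 𝒜 = Fintype.card ι * u) (i : ι)
    (hi : rowSp 𝒜 i ≠ ⊥) : u ≤ finrank K (rowSp 𝒜 i) := by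
  have h1 := bound_of_ne_bot (bound_all _) hmn 𝒜 hu i hi
  have hpos : 0 < Fintype.card ι := Fintype.card_pos_iff.2 ⟨i⟩
  obtain ⟨c, hc⟩ := Nat.exists_eq_add_of_le' hpos
  rw [hdim, hc] at h1
  simp [add_mul] at h1
  omega

theorem row_ne_bot (hmn : finrank K Y < Fintype.card ι) {u : ℕ} (hu0 : 0 < u)
    (𝒜 : Submodule K (ι → Y))
    (hu : ∀ A ∈ 𝒜, frk (K := K) A ≤ u) (hdim : finrank K 𝒜 = Fintype.card ι * u) (i : ι) :
    rowSp 𝒜 i ≠ ⊥ := by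
  intro hb
  have hcard := card_ne i
  have h1 := anticode_bound (K := K) (Y := Y) (ι := {j : ι // j ≠ i}) (u := u) (by omega)
    (𝒜.map (resRow (K := K) i)) (by
      rintro _ ⟨A, hA, rfl⟩
      exact (frk_res_le i A).trans (hu A hA))
  rw [finrank_res_of_bot _ _ hb, hdim, hcard] at h1
  have := Nat.le_of_mul_le_mul_right h1 hu0
  omega

/-- all row spaces are large, then the anticode is of the form `U^ι`. -/
theorem equal_rows {u : ℕ} (hm : u < Fintype.card ι) (𝒜 : Submodule K (ι → Y))
    (hu : ∀ A ∈ 𝒜, frk (K := K) A ≤ u) (hdim : finrank K 𝒜 = Fintype.card ι * u)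
    (hrow : ∀ i, u ≤ finrank K (rowSp 𝒜 i)) :
    ∃ U : Submodule K Y, finrank K U = u ∧ 𝒜 = Submodule.pi Set.univ (fun _ => U) := by
  have hle := pi_rowSp_le 𝒜
  have hfr := Submodule.finrank_mono hle
  rw [finrank_pi_submodule, hdim] at hfr
  have hsum : ∑ i : ι, u ≤ ∑ i, finrank K (rowSp 𝒜 i) := Finset.sum_le_sum fun i _ => hrow i
  have hc : ∑ i : ι, u = Fintype.card ι * u := by simp
  have hsumeq : ∑ i : ι, u = ∑ i, finrank K (rowSp 𝒜 i) := by omega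
  have heach : ∀ i, finrank K (rowSp 𝒜 i) = u := fun i =>
    (((Finset.sum_eq_sum_iff_of_le fun i _ => hrow i).1 hsumeq) i (Finset.mem_univ i)).symm
  have hEq : Submodule.pi Set.univ (rowSp 𝒜) = 𝒜 :=
    Submodule.eq_of_le_of_finrank_eq hle (by rw [finrank_pi_submodule, hdim]; omega)
  have hall : ∀ i j, rowSp 𝒜 i ≤ rowSp 𝒜 j := by
    intro i j
    by_contra hcon
    obtain ⟨v, hv, hvn⟩ := SetLike.not_le_iff_exists.1 hcon
    have hij : i ≠ j := by rintro rfl; exact hvn hv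
    have hv0 : v ≠ 0 := by rintro rfl; exact hvn (zero_mem _)
    have hu1 : 1 ≤ u := by
      rw [← heach i]
      have := Submodule.finrank_mono ((Submodule.span_singleton_le_iff_mem _ _).2 hv)
      rwa [finrank_span_singleton hv0] at this
    obtain ⟨s, hss, hs⟩ := Finset.exists_subset_card_eq
      (s := ((Finset.univ : Finset ι).erase i).erase j) (n := u - 1) (by
        rw [Finset.card_erase_of_mem (by simp [hij.symm]), Finset.card_erase_of_mem (by simp)]
        simp; omega)
    have his : i ∉ s := fun h => by simpa using hss h
    have hjs : j ∉ s := fun h => by simpa using hss h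
    obtain ⟨A, hA, hr⟩ := greedy (rowSp 𝒜) u hrow (Submodule.span K {v}) s (by
      rw [finrank_span_singleton hv0]; omega)
    rw [finrank_span_singleton hv0, hs] at hr
    set S := Submodule.span K {v} ⊔ Submodule.span K (A '' s) with hS
    have hw : ∃ w ∈ rowSp 𝒜 j, u + 1 ≤ finrank K (S ⊔ Submodule.span K {w} : Submodule K Y) := by
      by_cases hjS : rowSp 𝒜 j ≤ S
      · refine ⟨0, zero_mem _, ?_⟩
        have h1 := Submodule.finrank_mono hjS
        have h2 : finrank K (rowSp 𝒜 j) ≠ finrank K S := by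
          intro h
          have := Submodule.eq_of_le_of_finrank_eq hjS h
          apply hvn
          rw [this]
          exact Submodule.mem_sup_left (Submodule.mem_span_singleton_self v)
        rw [heach j] at h1 h2
        have h3 := Submodule.finrank_mono (le_sup_left (a := S) (b := Submodule.span K {(0:Y)}))
        omega
      · obtain ⟨w, hw, hwn⟩ := SetLike.not_le_iff_exists.1 hjS
        refine ⟨w, hw, ?_⟩
        rw [Submodule.finrank_sup_span_singleton hwn]
        omega
    obtain ⟨w, hw, hwr⟩ := hw
    let B := Function.update (Function.update A i v) j w
    have hB : B ∈ 𝒜 := by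
      apply hle
      intro l _
      by_cases hlj : l = j
      · subst hlj; simpa [B] using hw
      · by_cases hli : l = i
        · subst hli; simpa [B, hlj] using hv
        · simpa [B, hlj, hli] using hA l
    have hsp : S ⊔ Submodule.span K {w} ≤ Submodule.span K (Set.range B) := by
      refine sup_le (sup_le ?_ ?_) ?_
      · rw [Submodule.span_singleton_le_iff_mem]
        exact Submodule.subset_span ⟨i, by simp [B, hij]⟩
      · refine Submodule.span_mono ?_
        rintro _ ⟨l, hl, rfl⟩
        refine ⟨l, ?_⟩
        have h1 : l ≠ i := by rintro rfl; exact his hl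
        have h2 : l ≠ j := by rintro rfl; exact hjs hl
        simp [B, h1, h2]
      · rw [Submodule.span_singleton_le_iff_mem]
        exact Submodule.subset_span ⟨j, by simp [B]⟩
    have h1 := Submodule.finrank_mono hsp
    have h2 := hu B hB
    unfold frk at h2
    omega
  have hne : Nonempty ι := Fintype.card_pos_iff.1 (by omega)
  obtain ⟨i0⟩ := hne
  refine ⟨rowSp 𝒜 i0, heach i0, ?_⟩
  conv_lhs => rw [← hEq]
  congr 1
  funext j
  exact le_antisymm (hall _ _) (hall _ _)

theorem nonsquare (hmn : finrank K Y < Fintype.card ι) {u : ℕ} (hu0 : 0 < u)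
    (𝒜 : Submodule K (ι → Y))
    (hu : ∀ A ∈ 𝒜, frk (K := K) A ≤ u) (hdim : finrank K 𝒜 = Fintype.card ι * u) :
    ∃ U : Submodule K Y, finrank K U = u ∧ 𝒜 = Submodule.pi Set.univ (fun _ => U) := by
  have hun : u ≤ finrank K Y := by
    have := Submodule.finrank_le 𝒜
    rw [Module.finrank_pi_fintype, hdim] at this
    simp at this
    exact Nat.le_of_mul_le_mul_left this (by omega)
  refine equal_rows (by omega) 𝒜 hu hdim fun i => ?_
  exact row_dich hmn.le 𝒜 hu hdim i (row_ne_bot hmn hu0 𝒜 hu hdim i)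

theorem square_col {κ : Type} [Fintype κ] [DecidableEq κ] (hc : Fintype.card ι = Fintype.card κ)
    {u : ℕ} (hu0 : 0 < u) (hun : u < Fintype.card ι) (𝒜 : Submodule K (ι → κ → K))
    (hu : ∀ A ∈ 𝒜, frk (K := K) A ≤ u) (hdim : finrank K 𝒜 = Fintype.card ι * u)
    (i : ι) (hi : rowSp 𝒜 i = ⊥) (k : κ) :
    rowSp (𝒜.map (trs (K := K) ι κ).toLinearMap) k ≠ ⊥ := by
  intro hk
  have hci := card_ne i
  have hck := card_ne k
  set 𝒯 := 𝒜.map (trs (K := K) ι κ).toLinearMap with hT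
  have hdimT : finrank K 𝒯 = finrank K 𝒜 := LinearEquiv.finrank_map_eq _ _
  have hd1 := finrank_res_of_bot _ _ hi
  have hd2 := finrank_res_of_bot _ _ hk
  set 𝒜' := 𝒜.map (resRow (K := K) i) with hA'
  set 𝒯' := 𝒯.map (resRow (K := K) k) with hT'
  -- row-deleted space
  obtain ⟨U, hU, hUeq⟩ := nonsquare (K := K) (ι := κ) (Y := {j : ι // j ≠ i} → K) (u := u)
    (by simp [Fintype.card_subtype_compl]; omega) hu0 (𝒜'.map (trs (K := K) _ κ).toLinearMap) (by
      rintro _ ⟨_, ⟨A, hA, rfl⟩, rfl⟩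
      refine (frk_trs (K := K) (resRow (K := K) i A)).le.trans ?_
      exact (frk_res_le i A).trans (hu A hA)) (by
      rw [show finrank K (𝒜'.map (trs (K := K) _ κ).toLinearMap) = finrank K 𝒜' from
        LinearEquiv.finrank_map_eq _ _, hd1, hdim, hc])
  obtain ⟨U2, hU2, hU2eq⟩ := nonsquare (K := K) (ι := ι) (Y := {l : κ // l ≠ k} → K) (u := u)
    (by simp [Fintype.card_subtype_compl]; omega) hu0 (𝒯'.map (trs (K := K) _ ι).toLinearMap) (by
      rintro _ ⟨_, ⟨_, ⟨A, hA, rfl⟩, rfl⟩, rfl⟩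
      refine (frk_trs (K := K) (resRow (K := K) k (trs (K := K) ι κ A))).le.trans ?_
      refine (frk_res_le k _).trans ?_
      exact (frk_trs (K := K) A).le.trans (hu A hA)) (by
      rw [show finrank K (𝒯'.map (trs (K := K) _ ι).toLinearMap) = finrank K 𝒯' from
        LinearEquiv.finrank_map_eq _ _, hd2, hdimT, hdim])
  -- U2 = ⊤
  have hUne : U ≠ ⊥ := by rintro rfl; simp at hU; omega
  obtain ⟨w, hwU, hw0⟩ := Submodule.exists_mem_ne_zero_of_ne_bot hUne
  obtain ⟨j, hj⟩ : ∃ j, w j ≠ 0 := by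
    by_contra hcon; push Not at hcon; exact hw0 (funext hcon)
  have hU2top : U2 = ⊤ := by
    rw [eq_top_iff]
    intro y _
    let v : κ → K := fun l => if h : l ≠ k then (w j)⁻¹ * y ⟨l, h⟩ else 0
    have hmem : (fun l => v l • w) ∈ 𝒜'.map (trs (K := K) _ κ).toLinearMap := by
      rw [hUeq]
      intro l _
      exact Submodule.smul_mem _ _ hwU
    obtain ⟨_, ⟨A, hA, rfl⟩, hAe⟩ := hmem
    have hrow : ∀ l, A j l = v l * w j := by
      intro l
      have := congrFun (congrFun hAe l) j
      exact this
    have hmem2 : (trs (K := K) _ ι) (resRow (K := K) k (trs (K := K) ι κ A)) ∈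
        𝒯'.map (trs (K := K) _ ι).toLinearMap := ⟨_, ⟨_, ⟨A, hA, rfl⟩, rfl⟩, rfl⟩
    rw [hU2eq] at hmem2
    have h3 := hmem2 j (Set.mem_univ _)
    have h5 : y = (trs (K := K) _ ι) (resRow (K := K) k (trs (K := K) ι κ A)) j := ?_
    · rw [h5]; exact h3
    funext l
    have h4 : (trs (K := K) _ ι) (resRow (K := K) k (trs (K := K) ι κ A)) j l = A j l := rfl
    rw [h4, hrow]
    have : (l : κ) ≠ k := l.2
    simp only [v, dif_pos this]
    field_simp
  have hun1 : u + 1 = Fintype.card ι := by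
    rw [hU2top, finrank_top] at hU2
    simp [Fintype.card_subtype_compl] at hU2
    omega
  have hA'top : 𝒜' = ⊤ := by
    apply Submodule.eq_top_of_finrank_eq
    rw [hd1, hdim, Module.finrank_pi_fintype]
    simp [Fintype.card_subtype_compl]
    rw [← hc, ← hun1]; simp; ring
  have hlift : ∀ X : {j : ι // j ≠ i} → κ → K, ∃ A ∈ 𝒜, resRow (K := K) i A = X := by
    intro X
    have : X ∈ 𝒜' := by rw [hA'top]; trivial
    exact this
  obtain ⟨A0, hA0, hA0e⟩ := hlift (Pi.single j (Pi.single k 1))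
  set ek : κ → K := Pi.single k 1 with hek
  set g := A0 i with hg
  have hA0j : A0 j = ek := by
    have := congrFun hA0e j
    rw [resRow_apply] at this
    simpa using this
  have hgn : g ∉ Submodule.span K {ek} := by
    intro hgs
    obtain ⟨c, hcg⟩ := Submodule.mem_span_singleton.1 hgs
    have hoff : ∀ (a : ι) (l : κ), l ≠ k → A0 a l = 0 := by
      intro a l hl
      by_cases ha : a = i
      · subst ha
        rw [← hg, ← hcg]; simp [hek, hl]
      · have := congrFun (congrFun hA0e ⟨a, ha⟩) l
        rw [resRow_apply] at this
        rw [this]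
        by_cases haj : (⟨a, ha⟩ : {j : ι // j ≠ i}) = j
        · rw [haj]; simp [hek, hl]
        · simp [haj]
    have hmem : (trs (K := K) ι κ A0) k ∈ rowSp 𝒯 k := by
      rw [mem_rowSp]
      have : (Pi.single k ((trs (K := K) ι κ A0) k) : κ → ι → K) = trs (K := K) ι κ A0 := by
        symm
        apply eq_single_of_res (K := K)
        funext l a
        exact hoff a l l.2
      rw [this]
      exact ⟨A0, hA0, rfl⟩
    rw [hk, Submodule.mem_bot] at hmem
    have h1 : A0 j k = 0 := congrFun hmem j
    rw [hA0j] at h1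
    simp [hek] at h1
  have hek0 : ek ≠ 0 := by
    intro h
    have := congrFun h k
    simp [hek] at this
  have hu2 : 2 ≤ u := by
    have hle : Submodule.span K {ek} ⊔ Submodule.span K {g} ≤
        Submodule.span K (Set.range A0) := by
      refine sup_le ?_ ?_ <;> rw [Submodule.span_singleton_le_iff_mem]
      · exact Submodule.subset_span ⟨j, hA0j⟩
      · exact Submodule.subset_span ⟨i, rfl⟩
    have h1 := Submodule.finrank_mono hle
    rw [Submodule.finrank_sup_span_singleton hgn, finrank_span_singleton hek0] at h1
    have := hu A0 hA0
    unfold frk at this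
    omega
  -- hyperplane
  obtain ⟨φ, hφg, hφ⟩ := Submodule.exists_dual_map_eq_bot_of_notMem hgn inferInstance
  have hφk : φ ek = 0 := by
    have : φ ek ∈ (Submodule.span K {ek}).map φ :=
      Submodule.mem_map_of_mem (Submodule.mem_span_singleton_self _)
    rwa [hφ, Submodule.mem_bot] at this
  set H := LinearMap.ker φ with hH
  have hHdim : finrank K H = u := by
    have h1 := LinearMap.finrank_range_add_finrank_ker φ
    have h2 : LinearMap.range φ = ⊤ := LinearMap.range_eq_top.2 (LinearMap.surjective (by
      rintro rfl; simp at hφg))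
    rw [h2, finrank_top] at h1
    rw [Module.finrank_self, Module.finrank_fintype_fun_eq_card] at h1
    rw [hH]
    omega
  obtain ⟨j', hj'⟩ : ∃ j' : {j : ι // j ≠ i}, j' ≠ j := by
    have : 1 < Fintype.card {j : ι // j ≠ i} := by omega
    exact Fintype.exists_ne_of_one_lt_card this j
  obtain ⟨r0, hr0, hr0d⟩ := greedy (K := K) (ι := {j : ι // j ≠ i}) (fun _ => H) u
    (fun _ => hHdim.ge) (Submodule.span K {ek}) (Finset.univ.erase j') (by
      rw [finrank_span_singleton hek0, Finset.card_erase_of_mem (by simp), Finset.card_univ]; omega)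
  rw [finrank_span_singleton hek0, Finset.card_erase_of_mem (by simp), Finset.card_univ] at hr0d
  have hspan0 : Submodule.span K {ek} ⊔ Submodule.span K (r0 '' (Finset.univ.erase j' : Finset _))
      = H := by
    apply Submodule.eq_of_le_of_finrank_le
    · refine sup_le ?_ ?_
      · rw [Submodule.span_singleton_le_iff_mem]; exact hφk
      · rw [Submodule.span_le]
        rintro _ ⟨l, _, rfl⟩
        exact hr0 l
    · omega
  set r := Function.update r0 j' ek with hr
  have hrj' : r j' = ek := by simp [hr]
  have hHr : H ≤ Submodule.span K (Set.range r) := by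
    rw [← hspan0]
    refine sup_le ?_ ?_
    · rw [Submodule.span_singleton_le_iff_mem]
      exact Submodule.subset_span ⟨j', hrj'⟩
    · refine Submodule.span_mono ?_
      rintro _ ⟨l, hl, rfl⟩
      refine ⟨l, ?_⟩
      have : l ≠ j' := by simpa using hl
      simp [hr, this]
  have hkey : ∀ A ∈ 𝒜, H ≤ Submodule.span K (Set.range (resRow (K := K) i A)) → A i ∈ H := by
    intro A hA hle
    have hle2 : H ≤ Submodule.span K (Set.range A) := by
      refine hle.trans (Submodule.span_mono ?_)
      rintro _ ⟨l, rfl⟩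
      exact ⟨l, rfl⟩
    have := hu A hA
    unfold frk at this
    have := Submodule.eq_of_le_of_finrank_le hle2 (by omega)
    rw [this]
    exact Submodule.subset_span ⟨i, rfl⟩
  obtain ⟨A1, hA1, hA1e⟩ := hlift r
  have h1 := hkey A1 hA1 (by rw [hA1e]; exact hHr)
  have h2 := hkey (A1 + A0) (add_mem hA1 hA0) (by
    rw [map_add, hA1e, hA0e]
    refine hHr.trans ?_
    have hoth : ∀ l, l ≠ j → r l ∈ Submodule.span K (Set.range (r + Pi.single j ek)) := by
      intro l hl
      refine Submodule.subset_span ⟨l, ?_⟩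
      simp [hl]
    rw [Submodule.span_le]
    rintro _ ⟨l, rfl⟩
    by_cases hl : l = j
    · subst hl
      have h3 : (r + (Pi.single l ek : {j : ι // j ≠ i} → κ → K)) l ∈ Submodule.span K (Set.range (r + Pi.single l ek)) :=
        Submodule.subset_span ⟨l, rfl⟩
      have h4 := sub_mem h3 (hoth j' hj')
      rw [hrj'] at h4
      simpa using h4
    · exact hoth l hl)
  have h3 := sub_mem h2 h1
  have h4 : g ∈ H := by simpa using h3
  exact hφg h4

theorem sub_of_pi {u : ℕ} (U : Submodule K Y) (hU : finrank K U = u + 1) :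
    ∃ U' : Submodule K Y, U' ≤ U ∧ finrank K U' = u ∧
      finrank K (Submodule.pi Set.univ (fun _ : ι => U')) = Fintype.card ι * u ∧
      ∀ A ∈ Submodule.pi Set.univ (fun _ : ι => U'), frk (K := K) A ≤ u := by
  obtain ⟨f, hf⟩ := exists_linearIndependent_of_le_finrank (R := K) (M := U) (n := u) (by omega)
  have hf' : LinearIndependent K (fun i => (f i : Y)) :=
    hf.map' U.subtype (Submodule.ker_subtype U)
  have hfr : finrank K (Submodule.span K (Set.range fun i => (f i : Y))) = u := by
    rw [finrank_span_eq_card hf']; simp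
  refine ⟨Submodule.span K (Set.range fun i => (f i : Y)), ?_, hfr, ?_, ?_⟩
  · rw [Submodule.span_le]
    rintro _ ⟨i, rfl⟩
    exact (f i).2
  · rw [finrank_pi_submodule]; simp [hfr]
  · intro A hA
    rw [← hfr]
    refine Submodule.finrank_mono (Submodule.span_le.2 ?_)
    rintro _ ⟨i, rfl⟩
    exact hA i (Set.mem_univ i)

theorem sub_anticode {a b u : ℕ} (hba : b ≤ a) (hub : u + 1 ≤ b)
    (𝒜 : Submodule K (Fin a → Fin b → K)) (hu : ∀ A ∈ 𝒜, frk (K := K) A ≤ u + 1)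
    (hdim : finrank K 𝒜 = a * (u + 1)) :
    ∃ ℬ : Submodule K (Fin a → Fin b → K), ℬ ≤ 𝒜 ∧ finrank K ℬ = a * u ∧
      ∀ A ∈ ℬ, frk (K := K) A ≤ u := by
  have hdim' : finrank K 𝒜 = Fintype.card (Fin a) * (u + 1) := by simpa using hdim
  have hfin : ∀ U : Submodule K (Fin b → K), finrank K U = u + 1 →
      𝒜 = Submodule.pi Set.univ (fun _ => U) → ∃ ℬ : Submodule K (Fin a → Fin b → K), ℬ ≤ 𝒜 ∧
        finrank K ℬ = a * u ∧ ∀ A ∈ ℬ, frk (K := K) A ≤ u := by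
    intro U hU hUe
    obtain ⟨U', hle, -, hd, hr⟩ := sub_of_pi (ι := Fin a) U hU
    refine ⟨_, ?_, by simpa using hd, hr⟩
    rw [hUe]
    exact fun A hA i hi => hle (hA i hi)
  rcases hub.eq_or_lt with hub | hub
  · refine hfin ⊤ (by simp [hub]) ?_
    have : 𝒜 = ⊤ := by
      apply Submodule.eq_top_of_finrank_eq
      rw [hdim, Module.finrank_pi_fintype]
      simp [hub]
    rw [this]
    symm
    rw [eq_top_iff]
    intro x _ i _
    trivial
  by_cases hall : ∀ i, rowSp 𝒜 i ≠ ⊥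
  · obtain ⟨U, hU, hUe⟩ := equal_rows (by simp; omega) 𝒜 hu hdim'
      (fun i => row_dich (by simpa using hba) 𝒜 hu hdim' i (hall i))
    exact hfin U hU hUe
  · push Not at hall
    obtain ⟨i, hi⟩ := hall
    have hab : a = b := by
      by_contra hne
      exact row_ne_bot (by simp; omega) (by omega) 𝒜 hu hdim' i hi
    set 𝒯 := 𝒜.map (trs (K := K) (Fin a) (Fin b)).toLinearMap with hT
    have hdimT : finrank K 𝒯 = Fintype.card (Fin b) * (u + 1) := by
      rw [show finrank K 𝒯 = finrank K 𝒜 from LinearEquiv.finrank_map_eq _ _, hdim]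
      simp [hab]
    have huT : ∀ A ∈ 𝒯, frk (K := K) A ≤ u + 1 := by
      rintro _ ⟨A, hA, rfl⟩
      exact (frk_trs A).le.trans (hu A hA)
    have hallT : ∀ k, rowSp 𝒯 k ≠ ⊥ := fun k =>
      square_col (by simp [hab]) (by omega) (by simp; omega) 𝒜 hu hdim' i hi k
    obtain ⟨U, hU, hUe⟩ := equal_rows (by simp; omega) 𝒯 huT hdimT
      (fun k => row_dich (by simp [hab]) 𝒯 huT hdimT k (hallT k))
    obtain ⟨U', hle, -, hd, hr⟩ := sub_of_pi (ι := Fin b) U hU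
    refine ⟨(Submodule.pi Set.univ (fun _ : Fin b => U')).map
      (trs (K := K) (Fin b) (Fin a)).toLinearMap, ?_, ?_, ?_⟩
    · rintro _ ⟨A, hA, rfl⟩
      have : A ∈ 𝒯 := by
        rw [hUe]
        exact fun k hk => hle (hA k hk)
      obtain ⟨B, hB, rfl⟩ := this
      exact hB
    · rw [show finrank K ((Submodule.pi Set.univ (fun _ : Fin b => U')).map
        (trs (K := K) (Fin b) (Fin a)).toLinearMap) = _ from LinearEquiv.finrank_map_eq _ _, hd]
      simp [hab]
    · rintro _ ⟨A, hA, rfl⟩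
      exact (frk_trs A).le.trans (hr A hA)

end Equality
theorem rank_eq_frk {a b : ℕ} (A : Matrix (Fin a) (Fin b) F) :
    A.rank = frk (K := F) (ι := Fin a) (Y := Fin b → F) A := (frk_eq_rank A).symm

theorem rank_le_b {a b : ℕ} (A : Matrix (Fin a) (Fin b) F) : A.rank ≤ b := by
  simpa using A.rank_le_width

theorem bdd_rank {a b : ℕ} (𝒜 : Submodule F (Matrix (Fin a) (Fin b) F)) :
    BddAbove {w | ∃ A ∈ 𝒜, A.rank = w} :=
  ⟨b, by rintro _ ⟨A, _, rfl⟩; exact rank_le_b A⟩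

theorem rank_le_maxrank {a b : ℕ} {𝒜 : Submodule F (Matrix (Fin a) (Fin b) F)}
    {A : Matrix (Fin a) (Fin b) F} (hA : A ∈ 𝒜) : A.rank ≤ maxrank 𝒜 :=
  le_csSup (bdd_rank 𝒜) ⟨A, hA, rfl⟩

theorem exists_maxrank {a b : ℕ} (𝒜 : Submodule F (Matrix (Fin a) (Fin b) F)) :
    ∃ A ∈ 𝒜, A.rank = maxrank 𝒜 :=
  Nat.sSup_mem (s := {w | ∃ A ∈ 𝒜, A.rank = w}) ⟨_, 0, zero_mem _, rfl⟩ (bdd_rank 𝒜)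

theorem maxrank_le {a b c : ℕ} {𝒜 : Submodule F (Matrix (Fin a) (Fin b) F)}
    (h : ∀ A ∈ 𝒜, A.rank ≤ c) : maxrank 𝒜 ≤ c := by
  obtain ⟨A, hA, h1⟩ := exists_maxrank 𝒜
  rw [← h1]; exact h A hA

theorem maxrank_le_b {a b : ℕ} (𝒜 : Submodule F (Matrix (Fin a) (Fin b) F)) :
    maxrank 𝒜 ≤ b := maxrank_le fun A _ => rank_le_b A

theorem maxsrk_pi (𝒜 : ∀ i : Fin t, Submodule F (Matrix (Fin (m i)) (Fin (n i)) F)) :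
    maxsrk (Submodule.pi Set.univ 𝒜) = ∑ i, maxrank (𝒜 i) := by
  have hub : ∀ C ∈ Submodule.pi Set.univ 𝒜, srk C ≤ ∑ i, maxrank (𝒜 i) := fun C hC =>
    Finset.sum_le_sum fun i _ => rank_le_maxrank (hC i (Set.mem_univ i))
  apply le_antisymm
  · apply csSup_le'
    rintro _ ⟨C, hC, rfl⟩
    exact hub C hC
  · choose A hA hr using fun i => exists_maxrank (𝒜 i)
    refine le_csSup ⟨_, by rintro _ ⟨C, hC, rfl⟩; exact hub C hC⟩ ⟨A, fun i _ => hA i, ?_⟩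
    simp [srk, hr]

theorem opt_of {a b c : ℕ} (hba : b ≤ a) (ha : 0 < a)
    (𝒜 : Submodule F (Matrix (Fin a) (Fin b) F)) (hd : finrank F 𝒜 = a * c)
    (hr : ∀ A ∈ 𝒜, A.rank ≤ c) : maxrank 𝒜 = c ∧ IsOptAnticode 𝒜 := by
  have h1 := maxrank_le hr
  have h2 := anticode_bound (K := F) (ι := Fin a) (Y := Fin b → F) (u := maxrank 𝒜)
    (by simpa using hba) 𝒜 (fun A hA => by
      have := rank_le_maxrank (𝒜 := 𝒜) hA
      exact (rank_eq_frk (a := a) (b := b) A).ge.trans this)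
  have h3 : finrank F 𝒜 ≤ a * maxrank 𝒜 := by rw [Fintype.card_fin] at h2; exact h2
  rw [hd] at h3
  have h4 := Nat.le_of_mul_le_mul_left h3 ha
  have h5 : maxrank 𝒜 = c := le_antisymm h1 h4
  exact ⟨h5, by unfold IsOptAnticode; rw [h5, hd]⟩

theorem opt_sub {a b u : ℕ} (hba : b ≤ a) (ha : 0 < a)
    (𝒜 : Submodule F (Matrix (Fin a) (Fin b) F)) (hd : IsOptAnticode 𝒜)
    (hr : maxrank 𝒜 = u + 1) :
    ∃ ℬ ≤ 𝒜, finrank F ℬ = a * u ∧ IsOptAnticode ℬ ∧ maxrank ℬ = u := by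
  unfold IsOptAnticode at hd
  rw [hr] at hd
  obtain ⟨ℬ, h1, h2, h3⟩ := sub_anticode (K := F) (a := a) (b := b) (u := u) hba
    (by rw [← hr]; exact maxrank_le_b 𝒜) 𝒜 (fun A hA => by
      have := rank_le_maxrank (𝒜 := 𝒜) hA
      exact (rank_eq_frk (a := a) (b := b) A).ge.trans (this.trans hr.le)) hd
  have := opt_of hba ha ℬ h2 (fun A hA => by rw [rank_eq_frk]; exact h3 A hA)
  exact ⟨ℬ, h1, h2, this.2, this.1⟩

theorem codeWt_le {𝒟 : Submodule F (∀ i : Fin t, Matrix (Fin (m i)) (Fin (n i)) F)}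
    {𝒜 : ∀ i : Fin t, Submodule F (Matrix (Fin (m i)) (Fin (n i)) F)}
    (h1 : ∀ i, IsOptAnticode (𝒜 i)) (h2 : 𝒟 ≤ Submodule.pi Set.univ 𝒜) :
    codeWt 𝒟 ≤ ∑ i, maxrank (𝒜 i) :=
  Nat.sInf_le ⟨𝒜, h1, h2, maxsrk_pi 𝒜⟩

theorem opt_top {a b : ℕ} (hba : b ≤ a) (ha : 0 < a) :
    IsOptAnticode (⊤ : Submodule F (Matrix (Fin a) (Fin b) F)) ∧
      maxrank (⊤ : Submodule F (Matrix (Fin a) (Fin b) F)) = b := by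
  have := opt_of (F := F) hba ha ⊤ (c := b) (by simp [Module.finrank_matrix])
    (fun A _ => rank_le_b A)
  exact ⟨this.2, this.1⟩

theorem codeWt_le_n (hmn : ∀ i, n i ≤ m i) (hm : ∀ i, 0 < m i)
    (𝒟 : Submodule F (∀ i : Fin t, Matrix (Fin (m i)) (Fin (n i)) F)) :
    codeWt 𝒟 ≤ ∑ i, n i := by
  refine (codeWt_le (𝒜 := fun _ => ⊤) (fun i => (opt_top (hmn i) (hm i)).1) ?_).trans ?_
  · intro x _ i _; trivial
  · exact Finset.sum_le_sum fun i _ => maxrank_le_b _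

theorem exists_codeWt (hmn : ∀ i, n i ≤ m i) (hm : ∀ i, 0 < m i)
    (𝒟 : Submodule F (∀ i : Fin t, Matrix (Fin (m i)) (Fin (n i)) F)) :
    ∃ 𝒜 : ∀ i : Fin t, Submodule F (Matrix (Fin (m i)) (Fin (n i)) F),
      (∀ i, IsOptAnticode (𝒜 i)) ∧ 𝒟 ≤ Submodule.pi Set.univ 𝒜 ∧
      ∑ i, maxrank (𝒜 i) = codeWt 𝒟 := by
  obtain ⟨𝒜, h1, h2, h3⟩ := Nat.sInf_mem (s := {w | ∃ 𝒜 : ∀ i : Fin t, Submodule F (Matrix (Fin (m i)) (Fin (n i)) F),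
    (∀ i, IsOptAnticode (𝒜 i)) ∧ 𝒟 ≤ Submodule.pi Set.univ 𝒜 ∧
      maxsrk (Submodule.pi Set.univ 𝒜) = w})
    ⟨_, fun _ => ⊤, fun i => (opt_top (hmn i) (hm i)).1, fun x _ i _ => trivial, rfl⟩
  exact ⟨𝒜, h1, h2, by rw [← maxsrk_pi, h3]; rfl⟩

theorem srk_le_codeWt (hmn : ∀ i, n i ≤ m i) (hm : ∀ i, 0 < m i)
    (𝒟 : Submodule F (∀ i : Fin t, Matrix (Fin (m i)) (Fin (n i)) F))
    (C : ∀ i : Fin t, Matrix (Fin (m i)) (Fin (n i)) F) (hC : C ∈ 𝒟) : srk C ≤ codeWt 𝒟 := by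
  obtain ⟨𝒜, h1, h2, h3⟩ := exists_codeWt hmn hm 𝒟
  rw [← h3]
  exact Finset.sum_le_sum fun i _ => rank_le_maxrank (h2 hC i (Set.mem_univ i))

theorem gw_le {𝒞 𝒟 : Submodule F (∀ i : Fin t, Matrix (Fin (m i)) (Fin (n i)) F)} {r : ℕ}
    (h : 𝒟 ≤ 𝒞) (hr : r ≤ finrank F 𝒟) : gw 𝒞 r ≤ codeWt 𝒟 :=
  Nat.sInf_le ⟨𝒟, h, hr, rfl⟩

theorem exists_gw {𝒞 : Submodule F (∀ i : Fin t, Matrix (Fin (m i)) (Fin (n i)) F)} {r : ℕ}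
    (hr : r ≤ finrank F 𝒞) : ∃ 𝒟 ≤ 𝒞, r ≤ finrank F 𝒟 ∧ codeWt 𝒟 = gw 𝒞 r := by
  obtain ⟨𝒟, h1, h2, h3⟩ := Nat.sInf_mem (s := {w | ∃ 𝒟 : Submodule F (∀ i : Fin t, Matrix (Fin (m i)) (Fin (n i)) F),
    𝒟 ≤ 𝒞 ∧ r ≤ Module.finrank F 𝒟 ∧ codeWt 𝒟 = w}) ⟨_, 𝒞, le_rfl, hr, rfl⟩
  exact ⟨𝒟, h1, h2, h3⟩

theorem finrank_pi_mat (𝒜 : ∀ i : Fin t, Submodule F (Matrix (Fin (m i)) (Fin (n i)) F)) :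
    finrank F (Submodule.pi Set.univ 𝒜) = ∑ i, finrank F (𝒜 i) := finrank_pi_submodule 𝒜

/-- necessity of the conditions -/
theorem necessity (hm_mono : ∀ i j : Fin t, i ≤ j → m j ≤ m i)
    (hmn : ∀ i, n i ≤ m i) (hm : ∀ i, 0 < m i) (k : ℕ) (d : Fin k → ℕ)
    (𝒞 : Submodule F (∀ i : Fin t, Matrix (Fin (m i)) (Fin (n i)) F))
    (hk : finrank F 𝒞 = k) (hd : ∀ r : Fin k, gw 𝒞 (r.1 + 1) = d r) :
    Monotone d ∧ (∀ r, d r ≤ ∑ i, n i) ∧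
        ∀ i : Fin t, ∀ j : ℕ, 1 ≤ j → j ≤ n i →
          (Finset.univ.filter (fun r : Fin k => d r = ∑ l ∈ Finset.Iio i, n l + j)).card
            ≤ m i := by
  have hmono : Monotone d := by
    intro r s hrs
    obtain ⟨𝒟, h1, h2, h3⟩ := exists_gw (𝒞 := 𝒞) (r := s.1 + 1) (by have := s.2; omega)
    rw [← hd, ← hd, ← h3]
    exact gw_le h1 (by have : r.1 ≤ s.1 := hrs; omega)
  refine ⟨hmono, ?_, ?_⟩
  · intro r
    rw [← hd]
    exact (gw_le le_rfl (by have := r.2; omega)).trans (codeWt_le_n hmn hm 𝒞)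
  · intro i j hj1 hjn
    by_contra hcon
    push Not at hcon
    set S := Finset.univ.filter (fun r : Fin k => d r = ∑ l ∈ Finset.Iio i, n l + j) with hS
    have hne : S.Nonempty := Finset.card_pos.1 (by omega)
    have hmin := S.min'_mem hne
    have hmax := S.max'_mem hne
    set r0 := S.min' hne with hr0
    set r1 := S.max' hne with hr1
    have hsub : S ⊆ Finset.Icc r0 r1 := fun x hx =>
      Finset.mem_Icc.2 ⟨S.min'_le x hx, S.le_max' x hx⟩
    have hcard := Finset.card_le_card hsub
    rw [Fin.card_Icc] at hcard
    have hd0 : d r0 = ∑ l ∈ Finset.Iio i, n l + j := (Finset.mem_filter.1 hmin).2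
    have hd1 : d r1 = ∑ l ∈ Finset.Iio i, n l + j := (Finset.mem_filter.1 hmax).2
    obtain ⟨𝒟, h1, h2, h3⟩ := exists_gw (𝒞 := 𝒞) (r := r1.1 + 1) (by have := r1.2; omega)
    rw [hd, hd1] at h3
    obtain ⟨𝒜, ha1, ha2, ha3⟩ := exists_codeWt hmn hm 𝒟
    rw [h3] at ha3
    have hl : ∃ l, i ≤ l ∧ 0 < maxrank (𝒜 l) := by
      by_contra hno
      push Not at hno
      have : ∑ l, maxrank (𝒜 l) ≤ ∑ l ∈ Finset.Iio i, n l := by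
        rw [← Finset.sum_subset (Finset.subset_univ (Finset.Iio i)) (fun l _ hl => by
          have := hno l (by simpa using hl)
          omega)]
        exact Finset.sum_le_sum fun l _ => maxrank_le_b _
      omega
    obtain ⟨l, hil, hl0⟩ := hl
    obtain ⟨u, hu⟩ := Nat.exists_eq_add_of_le' hl0
    obtain ⟨ℬ, hb1, hb2, hb3, hb4⟩ := opt_sub (hmn l) (hm l) (𝒜 l) (ha1 l) hu
    have hdl : finrank F (𝒜 l) = m l * (u + 1) := by
      have := ha1 l
      unfold IsOptAnticode at this
      rw [this, hu]
    let 𝒜' := Function.update 𝒜 l ℬ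
    have hopt : ∀ i, IsOptAnticode (𝒜' i) := by
      intro i'
      by_cases h : i' = l
      · subst h; simpa [𝒜'] using hb3
      · simpa [𝒜', h] using ha1 i'
    have hle : Submodule.pi Set.univ 𝒜' ≤ Submodule.pi Set.univ 𝒜 := by
      intro x hx i' _
      have := hx i' (Set.mem_univ _)
      by_cases h : i' = l
      · subst h
        simp only [𝒜', Function.update_self] at this
        exact hb1 this
      · simp only [𝒜', Function.update_of_ne h] at this
        exact this
    have hs1 : ∑ i, maxrank (𝒜' i) + 1 = ∑ i, maxrank (𝒜 i) := by
      rw [← Finset.add_sum_erase Finset.univ (fun i => maxrank (𝒜' i)) (Finset.mem_univ l),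
        ← Finset.add_sum_erase Finset.univ (fun i => maxrank (𝒜 i)) (Finset.mem_univ l)]
      have : ∑ x ∈ Finset.univ.erase l, maxrank (𝒜' x) =
          ∑ x ∈ Finset.univ.erase l, maxrank (𝒜 x) :=
        Finset.sum_congr rfl fun x hx => by
          have : x ≠ l := by simpa using hx
          simp [𝒜', this]
      rw [this]
      have h5 : maxrank (𝒜' l) = u := by simpa [𝒜'] using hb4
      omega
    have hs2 : finrank F (Submodule.pi Set.univ 𝒜') + m l =
        finrank F (Submodule.pi Set.univ 𝒜) := by
      rw [finrank_pi_mat, finrank_pi_mat, ← Finset.add_sum_erase Finset.univ (fun i => finrank F (𝒜' i)) (Finset.mem_univ l),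
        ← Finset.add_sum_erase Finset.univ (fun i => finrank F (𝒜 i)) (Finset.mem_univ l)]
      have : ∑ x ∈ Finset.univ.erase l, finrank F (𝒜' x) =
          ∑ x ∈ Finset.univ.erase l, finrank F (𝒜 x) :=
        Finset.sum_congr rfl fun x hx => by
          have : x ≠ l := by simpa using hx
          rw [show 𝒜' x = 𝒜 x from Function.update_of_ne this _ _]
      rw [this]
      have h5 : finrank F (𝒜' l) = m l * u := by
        rw [show 𝒜' l = ℬ from Function.update_self _ _ _]; exact hb2
      have h6 : finrank F (𝒜 l) = m l * u + m l := by rw [hdl]; ring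
      omega
    have hw := codeWt_le (𝒟 := 𝒟 ⊓ Submodule.pi Set.univ 𝒜') hopt inf_le_right
    have hf := Submodule.finrank_sup_add_finrank_inf_eq 𝒟 (Submodule.pi Set.univ 𝒜')
    have hsup := Submodule.finrank_mono (sup_le ha2 hle)
    have hml := hm_mono i l hil
    have hg := gw_le (𝒞 := 𝒞) (𝒟 := 𝒟 ⊓ Submodule.pi Set.univ 𝒜') (r := r0.1 + 1)
      (inf_le_left.trans h1) (by omega)
    rw [hd, hd0] at hg
    omega

section Flag

universe u
variable {K : Type u} [Field K] {X : Type u} [AddCommGroup X] [Module K X]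
  [FiniteDimensional K X]

theorem flag_step {k : ℕ} (A D : ℕ → Submodule K X) (hA : Monotone A) (d : Fin k → ℕ)
    (hd : Monotone d)
    (h0 : ∀ r, A (d r - 1) ⊓ D (d r) = ⊥)
    (hc : ∀ r, (Finset.univ.filter (fun s => d s = d r)).card ≤
      finrank K (D (d r) ⊓ A (d r) : Submodule K X))
    (r : Fin k) (x : Fin k → X) (hx : ∀ s < r, x s ∈ D (d s) ⊓ A (d s)) :
    ∃ y ∈ D (d r) ⊓ A (d r), y ∉ Submodule.span K (x '' {s | s < r}) := by
  by_contra hcon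
  push Not at hcon
  have hle : D (d r) ⊓ A (d r) ≤ Submodule.span K (x '' {s | s < r}) := hcon
  set W := D (d r) ⊓ A (d r) with hW
  let Q := Submodule.span K (x '' {s | s < r ∧ d s = d r})
  let P := Submodule.span K (x '' {s | s < r ∧ d s < d r})
  have hP : P ≤ A (d r - 1) := by
    apply Submodule.span_le.2
    rintro _ ⟨s, ⟨hs, hs2⟩, rfl⟩
    exact hA (by omega) (hx s hs).2
  have hQ : Q ≤ W := by
    apply Submodule.span_le.2
    rintro _ ⟨s, ⟨hs, hs2⟩, rfl⟩
    have := hx s hs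
    rw [hs2] at this
    exact this
  have hPQ : Submodule.span K (x '' {s | s < r}) = Q ⊔ P := by
    rw [← Submodule.span_union, ← Set.image_union]
    congr 2
    ext s
    have : s < r → d s ≤ d r := fun h => hd h.le
    simp only [Set.mem_ofPred_eq, Set.mem_union]
    constructor
    · intro h
      rcases (this h).lt_or_eq with h1 | h1
      · exact Or.inr ⟨h, h1⟩
      · exact Or.inl ⟨h, h1⟩
    · rintro (h | h)
      · exact h.1
      · exact h.1
  have hPW : P ⊓ W = ⊥ := by
    rw [eq_bot_iff, ← h0 r]
    exact inf_le_inf hP inf_le_left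
  have hWQ : W ≤ Q := by
    have h1 : (Q ⊔ P) ⊓ W = Q ⊔ P ⊓ W := sup_inf_assoc_of_le P hQ
    rw [hPW, sup_bot_eq] at h1
    rw [← h1]
    exact le_inf (hPQ ▸ hle) le_rfl
  have h2 := Submodule.finrank_mono hWQ
  have h3 : finrank K Q ≤ (Finset.univ.filter (fun s => s < r ∧ d s = d r)).card := by
    classical
    have he : x '' {s | s < r ∧ d s = d r} =
        (((Finset.univ.filter (fun s => s < r ∧ d s = d r)).image x : Finset X) : Set X) := by
      ext; simp
    have := finrank_span_finset_le_card (R := K)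
      ((Finset.univ.filter (fun s => s < r ∧ d s = d r)).image x)
    rw [Set.finrank, ← he] at this
    exact this.trans Finset.card_image_le
  have h4 : (Finset.univ.filter (fun s => s < r ∧ d s = d r)).card <
      (Finset.univ.filter (fun s => d s = d r)).card := by
    apply Finset.card_lt_card
    refine ⟨fun s hs => ?_, fun h => ?_⟩
    · simp at hs ⊢; exact hs.2
    · have := h (show r ∈ Finset.univ.filter (fun s => d s = d r) by simp)
      simp at this
  have := hc r
  rw [← hW] at this
  omega

theorem flag_exists {k : ℕ} (A D : ℕ → Submodule K X) (hA : Monotone A) (d : Fin k → ℕ)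
    (hd : Monotone d)
    (h0 : ∀ r, A (d r - 1) ⊓ D (d r) = ⊥)
    (hc : ∀ r, (Finset.univ.filter (fun s => d s = d r)).card ≤
      finrank K (D (d r) ⊓ A (d r) : Submodule K X)) :
    ∃ x : Fin k → X, ∀ r, x r ∈ D (d r) ⊓ A (d r) ∧
      x r ∉ Submodule.span K (x '' {s | s < r}) := by
  have key : ∀ l : ℕ, ∃ x : Fin k → X, ∀ r : Fin k, r.1 < l → x r ∈ D (d r) ⊓ A (d r) ∧
      x r ∉ Submodule.span K (x '' {s | s < r}) := by
    intro l
    induction l with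
    | zero => exact ⟨fun _ => 0, fun r hr => absurd hr (Nat.not_lt_zero _)⟩
    | succ l ih =>
      obtain ⟨x, hx⟩ := ih
      by_cases hl : l < k
      · let q : Fin k := ⟨l, hl⟩
        obtain ⟨y, hy1, hy2⟩ := flag_step A D hA d hd h0 hc q x (fun s hs => (hx s hs).1)
        have him : ∀ r : Fin k, r ≤ q →
            Function.update x q y '' {s | s < r} = x '' {s | s < r} := by
          intro r hr
          apply Set.image_congr
          intro s hs
          have : s ≠ q := (lt_of_lt_of_le hs hr).ne
          simp [this]
        refine ⟨Function.update x q y, fun r hr => ?_⟩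
        rw [him r (by change r.1 ≤ l; omega)]
        by_cases hrq : r = q
        · subst hrq
          rw [Function.update_self]
          exact ⟨hy1, hy2⟩
        · rw [Function.update_of_ne hrq]
          refine hx r ?_
          have : r.1 ≠ l := fun h => hrq (Fin.ext h)
          omega
      · exact ⟨x, fun r _ => hx r (by omega)⟩
  obtain ⟨x, hx⟩ := key k
  exact ⟨x, fun r => hx r r.2⟩

theorem flag_finrank {k : ℕ} (x : Fin k → X)
    (hx : ∀ r, x r ∉ Submodule.span K (x '' {s | s < r})) (r : ℕ) (hr : r ≤ k) :
    finrank K (Submodule.span K (x '' {s | s.1 < r})) = r := by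
  induction r with
  | zero => simp
  | succ r ih =>
    have h1 : x '' {s | s.1 < r + 1} = x '' {s | s.1 < r} ∪ {x ⟨r, hr⟩} := by
      rw [← Set.image_singleton, ← Set.image_union]
      congr 1
      ext s
      simp [Fin.ext_iff]
      omega
    have h2 : x ⟨r, hr⟩ ∉ Submodule.span K (x '' {s | s.1 < r}) := hx ⟨r, hr⟩
    rw [h1, Submodule.span_union, Submodule.finrank_sup_span_singleton h2, ih (by omega)]

end Flag

section Suff

/-- spanned by the first `c` standard basis vectors -/
def colU (F : Type*) [Field F] (b c : ℕ) : Submodule F (Fin b → F) :=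
  Submodule.span F (Set.range fun j : Fin (min c b) =>
    (Pi.single (Fin.castLE (min_le_right c b) j) (1 : F) : Fin b → F))

theorem colU_finrank (b c : ℕ) : finrank F (colU F b c) = min c b := by
  unfold colU
  have h : LinearIndependent F (fun j : Fin (min c b) =>
    (Pi.single (Fin.castLE (min_le_right c b) j) (1 : F) : Fin b → F)) := by
    have := (Pi.basisFun F (Fin b)).linearIndependent.comp (Fin.castLE (min_le_right c b))
      (Fin.castLE_injective _)
    convert this using 1
    ext j i
    simp
  rw [finrank_span_eq_card h, Fintype.card_fin]

theorem colU_mono (b : ℕ) {c c' : ℕ} (h : c ≤ c') : colU F b c ≤ colU F b c' := by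
  apply Submodule.span_le.2
  rintro _ ⟨j, rfl⟩
  exact Submodule.subset_span ⟨Fin.castLE (min_le_min_right b h) j, rfl⟩

def blk (F : Type*) [Field F] (a b c : ℕ) : Submodule F (Matrix (Fin a) (Fin b) F) :=
  (Submodule.pi Set.univ (fun _ => colU F b c) : Submodule F (Fin a → Fin b → F))

theorem blk_finrank (a b c : ℕ) : finrank F (blk F a b c) = a * min c b := by
  have := finrank_pi_submodule (fun _ : Fin a => colU F b c)
  simp only [colU_finrank, Finset.sum_const, Finset.card_univ, Fintype.card_fin,
    smul_eq_mul] at this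
  exact this

theorem blk_mono (a b : ℕ) {c c' : ℕ} (h : c ≤ c') : blk F a b c ≤ blk F a b c' :=
  fun _ hx i _ => colU_mono b h (hx i (Set.mem_univ i))

theorem blk_rank {a b c : ℕ} (A : Matrix (Fin a) (Fin b) F) (hA : A ∈ blk F a b c) :
    A.rank ≤ min c b := by
  rw [rank_eq_frk, ← colU_finrank (F := F)]
  apply Submodule.finrank_mono
  apply Submodule.span_le.2
  rintro _ ⟨i, rfl⟩
  exact hA i (Set.mem_univ i)

theorem blk_opt {a b : ℕ} (c : ℕ) (hba : b ≤ a) (ha : 0 < a) :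
    maxrank (blk F a b c) = min c b ∧ IsOptAnticode (blk F a b c) :=
  opt_of hba ha _ (blk_finrank a b c) fun A hA => blk_rank A hA

def stp (F : Type*) [Field F] {t : ℕ} (m n : Fin t → ℕ) (h : ℕ) :
    Submodule F (∀ i : Fin t, Matrix (Fin (m i)) (Fin (n i)) F) :=
  Submodule.pi Set.univ fun i => blk F (m i) (n i) (h - ∑ l ∈ Finset.Iio i, n l)

theorem stp_mono : Monotone (stp F m n) :=
  fun _ _ h _ hx i _ => blk_mono _ _ (Nat.sub_le_sub_right h _) (hx i (Set.mem_univ i))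

theorem step_sum (w : Fin t → ℕ) (j : Fin t) (e : ℕ) (he : e ≤ n j) :
    ∑ i, w i * min ((∑ l ∈ Finset.Iio j, n l + e) - ∑ l ∈ Finset.Iio i, n l) (n i) =
      ∑ i ∈ Finset.Iio j, w i * n i + w j * e := by
  have hlt : ∀ i i' : Fin t, i < i' →
      ∑ l ∈ Finset.Iio i, n l + n i ≤ ∑ l ∈ Finset.Iio i', n l := by
    intro i i' h
    rw [add_comm, ← Finset.sum_insert (s := Finset.Iio i) (a := i) (by simp)]
    apply Finset.sum_le_sum_of_subset
    intro l hl
    simp only [Finset.mem_insert, Finset.mem_Iio] at hl ⊢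
    rcases hl with rfl | hl
    · exact h
    · exact hl.trans h
  rw [← Finset.sum_subset (Finset.subset_univ (insert j (Finset.Iio j))),
    Finset.sum_insert (by simp), add_comm]
  · congr 1
    · apply Finset.sum_congr rfl
      intro i hi
      have := hlt i j (by simpa using hi)
      congr 1
      omega
    · congr 1
      omega
  · intro i _ hi
    simp only [Finset.mem_insert, Finset.mem_Iio, not_or, not_lt] at hi
    have := hlt j i (lt_of_le_of_ne hi.2 (Ne.symm hi.1))
    have h0 : min ((∑ l ∈ Finset.Iio j, n l + e) - ∑ l ∈ Finset.Iio i, n l) (n i) = 0 := by omega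
    rw [h0, mul_zero]

theorem stp_maxrank (hmn : ∀ i, n i ≤ m i) (hm : ∀ i, 0 < m i) (j : Fin t) (e : ℕ)
    (he : e ≤ n j) :
    ∑ i, maxrank (blk F (m i) (n i) ((∑ l ∈ Finset.Iio j, n l + e) - ∑ l ∈ Finset.Iio i, n l)) =
      ∑ l ∈ Finset.Iio j, n l + e := by
  have := step_sum (n := n) (fun _ => 1) j e he
  simp only [one_mul] at this
  exact (Finset.sum_congr rfl fun i _ => (blk_opt _ (hmn i) (hm i)).1).trans this

theorem stp_finrank (j : Fin t) (e : ℕ) (he : e ≤ n j) :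
    finrank F (stp F m n (∑ l ∈ Finset.Iio j, n l + e)) =
      ∑ i ∈ Finset.Iio j, m i * n i + m j * e := by
  unfold stp
  rw [finrank_pi_mat, ← step_sum m j e he]
  exact Finset.sum_congr rfl fun i _ => blk_finrank _ _ _

theorem stp_srk (hmn : ∀ i, n i ≤ m i) (hm : ∀ i, 0 < m i) (j : Fin t) (e : ℕ) (he : e ≤ n j)
    (C : ∀ i : Fin t, Matrix (Fin (m i)) (Fin (n i)) F)
    (hC : C ∈ stp F m n (∑ l ∈ Finset.Iio j, n l + e)) : srk C ≤ ∑ l ∈ Finset.Iio j, n l + e := by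
  rw [← stp_maxrank (F := F) hmn hm j e he]
  exact Finset.sum_le_sum fun i _ => rank_le_maxrank (hC i (Set.mem_univ i))

theorem minDist_le {D : Submodule F (∀ i : Fin t, Matrix (Fin (m i)) (Fin (n i)) F)}
    {C : ∀ i : Fin t, Matrix (Fin (m i)) (Fin (n i)) F} (hC : C ∈ D) (h0 : C ≠ 0) :
    minDist D ≤ srk C := Nat.sInf_le ⟨C, hC, h0, rfl⟩

theorem msrd_bot (hmn : ∀ i, n i ≤ m i) (hm : ∀ i, 0 < m i)
    (D : Submodule F (∀ i : Fin t, Matrix (Fin (m i)) (Fin (n i)) F)) (h : ℕ)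
    (hD : IsMSRD D) (hh : minDist D = h) : stp F m n (h - 1) ⊓ D = ⊥ := by
  obtain ⟨j, δ, h1, h2, h3⟩ := hD
  rw [eq_bot_iff]
  intro C hC
  by_contra h0
  have h4 := minDist_le hC.2 h0
  have h5 : h - 1 = ∑ l ∈ Finset.Iio j, n l + δ := by omega
  have h6 := hC.1
  rw [h5] at h6
  have := stp_srk hmn hm j δ (by omega) C h6
  omega

theorem msrd_dim (D : Submodule F (∀ i : Fin t, Matrix (Fin (m i)) (Fin (n i)) F)) (h : ℕ)
    (hD : IsMSRD D) (hh : minDist D = h) :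
    ∃ j : Fin t, ∃ e, 1 ≤ e ∧ e ≤ n j ∧ h = ∑ l ∈ Finset.Iio j, n l + e ∧
      m j ≤ finrank F (D ⊓ stp F m n h : Submodule F _) := by
  obtain ⟨j, δ, h1, h2, h3⟩ := hD
  have h5 : h = ∑ l ∈ Finset.Iio j, n l + (δ + 1) := by omega
  refine ⟨j, δ + 1, by omega, h1, h5, ?_⟩
  have h6 := stp_finrank (F := F) (m := m) j (δ + 1) h1
  rw [← h5] at h6
  have h7 := Submodule.finrank_sup_add_finrank_inf_eq D (stp F m n h)
  have h8 := Submodule.finrank_le (D ⊔ stp F m n h)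
  have h9 : finrank F (∀ i : Fin t, Matrix (Fin (m i)) (Fin (n i)) F) = ∑ i, m i * n i := by
    rw [Module.finrank_pi_fintype]
    simp [Module.finrank_matrix]
  have h10 : ∑ i, m i * n i = ∑ i ∈ Finset.Iio j, m i * n i + ∑ i ∈ Finset.Ici j, m i * n i := by
    rw [← Finset.sum_union]
    · congr 1
      ext i
      simp [lt_or_ge]
    · rw [Finset.disjoint_left]
      intro i hi hi'
      simp at hi hi'
      omega
  have h11 : m j * (δ + 1) = δ * m j + m j := by ring
  omega

theorem sufficiency
    (hn_pos : ∀ i, 0 < n i) (hmn : ∀ i, n i ≤ m i) (hm : ∀ i, 0 < m i)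
    (Dc : ℕ → Submodule F (∀ i : Fin t, Matrix (Fin (m i)) (Fin (n i)) F))
    (hDc_chain : ∀ h, 1 ≤ h → h < ∑ i, n i → Dc (h + 1) ≤ Dc h)
    (hDc_MSRD : ∀ h, 1 ≤ h → h ≤ ∑ i, n i → IsMSRD (Dc h) ∧ minDist (Dc h) = h)
    (k : ℕ) (d : Fin k → ℕ) (hpos : ∀ r, 1 ≤ d r)
    (hmono : Monotone d) (hdN : ∀ r, d r ≤ ∑ i, n i)
    (hcount : ∀ i : Fin t, ∀ j : ℕ, 1 ≤ j → j ≤ n i →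
          (Finset.univ.filter (fun r : Fin k => d r = ∑ l ∈ Finset.Iio i, n l + j)).card
            ≤ m i) :
      ∃ 𝒞 : Submodule F (∀ i : Fin t, Matrix (Fin (m i)) (Fin (n i)) F),
        Module.finrank F 𝒞 = k ∧ (∀ r : Fin k, gw 𝒞 (r.1 + 1) = d r) ∧
        ChainCondition 𝒞 ∧ ∀ r : Fin k, greedyWt 𝒞 (r.1 + 1) = d r := by
  have hM := fun r => hDc_MSRD (d r) (hpos r) (hdN r)
  have hanti : ∀ a b, 1 ≤ a → a ≤ b → b ≤ ∑ i, n i → Dc b ≤ Dc a := by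
    intro a b ha hab
    induction b, hab using Nat.le_induction with
    | base => intro _; exact le_rfl
    | succ b hb ih => intro h; exact (hDc_chain b (by omega) (by omega)).trans (ih (by omega))
  obtain ⟨x, hx⟩ := flag_exists (stp F m n) Dc stp_mono d hmono
    (fun r => msrd_bot hmn hm _ _ (hM r).1 (hM r).2)
    (fun r => by
      obtain ⟨j, e, h1, h2, h3, h4⟩ := msrd_dim _ _ (hM r).1 (hM r).2
      have := hcount j e h1 h2
      rw [← h3] at this
      exact this.trans h4)
  let 𝒟 : ℕ → Submodule F (∀ i : Fin t, Matrix (Fin (m i)) (Fin (n i)) F) :=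
    fun r => Submodule.span F (x '' {s | s.1 < r})
  have hfin : ∀ r ≤ k, finrank F (𝒟 r) = r := fun r hr =>
    flag_finrank x (fun r => (hx r).2) r hr
  have hDmono : Monotone 𝒟 := fun a b hab =>
    Submodule.span_mono (Set.image_mono fun s (hs : s.1 < a) => lt_of_lt_of_le hs hab)
  have hle : ∀ r ≤ k, 𝒟 r ≤ 𝒟 k := fun r hr => hDmono hr
  have hwt : ∀ r : Fin k, codeWt (𝒟 (r.1 + 1)) ≤ d r := by
    intro r
    obtain ⟨j, e, h1, h2, h3, -⟩ := msrd_dim _ _ (hM r).1 (hM r).2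
    have h4 := stp_maxrank (F := F) hmn hm j e h2
    rw [← h3] at h4
    refine (codeWt_le (fun i => (blk_opt _ (hmn i) (hm i)).2) ?_).trans h4.le
    apply Submodule.span_le.2
    rintro _ ⟨s, hs, rfl⟩
    have hs' : s ≤ r := Nat.lt_succ_iff.1 hs
    exact stp_mono (hmono hs') (hx s).1.2
  have hlow : ∀ r : Fin k, ∀ ℰ ≤ 𝒟 k, r.1 + 1 ≤ finrank F ℰ → d r ≤ codeWt ℰ := by
    intro r ℰ hE hfE
    let T := Submodule.span F (x '' {s | r ≤ s})
    have hT : T ≤ Dc (d r) := by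
      apply Submodule.span_le.2
      rintro _ ⟨s, hs, rfl⟩
      exact hanti _ _ (hpos r) (hmono hs) (hdN s) (hx s).1.1
    have hsup : 𝒟 r.1 ⊔ T = 𝒟 k := by
      change Submodule.span F _ ⊔ Submodule.span F _ = Submodule.span F _
      rw [← Submodule.span_union, ← Set.image_union]
      congr 2
      ext s
      have := s.2
      simp only [Set.mem_union, Set.mem_ofPred_eq, this, iff_true]
      exact lt_or_ge s.1 r.1
    have hTk : T ≤ 𝒟 k := hsup ▸ le_sup_right
    have f1 := Submodule.finrank_sup_add_finrank_inf_eq (𝒟 r.1) T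
    rw [hsup, hfin k le_rfl, hfin r.1 r.2.le] at f1
    have f2 := Submodule.finrank_sup_add_finrank_inf_eq ℰ T
    have f3 := Submodule.finrank_mono (sup_le hE hTk)
    rw [hfin k le_rfl] at f3
    have hr := r.2
    have hne : ℰ ⊓ T ≠ ⊥ := by
      intro h
      rw [h, finrank_bot] at f2
      omega
    obtain ⟨C, hC, hC0⟩ := Submodule.exists_mem_ne_zero_of_ne_bot hne
    have g1 := minDist_le (hT hC.2) hC0
    rw [(hM r).2] at g1
    exact g1.trans (srk_le_codeWt hmn hm ℰ C hC.1)
  have hgw : ∀ r : Fin k, gw (𝒟 k) (r.1 + 1) = d r := by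
    intro r
    have hr := r.2
    apply le_antisymm
    · exact (gw_le (hle _ hr) (hfin _ hr).ge).trans (hwt r)
    · obtain ⟨ℰ, h1, h2, h3⟩ := exists_gw (𝒞 := 𝒟 k) (r := r.1 + 1)
        (by rw [hfin k le_rfl]; exact hr)
      rw [← h3]
      exact hlow r ℰ h1 h2
  have hcw : ∀ r : Fin k, codeWt (𝒟 (r.1 + 1)) = gw (𝒟 k) (r.1 + 1) := by
    intro r
    rw [hgw]
    exact le_antisymm (hwt r) (hlow r _ (hle _ r.2) (hfin _ r.2).ge)
  have hgr : ∀ r : ℕ, r < k → IsGreedy (𝒟 k) (r + 1) (𝒟 (r + 1)) := by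
    intro r
    induction r with
    | zero => intro h; exact ⟨hle _ h, hfin _ h, hcw ⟨0, h⟩⟩
    | succ r ih =>
      intro h
      refine ⟨hle _ h, hfin _ h, ⟨𝒟 (r + 1), ih (by omega), hDmono (by omega)⟩, ?_⟩
      intro ℰ h1 h2 _
      refine (hcw ⟨r + 1, h⟩).le.trans (gw_le h1 h2.ge)
  have hgr2 : ∀ r : ℕ, r < k → ∀ ℰ, IsGreedy (𝒟 k) (r + 1) ℰ →
      codeWt ℰ = gw (𝒟 k) (r + 1) := by
    intro r h ℰ hE
    cases r with
    | zero => exact hE.2.2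
    | succ r =>
      obtain ⟨h1, h2, h3, h4⟩ := hE
      apply le_antisymm
      · exact (h4 (𝒟 (r + 2)) (hle _ h) (hfin _ h)
          ⟨𝒟 (r + 1), hgr r (by omega), hDmono (by omega)⟩).trans (hcw ⟨r + 1, h⟩).le
      · exact gw_le h1 h2.ge
  refine ⟨𝒟 k, hfin k le_rfl, hgw, ⟨𝒟, ?_, ?_, ?_, ?_⟩, ?_⟩
  · simp [𝒟]
  · rw [hfin k le_rfl]
  · rw [hfin k le_rfl]
    intro r hr
    refine lt_of_le_of_ne (hDmono (by omega)) fun h => ?_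
    have h1 := hfin r hr.le
    rw [h, hfin _ hr] at h1
    omega
  · rw [hfin k le_rfl]
    intro r h1 h2
    obtain ⟨s, rfl⟩ := Nat.exists_eq_add_of_le' h1
    exact hcw ⟨s, h2⟩
  · intro r
    have : {w | ∃ ℰ, IsGreedy (𝒟 k) (r.1 + 1) ℰ ∧ codeWt ℰ = w} = {d r} := by
      ext w
      constructor
      · rintro ⟨ℰ, h1, rfl⟩
        exact (hgr2 r.1 r.2 ℰ h1).trans (hgw r)
      · rintro rfl
        exact ⟨_, hgr r.1 r.2, (hcw r).trans (hgw r)⟩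
    unfold greedyWt
    rw [this, csInf_singleton]

end Suff

/-- Assume there is a chain of MSRD codes `𝕄 = 𝒟_1 ⊇ 𝒟_2 ⊇ ⋯ ⊇ 𝒟_n` with `d(𝒟_h) = h`.
A sequence of positive integers `d_1, …, d_k` is the sequence of generalized sum-rank weights
of a code `𝒞 ⊆ 𝕄` iff it is non-decreasing with values in `[n_1 + ⋯ + n_t]` and each value
`n_1 + ⋯ + n_{i-1} + j` appears at most `m i` times; moreover `𝒞` may be chosen satisfying
the chain condition, hence with `g_r(𝒞) = d_r` for all `r ∈ [k]`. -/
theorem gw_sum_rank_characterization (ht : 0 < t)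
    (hm_mono : ∀ i j : Fin t, i ≤ j → m j ≤ m i)
    (hn_pos : ∀ i, 0 < n i) (hmn : ∀ i, n i ≤ m i)
    (Dc : ℕ → Submodule F (∀ i : Fin t, Matrix (Fin (m i)) (Fin (n i)) F))
    (hDc0 : Dc 1 = ⊤)
    (hDc_chain : ∀ h, 1 ≤ h → h < ∑ i, n i → Dc (h + 1) ≤ Dc h)
    (hDc_MSRD : ∀ h, 1 ≤ h → h ≤ ∑ i, n i → IsMSRD (Dc h) ∧ minDist (Dc h) = h)
    (k : ℕ) (d : Fin k → ℕ) (hpos : ∀ r, 1 ≤ d r) :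
    ((∃ 𝒞 : Submodule F (∀ i : Fin t, Matrix (Fin (m i)) (Fin (n i)) F),
        Module.finrank F 𝒞 = k ∧ ∀ r : Fin k, gw 𝒞 (r.1 + 1) = d r) ↔
      (Monotone d ∧ (∀ r, d r ≤ ∑ i, n i) ∧
        ∀ i : Fin t, ∀ j : ℕ, 1 ≤ j → j ≤ n i →
          (Finset.univ.filter (fun r : Fin k => d r = ∑ l ∈ Finset.Iio i, n l + j)).card
            ≤ m i)) ∧
    ((Monotone d ∧ (∀ r, d r ≤ ∑ i, n i) ∧
        ∀ i : Fin t, ∀ j : ℕ, 1 ≤ j → j ≤ n i →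
          (Finset.univ.filter (fun r : Fin k => d r = ∑ l ∈ Finset.Iio i, n l + j)).card
            ≤ m i) →
      ∃ 𝒞 : Submodule F (∀ i : Fin t, Matrix (Fin (m i)) (Fin (n i)) F),
        Module.finrank F 𝒞 = k ∧ (∀ r : Fin k, gw 𝒞 (r.1 + 1) = d r) ∧
        ChainCondition 𝒞 ∧ ∀ r : Fin k, greedyWt 𝒞 (r.1 + 1) = d r) := by
  have hm : ∀ i, 0 < m i := fun i => lt_of_lt_of_le (hn_pos i) (hmn i)
  have suff := sufficiency hn_pos hmn hm Dc hDc_chain hDc_MSRD k d hpos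
  refine ⟨⟨?_, ?_⟩, fun h => suff h.1 h.2.1 h.2.2⟩
  · rintro ⟨𝒞, h1, h2⟩
    exact necessity hm_mono hmn hm k d 𝒞 h1 h2
  · intro h
    obtain ⟨𝒞, h1, h2, -, -⟩ := suff h.1 h.2.1 h.2.2
    exact ⟨𝒞, h1, h2⟩
end

section
/- Let j = min{i ∈ [t] : m_i = m_t} and let d = n_1 + ... + n_{j−1} + 1. Suppose that n_i ≤ m_t for all i ∈ [t] and that q > t. Then there exist MSRD codes 𝒞_n ⊆ 𝒞_{n−1} ⊆ ... ⊆ 𝒞_{d+1} ⊆ 𝒞_d ⊆ 𝕄 with d(𝒞_i) = i for all d ≤ i ≤ n, where n = n_1 + ... + n_t. -/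
open Module

variable {F : Type*} [Field F] [Fintype F] {t : ℕ} {m n : Fin t → ℕ}

section LRS
variable {F L : Type*} [Field F] [Field L] [Algebra F L]

/-- The semilinear operator `y ↦ a * σ y`. -/
noncomputable def lrsD (σ : L ≃ₐ[F] L) (a : L) : Module.End F L :=
  LinearMap.mulLeft F a * σ.toLinearMap

@[simp] lemma lrsD_apply (σ : L ≃ₐ[F] L) (a y : L) : lrsD σ a y = a * σ y := rfl

/-- The operator evaluation of the skew polynomial `∑_{s<k} f s x^s` at `a`. -/
noncomputable def lrsOp (σ : L ≃ₐ[F] L) (k : ℕ) (f : ℕ → L) (a : L) : Module.End F L :=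
  ∑ s ∈ Finset.range k, LinearMap.mulLeft F (f s) * lrsD σ a ^ s

lemma lrsD_pow_mul (σ : L ≃ₐ[F] L) (a b y : L) (s : ℕ) :
    (lrsD σ a ^ s) (b * y) = (σ ^ s) b * (lrsD σ a ^ s) y := by
  induction s with
  | zero => simp
  | succ s ih =>
    rw [pow_succ', Module.End.mul_apply, ih, pow_succ', Module.End.mul_apply]
    simp [mul_left_comm]

lemma lrsOp_succ (σ : L ≃ₐ[F] L) (k : ℕ) (f : ℕ → L) (a : L) :
    lrsOp σ (k + 1) f a = lrsOp σ k f a + LinearMap.mulLeft F (f k) * lrsD σ a ^ k := by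
  rw [lrsOp, Finset.sum_range_succ, lrsOp]

lemma lrsOp_congr (σ : L ≃ₐ[F] L) (k : ℕ) {f g : ℕ → L} (a : L) (h : ∀ s < k, f s = g s) :
    lrsOp σ k f a = lrsOp σ k g a := by
  refine Finset.sum_congr rfl fun s hs => ?_
  rw [h s (Finset.mem_range.1 hs)]

/-- Right division by `x - b`. -/
lemma lrs_div (σ : L ≃ₐ[F] L) (b : L) (k : ℕ) (f : ℕ → L) :
    ∃ (g : ℕ → L) (c : L), (∀ a y, lrsOp σ (k + 1) f a y =
      lrsOp σ k g a (a * σ y - b * y) + c * y) ∧ ∀ k', k = k' + 1 → g k' = f k := by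
  induction k generalizing f with
  | zero => exact ⟨0, f 0, by simp [lrsOp], by simp⟩
  | succ k ih =>
    obtain ⟨g, c, h, -⟩ := ih (Function.update f k (f k + f (k + 1) * (σ ^ k) b))
    refine ⟨Function.update g k (f (k + 1)), c, fun a y => ?_, fun k' hk' => ?_⟩
    · have h1 := h a y
      rw [lrsOp_succ, lrsOp_congr σ k (g := f) a
        (fun s hs => Function.update_of_ne hs.ne _ _)] at h1
      rw [lrsOp_succ, lrsOp_succ, lrsOp_succ σ k (Function.update g k _),
        lrsOp_congr σ k (f := Function.update g k _) (g := g) a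
        (fun s hs => Function.update_of_ne hs.ne _ _)]
      simp only [Function.update_self, LinearMap.add_apply, Module.End.mul_apply,
        LinearMap.mulLeft_apply] at h1 ⊢
      rw [map_sub (lrsD σ a ^ k), lrsD_pow_mul σ a b, pow_succ, Module.End.mul_apply, lrsD_apply]
      linear_combination h1
    · obtain rfl : k = k' := by omega
      simp

lemma finrank_ker_le_of_comp [FiniteDimensional F L] (A B C : Module.End F L)
    (h : ∀ y, A y = B (C y)) :
    finrank F (LinearMap.ker A) ≤ finrank F (LinearMap.ker B) + finrank F (LinearMap.ker C) := by
  let φ : LinearMap.ker A →ₗ[F] LinearMap.ker B :=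
    C.restrict (fun y hy => by
      rw [LinearMap.mem_ker] at hy ⊢; rw [← h, hy])
  rw [← LinearMap.finrank_range_add_finrank_ker φ]
  refine add_le_add (Submodule.finrank_le _) ?_
  let ψ : LinearMap.ker φ →ₗ[F] LinearMap.ker C :=
    ((LinearMap.ker A).subtype ∘ₗ (LinearMap.ker φ).subtype).codRestrict _ (fun y => by
      have h1 : φ y.1 = 0 := y.2
      exact congrArg Subtype.val h1)
  refine LinearMap.finrank_le_finrank_of_injective (f := ψ) ?_
  intro x y hxy
  have := congrArg Subtype.val hxy
  exact Subtype.ext (Subtype.ext this)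

/-- The root bound for skew polynomials. -/
lemma lrs_bound [FiniteDimensional F L] {t : ℕ} (σ : L ≃ₐ[F] L)
    (hfix : ∀ x, σ x = x → ∃ c : F, algebraMap F L c = x) (a : Fin t → L)
    (ha : ∀ i, a i ≠ 0) (hN : ∀ i l x, x ≠ 0 → a l * σ x = a i * x → l = i)
    (k : ℕ) (f : ℕ → L) (hf : f k ≠ 0) :
    ∑ i, finrank F (LinearMap.ker (lrsOp σ (k + 1) f (a i))) ≤ k := by
  induction k generalizing f with
  | zero =>
    refine (Finset.sum_eq_zero fun i _ => ?_).le
    rw [Submodule.finrank_eq_zero, LinearMap.ker_eq_bot']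
    intro y hy
    simpa [lrsOp, hf] using hy
  | succ k ih =>
    by_cases h0 : ∀ i, LinearMap.ker (lrsOp σ (k + 1 + 1) f (a i)) = ⊥
    · refine (Finset.sum_eq_zero fun i _ => ?_).le.trans (Nat.zero_le _)
      rw [h0, finrank_bot]
    push Not at h0
    obtain ⟨i, hi⟩ := h0
    obtain ⟨β, hβ, hβ0⟩ := Submodule.exists_mem_ne_zero_of_ne_bot hi
    obtain ⟨g, c, hg, hgk⟩ := lrs_div σ (a i * σ β / β) (k + 1) f
    have hc : c = 0 := by
      have := hg (a i) β
      rw [LinearMap.mem_ker.1 hβ, div_mul_cancel₀ _ hβ0, sub_self, map_zero, zero_add] at this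
      simpa [hβ0] using this.symm
    subst hc
    have hgk' := hgk k rfl
    have IH := ih g (hgk' ▸ hf)
    let C : L → Module.End F L := fun a' => lrsD σ a' - LinearMap.mulLeft F (a i * σ β / β)
    have hσβ : σ β ≠ 0 := by simpa using hβ0
    have key : ∀ l y, y ∈ LinearMap.ker (C (a l)) → y ≠ 0 → l = i ∧ σ (y / β) = y / β := by
      intro l y hy hy0
      have hy' : a l * σ y = a i * σ β / β * y := by
        simpa [C, sub_eq_zero] using hy
      have h2 : a l * σ (y / β) = a i * (y / β) := by
        rw [map_div₀]
        field_simp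
        field_simp at hy'
        linear_combination hy'
      have hl := hN i l (y / β) (div_ne_zero hy0 hβ0) h2
      subst hl
      exact ⟨rfl, mul_left_cancel₀ (ha l) h2⟩
    have hker : ∀ l, finrank F (LinearMap.ker (C (a l))) ≤ if l = i then 1 else 0 := by
      intro l
      split_ifs with hl
      · refine (Submodule.finrank_mono (t := Submodule.span F {β}) fun y hy => ?_).trans
          (finrank_span_singleton hβ0).le
        by_cases hy0 : y = 0
        · simp [hy0]
        obtain ⟨c, hc⟩ := hfix _ (key l y hy hy0).2
        refine Submodule.mem_span_singleton.2 ⟨c, ?_⟩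
        rw [Algebra.smul_def, hc, div_mul_cancel₀ _ hβ0]
      · rw [Nat.le_zero, Submodule.finrank_eq_zero, LinearMap.ker_eq_bot']
        intro y hy
        by_contra hy0
        exact hl (key l y hy hy0).1
    calc _ ≤ ∑ l, (finrank F (LinearMap.ker (lrsOp σ (k + 1) g (a l)))
          + if l = i then 1 else 0) := by
          refine Finset.sum_le_sum fun l _ => ?_
          refine (finrank_ker_le_of_comp _ _ (C (a l)) fun y => ?_).trans
            (Nat.add_le_add_left (hker l) _)
          rw [hg]
          simp [C]
      _ ≤ _ := by
          rw [Finset.sum_add_distrib]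
          simpa using IH

lemma lrs_bound' [FiniteDimensional F L] {t : ℕ} (σ : L ≃ₐ[F] L)
    (hfix : ∀ x, σ x = x → ∃ c : F, algebraMap F L c = x) (a : Fin t → L)
    (ha : ∀ i, a i ≠ 0) (hN : ∀ i l x, x ≠ 0 → a l * σ x = a i * x → l = i)
    (k : ℕ) (f : ℕ → L) (hf : ∃ s < k, f s ≠ 0) :
    ∑ i, finrank F (LinearMap.ker (lrsOp σ k f (a i))) + 1 ≤ k := by
  induction k with
  | zero => simp at hf
  | succ k ih =>
    by_cases h : f k = 0
    · have : ∀ i, lrsOp σ (k + 1) f (a i) = lrsOp σ k f (a i) := fun i => by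
        rw [lrsOp_succ, h]; simp
      rw [Finset.sum_congr rfl fun i _ => by rw [this i]]
      obtain ⟨s, hs, hs0⟩ := hf
      have : s ≠ k := by rintro rfl; exact hs0 h
      have := ih ⟨s, by omega, hs0⟩
      omega
    · have := lrs_bound σ hfix a ha hN k f h
      omega

end LRS

/-- Existence of the field data. -/
lemma exists_lrs_data (F : Type*) [Field F] [Fintype F] (t M : ℕ) (hM : 0 < M)
    (hq : t < Fintype.card F) :
    ∃ (L : Type) (_ : Field L) (_ : Algebra F L) (_ : FiniteDimensional F L)
      (σ : L ≃ₐ[F] L) (a : Fin t → L), finrank F L = M ∧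
      (∀ x, σ x = x → ∃ c : F, algebraMap F L c = x) ∧ (∀ i, a i ≠ 0) ∧
      (∀ i l x, x ≠ 0 → a l * σ x = a i * x → l = i) := by
  classical
  obtain ⟨p, hp⟩ := CharP.exists F
  have : Fact p.Prime := ⟨CharP.char_is_prime F p⟩
  have : NeZero M := ⟨hM.ne'⟩
  let L := FiniteField.Extension F p M
  obtain ⟨e⟩ : Nonempty (Fin t ↪ Fˣ) := by
    apply Function.Embedding.nonempty_of_card_le
    rw [Fintype.card_fin, Fintype.card_units]
    omega
  choose a ha using fun i => FiniteField.norm_surjective F L (e i : F)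
  refine ⟨L, inferInstance, inferInstance, inferInstance,
    FiniteField.frobeniusAlgEquivOfAlgebraic F L, a, FiniteField.finrank_extension F p M, ?_, ?_, ?_⟩
  · intro x hx
    have := (IsGalois.mem_range_algebraMap_iff_fixed (F := F) (E := L) x).2 (fun τ => by
      obtain ⟨s, hs⟩ := (FiniteField.bijective_frobeniusAlgEquivOfAlgebraic_pow F L).2 τ
      rw [← hs]
      show (FiniteField.frobeniusAlgEquivOfAlgebraic F L ^ (s : ℕ)) x = x
      induction (s : ℕ) with
      | zero => simp
      | succ s ih => rw [pow_succ, AlgEquiv.mul_apply, hx, ih])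
    exact this
  · intro i h
    have := ha i
    rw [h, Algebra.norm_zero] at this
    exact (e i).ne_zero this.symm
  · intro i l x hx h
    have h1 := congrArg (Algebra.norm F) h
    rw [map_mul, map_mul, Algebra.norm_eq_of_algEquiv, ha, ha] at h1
    have := mul_right_cancel₀ (Algebra.norm_ne_zero_iff.2 hx) h1
    exact e.injective (Units.ext this)

section Code
variable {F : Type*} [Field F] {t : ℕ} {m n : Fin t → ℕ}
variable {L : Type*} [Field L] [Algebra F L]

/-- Extension of a finite message by zero. -/
def lrsExt {k : ℕ} (f : Fin k → L) (s : ℕ) : L := if h : s < k then f ⟨s, h⟩ else 0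

/-- The encoder of the linearized Reed-Solomon code. -/
noncomputable def lrsEnc (σ : L ≃ₐ[F] L) (a : Fin t → L)
    (φ : ∀ i : Fin t, L →ₗ[F] (Fin (m i) → F)) (β : ∀ i : Fin t, Fin (n i) → L) (k : ℕ) :
    (Fin k → L) →ₗ[F] (∀ i : Fin t, Matrix (Fin (m i)) (Fin (n i)) F) where
  toFun f i := Matrix.of fun r c => φ i (lrsOp σ k (lrsExt f) (a i) (β i c)) r
  map_add' f g := by
    ext i r c
    have : lrsOp σ k (lrsExt (f + g)) (a i) (β i c) =
        lrsOp σ k (lrsExt f) (a i) (β i c) + lrsOp σ k (lrsExt g) (a i) (β i c) := by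
      simp only [lrsOp, LinearMap.sum_apply, ← Finset.sum_add_distrib]
      refine Finset.sum_congr rfl fun s hs => ?_
      simp [lrsExt, Finset.mem_range.1 hs, add_mul]
    simp [this]
  map_smul' x f := by
    ext i r c
    have : lrsOp σ k (lrsExt (x • f)) (a i) (β i c) =
        x • lrsOp σ k (lrsExt f) (a i) (β i c) := by
      simp only [lrsOp, LinearMap.sum_apply, Finset.smul_sum]
      refine Finset.sum_congr rfl fun s hs => ?_
      simp [lrsExt, Finset.mem_range.1 hs]
    simp [this]

lemma lrsEnc_apply (σ : L ≃ₐ[F] L) (a : Fin t → L)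
    (φ : ∀ i : Fin t, L →ₗ[F] (Fin (m i) → F)) (β : ∀ i : Fin t, Fin (n i) → L) (k : ℕ)
    (f : Fin k → L) (i : Fin t) (r : Fin (m i)) (c : Fin (n i)) :
    lrsEnc σ a φ β k f i r c = φ i (lrsOp σ k (lrsExt f) (a i) (β i c)) r := rfl

lemma lrsEnc_nested (σ : L ≃ₐ[F] L) (a : Fin t → L)
    (φ : ∀ i : Fin t, L →ₗ[F] (Fin (m i) → F)) (β : ∀ i : Fin t, Fin (n i) → L) (k : ℕ) :
    LinearMap.range (lrsEnc σ a φ β k) ≤ LinearMap.range (lrsEnc σ a φ β (k + 1)) := by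
  rintro _ ⟨f, rfl⟩
  refine ⟨fun s => lrsExt f s, ?_⟩
  ext i r c
  rw [lrsEnc_apply, lrsEnc_apply, lrsOp_succ]
  rw [lrsOp_congr σ k (g := lrsExt f) (a i) (fun s hs => by
    simp [lrsExt, Nat.lt_succ_of_lt hs])]
  have : lrsExt (k := k + 1) (fun s => lrsExt f s) k = 0 := by simp [lrsExt]
  rw [this]
  simp

variable [FiniteDimensional F L]

lemma lrs_block_rank {M N : ℕ} (φ : L →ₗ[F] (Fin M → F)) (hφ : Function.Injective φ)
    (β : Fin N → L) (hβ : LinearIndependent F β) (A : Module.End F L)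
    (C : Matrix (Fin M) (Fin N) F) (hC : ∀ r c, C r c = φ (A (β c)) r) :
    N ≤ C.rank + finrank F (LinearMap.ker A) := by
  have h1 := LinearMap.finrank_range_add_finrank_ker C.mulVecLin
  rw [Module.finrank_fin_fun] at h1
  have h2 : ∀ v, C.mulVecLin v = φ (A (Fintype.linearCombination F β v)) := by
    intro v
    ext r
    simp [Matrix.mulVec, dotProduct, hC, Fintype.linearCombination_apply, map_sum,
      Finset.sum_apply, mul_comm]
  have hinj : Function.Injective (Fintype.linearCombination F β) :=
    (linearIndependent_iff_injective_fintypeLinearCombination).1 hβ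
  let ψ : LinearMap.ker C.mulVecLin →ₗ[F] LinearMap.ker A :=
    (Fintype.linearCombination F β).restrict (fun v hv => by
      rw [LinearMap.mem_ker] at hv ⊢
      rw [h2] at hv
      exact hφ (by rw [hv, map_zero]))
  have h3 : finrank F (LinearMap.ker C.mulVecLin) ≤ finrank F (LinearMap.ker A) := by
    refine LinearMap.finrank_le_finrank_of_injective (f := ψ) ?_
    intro x y hxy
    exact Subtype.ext (hinj (congrArg Subtype.val hxy))
  rw [Matrix.rank]
  omega

lemma lrs_rank_le_cols {M N : ℕ} (C : Matrix (Fin M) (Fin N) F) (s : Finset (Fin N))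
    (h : ∀ c ∉ s, ∀ r, C r c = 0) : C.rank ≤ s.card := by
  rw [← Matrix.rank_transpose]
  refine Matrix.rank_le_card_of_support_subset _ s ?_
  rw [Function.support_subset_iff']
  intro c hc
  ext r
  exact h c hc r

end Code

section Final
variable {F : Type*} [Field F] {t : ℕ} {m n : Fin t → ℕ}
variable {L : Type*} [Field L] [Algebra F L] [FiniteDimensional F L]

lemma lrs_weight (σ : L ≃ₐ[F] L)
    (hfix : ∀ x, σ x = x → ∃ c : F, algebraMap F L c = x) (a : Fin t → L)
    (ha : ∀ i, a i ≠ 0) (hN : ∀ i l x, x ≠ 0 → a l * σ x = a i * x → l = i)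
    (φ : ∀ i : Fin t, L →ₗ[F] (Fin (m i) → F)) (hφ : ∀ i, Function.Injective (φ i))
    (β : ∀ i : Fin t, Fin (n i) → L) (hβ : ∀ i, LinearIndependent F (β i)) (k : ℕ)
    (f : Fin k → L) (hf : f ≠ 0) :
    ∑ i, n i + 1 ≤ srk (lrsEnc σ a φ β k f) + k := by
  obtain ⟨s, hs⟩ := Function.ne_iff.1 hf
  have h1 := lrs_bound' σ hfix a ha hN k (lrsExt f) ⟨s, s.2, by simpa [lrsExt] using hs⟩
  have h2 := Finset.sum_le_sum (s := Finset.univ) fun i _ =>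
    lrs_block_rank (φ i) (hφ i) (β i) (hβ i) (lrsOp σ k (lrsExt f) (a i))
      (lrsEnc σ a φ β k f i) (fun r c => rfl)
  rw [Finset.sum_add_distrib] at h2
  rw [srk]
  omega

lemma lrs_exists_low (σ : L ≃ₐ[F] L) (a : Fin t → L)
    (φ : ∀ i : Fin t, L →ₗ[F] (Fin (m i) → F))
    (β : ∀ i : Fin t, Fin (n i) → L) (k : ℕ) (hk : k + 1 ≤ ∑ i, n i) :
    ∃ f : Fin (k + 1) → L, f ≠ 0 ∧ srk (lrsEnc σ a φ β (k + 1) f) + k ≤ ∑ i, n i := by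
  classical
  obtain ⟨S, -, hS⟩ := Finset.exists_subset_card_eq (s := (Finset.univ : Finset (Σ i, Fin (n i))))
    (n := k) (by simp; omega)
  let ev : (Fin (k + 1) → L) →ₗ[F] (S → L) :=
    { toFun := fun f x => lrsOp σ (k + 1) (lrsExt f) (a x.1.1) (β x.1.1 x.1.2)
      map_add' := fun f g => by
        ext x
        simp only [lrsOp, LinearMap.sum_apply, ← Finset.sum_add_distrib, Pi.add_apply]
        refine Finset.sum_congr rfl fun s hs => ?_
        simp [lrsExt, Finset.mem_range.1 hs, add_mul]
      map_smul' := fun c f => by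
        ext x
        simp only [lrsOp, LinearMap.sum_apply, Finset.smul_sum, Pi.smul_apply, RingHom.id_apply]
        refine Finset.sum_congr rfl fun s hs => ?_
        simp [lrsExt, Finset.mem_range.1 hs] }
  have hker : LinearMap.ker ev ≠ ⊥ := by
    apply LinearMap.ker_ne_bot_of_finrank_lt
    rw [Module.finrank_pi_fintype, Module.finrank_pi_fintype]
    simp only [Finset.sum_const, Finset.card_univ, Fintype.card_coe, hS, Fintype.card_fin,
      smul_eq_mul]
    have : 0 < finrank F L := Module.finrank_pos
    nlinarith
  obtain ⟨f, hf, hf0⟩ := Submodule.exists_mem_ne_zero_of_ne_bot hker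
  refine ⟨f, hf0, ?_⟩
  let T : ∀ i, Finset (Fin (n i)) := fun i => Finset.univ.filter fun c => (⟨i, c⟩ : Σ i, Fin (n i)) ∉ S
  have h1 : srk (lrsEnc σ a φ β (k + 1) f) ≤ ∑ i, (T i).card := by
    refine Finset.sum_le_sum fun i _ => lrs_rank_le_cols _ _ fun c hc r => ?_
    have hc' : (⟨i, c⟩ : Σ i, Fin (n i)) ∈ S := by simpa [T] using hc
    have h2 : lrsOp σ (k + 1) (lrsExt f) (a i) (β i c) = 0 :=
      congrFun (LinearMap.mem_ker.1 hf) ⟨⟨i, c⟩, hc'⟩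
    rw [lrsEnc_apply, h2, map_zero, Pi.zero_apply]
  have h2 : ∑ i, (T i).card = Sᶜ.card := by
    rw [← Finset.card_sigma]
    congr 1
    ext ⟨i, c⟩
    simp [T]
  have h3 := Finset.card_add_card_compl S
  simp only [Fintype.card_sigma, Fintype.card_fin] at h3
  omega

lemma exists_index (j : Fin t) (i : ℕ) (h1 : ∑ l ∈ Finset.Iio j, n l + 1 ≤ i)
    (h2 : i ≤ ∑ l, n l) : ∃ j', j ≤ j' ∧ ∑ l ∈ Finset.Iio j', n l + 1 ≤ i ∧
      i ≤ ∑ l ∈ Finset.Iio j', n l + n j' := by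
  classical
  let S := Finset.univ.filter fun l : Fin t => ∑ x ∈ Finset.Iio l, n x + 1 ≤ i
  have hj : j ∈ S := by simpa [S] using h1
  obtain ⟨j', hj', hmax⟩ := S.exists_max_image id ⟨j, hj⟩
  refine ⟨j', hmax j hj, by simpa [S] using hj', ?_⟩
  have hIic : ∑ l ∈ Finset.Iio j', n l + n j' = ∑ l ∈ Finset.Iic j', n l := by
    rw [← Finset.Iio_insert, Finset.sum_insert (by simp), add_comm]
  rw [hIic]
  by_cases hlast : (j' : ℕ) + 1 < t
  · by_contra hlt
    have hmem : (⟨j' + 1, hlast⟩ : Fin t) ∈ S := by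
      have : Finset.Iio (⟨j' + 1, hlast⟩ : Fin t) = Finset.Iic j' := by
        ext x; rw [Finset.mem_Iio, Finset.mem_Iic, Fin.lt_def, Fin.le_def]; exact Nat.lt_succ_iff
      simp only [S, Finset.mem_filter, Finset.mem_univ, true_and, this]
      omega
    have := hmax _ hmem
    simp [Fin.le_def] at this
  · have : Finset.Iic j' = Finset.univ := by
      ext x; have := x.2; simp only [Finset.mem_Iic, Finset.mem_univ, iff_true, Fin.le_def]; omega
    rw [this]; exact h2

end Final

/-- Let `j = min {i ∈ [t] : m i = m t}` and `d = n_1 + ⋯ + n_{j-1} + 1`. If `n i ≤ m t` for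
all `i` and `q > t`, then there is a chain of MSRD codes
`𝒞_n ⊆ ⋯ ⊆ 𝒞_{d+1} ⊆ 𝒞_d ⊆ 𝕄` with `d(𝒞_i) = i` for all `d ≤ i ≤ n`. -/
theorem exists_MSRD_chain (ht : 0 < t)
    (hm_mono : ∀ i j : Fin t, i ≤ j → m j ≤ m i)
    (hn_pos : ∀ i, 0 < n i) (hmn : ∀ i, n i ≤ m i)
    (j : Fin t) (hj_eq : m j = m ⟨t - 1, Nat.sub_lt ht Nat.one_pos⟩)
    (hj_min : ∀ i : Fin t, m i = m ⟨t - 1, Nat.sub_lt ht Nat.one_pos⟩ → j ≤ i)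
    (hnm : ∀ i : Fin t, n i ≤ m ⟨t - 1, Nat.sub_lt ht Nat.one_pos⟩)
    (hq : t < Fintype.card F) :
    ∃ 𝒞 : ℕ → Submodule F (∀ i : Fin t, Matrix (Fin (m i)) (Fin (n i)) F),
      (∀ i, ∑ l ∈ Finset.Iio j, n l + 1 ≤ i → i < ∑ l, n l → 𝒞 (i + 1) ≤ 𝒞 i) ∧
      (∀ i, ∑ l ∈ Finset.Iio j, n l + 1 ≤ i → i ≤ ∑ l, n l →
        IsMSRD (𝒞 i) ∧ minDist (𝒞 i) = i) := by
  classical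
  set M := m ⟨t - 1, Nat.sub_lt ht Nat.one_pos⟩ with hMdef
  have hlast : ∀ i, M ≤ m i := fun i => hm_mono _ _ (by
    rw [Fin.le_def]; have := i.2; simp only; omega)
  have hM : 0 < M := (hn_pos j).trans_le (hnm j)
  obtain ⟨L, _, _, _, σ, a, hL, hfix, ha, hN⟩ := exists_lrs_data F t M hM hq
  have hφ : ∀ i : Fin t, ∃ φ : L →ₗ[F] (Fin (m i) → F), Function.Injective φ := by
    intro i
    obtain ⟨v, hv⟩ := exists_linearIndependent_of_le_finrank (R := F) (M := Fin (m i) → F)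
      (n := M) (by rw [Module.finrank_fin_fun]; exact hlast i)
    let b := Module.finBasisOfFinrankEq F L hL
    refine ⟨Fintype.linearCombination F v ∘ₗ b.equivFun.toLinearMap, ?_⟩
    rw [LinearMap.coe_comp]
    exact (linearIndependent_iff_injective_fintypeLinearCombination.1 hv).comp b.equivFun.injective
  choose φ hφ using hφ
  have hβ : ∀ i : Fin t, ∃ β : Fin (n i) → L, LinearIndependent F β := fun i =>
    exists_linearIndependent_of_le_finrank (by rw [hL]; exact hnm i)
  choose β hβ using hβ
  set N := ∑ l, n l with hNdef
  have hwt := lrs_weight σ hfix a ha hN φ hφ β hβ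
  refine ⟨fun i => LinearMap.range (lrsEnc σ a φ β (N + 1 - i)), ?_, ?_⟩
  · intro i _ hi
    have : N + 1 - i = (N + 1 - (i + 1)) + 1 := by omega
    beta_reduce; rw [this]
    exact lrsEnc_nested σ a φ β _
  · intro i hi1 hi2
    have hk : N + 1 - i = (N - i) + 1 := by omega
    beta_reduce; rw [hk]
    set k := N - i with hkdef
    have hinj : Function.Injective (lrsEnc σ a φ β (k + 1)) := by
      rw [injective_iff_map_eq_zero]
      intro f hf
      by_contra hf0
      have := hwt (k + 1) f hf0
      rw [hf] at this
      simp [srk] at this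
      omega
    have hdist : minDist (LinearMap.range (lrsEnc σ a φ β (k + 1))) = i := by
      obtain ⟨f, hf0, hf⟩ := lrs_exists_low σ a φ β k (by omega)
      have hfw := hwt (k + 1) f hf0
      refine le_antisymm (Nat.sInf_le ⟨_, ⟨f, rfl⟩, ?_, by omega⟩) ?_
      · intro h
        exact hf0 (hinj (by rw [h, map_zero]))
      · refine le_csInf ⟨_, _, ⟨f, rfl⟩, fun h => hf0 (hinj (by rw [h, map_zero])), rfl⟩ ?_
        rintro w ⟨_, ⟨g, rfl⟩, hg0, rfl⟩
        have := hwt (k + 1) g (fun h => hg0 (by rw [h, map_zero]))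
        omega
    refine ⟨?_, hdist⟩
    obtain ⟨j', hjj, h1, h2⟩ := exists_index j i hi1 hi2
    have hmM : ∀ l, j' ≤ l → m l = M := fun l hl =>
      le_antisymm (hj_eq ▸ hm_mono _ _ (hjj.trans hl)) (hlast l)
    refine ⟨j', i - 1 - ∑ l ∈ Finset.Iio j', n l, by omega, by rw [hdist]; omega, ?_⟩
    rw [LinearMap.finrank_range_of_inj hinj, Module.finrank_pi_fintype, hmM j' le_rfl]
    simp only [hL, Finset.sum_const, Finset.card_univ, Fintype.card_fin, smul_eq_mul]
    have hsum : ∑ l ∈ Finset.Ici j', m l * n l = ∑ l ∈ Finset.Ici j', M * n l :=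
      Finset.sum_congr rfl fun l hl => by rw [hmM l (Finset.mem_Ici.1 hl)]
    rw [hsum, ← Finset.mul_sum, ← add_mul, mul_comm]
    congr 1
    have hsplit : ∑ l ∈ Finset.Iio j', n l + ∑ l ∈ Finset.Ici j', n l = N := by
      rw [hNdef, ← Finset.sum_add_sum_compl (Finset.Iio j')]
      congr 2
      ext x; simp
    omega
end
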